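/- arXiv:2402.02575 — 3 statements merged into one kernel-verified Lean document; each statement's English description precedes it below -/
import Mathlib

section
/- For every ε > 0 there exists a measurable map f : X → Fin 5 such that for μ-a.e. x ∈ X one has f(s • x) ≠ f(x) for every s ∈ S, and μ({x : f(x) = 4}) < ε. In particular, the Bernoulli shift of F_3 has measurable chromatic number at most 5. -/
open MeasureTheory

set_option linter.unusedSectionVars false

namespace FC

abbrev Gm := FreeGroup (Fin 3)
abbrev Dir := Fin 3 × Bool

def gen (t : Dir) : Gm := FreeGroup.mk [t]
def opp (t : Dir) : Dir := (t.1, !t.2)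

@[simp] lemma opp_opp (t : Dir) : opp (opp t) = t := by simp [opp]
lemma opp_inj {s t : Dir} (h : opp s = opp t) : s = t := by
  rw [← opp_opp s, h, opp_opp]
lemma gen_opp (t : Dir) : gen (opp t) = (gen t)⁻¹ := by simp [gen, opp, FreeGroup.inv_mk, FreeGroup.invRev]

/-- Elements whose word ends with `t`. -/
def W (t : Dir) : Set Gm := {g | g⁻¹ ∈ FreeGroup.startsWith (opp t)}

lemma one_notMem_W (t : Dir) : (1 : Gm) ∉ W t := by
  intro h
  exact FreeGroup.startsWith.ne_one _ h (by simp)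

lemma W_disj {s t : Dir} (h : s ≠ t) {g : Gm} (hs : g ∈ W s) : g ∉ W t := by
  intro ht
  have := (FreeGroup.startsWith.disjoint_iff_ne (w := opp s) (w' := opp t)).2 (fun e => h (opp_inj e))
  exact Set.disjoint_left.1 this hs ht

lemma mul_gen_mem_W {t : Dir} {g : Gm} (h : g ∉ W (opp t)) : g * gen t ∈ W t := by
  have := FreeGroup.startsWith_mk_mul (w := opp t) g⁻¹ (by
    intro h'
    apply h
    simpa [W, opp] using h')
  have h2 : (g * gen t)⁻¹ = FreeGroup.mk [opp t] * g⁻¹ := by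
    rw [mul_inv_rev, ← gen_opp]; rfl
  show (g * gen t)⁻¹ ∈ FreeGroup.startsWith (opp t)
  rw [h2]; exact this

lemma gen_mem_W (t : Dir) : gen t ∈ W t := by
  have := mul_gen_mem_W (t := t) (one_notMem_W (opp t))
  simpa using this

lemma startsWith_mul {v s : Dir} {g : Gm} (h : g ∈ FreeGroup.startsWith v) :
    g * FreeGroup.mk [s] ∈ FreeGroup.startsWith v ∨ g * FreeGroup.mk [s] = 1 := by
  have hr : FreeGroup.IsReduced g.toWord := FreeGroup.isReduced_toWord
  have hg : g = FreeGroup.mk g.toWord := FreeGroup.mk_toWord.symm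
  simp only [FreeGroup.startsWith, Set.mem_ofPred_eq] at h ⊢
  generalize g.toWord = L at *
  subst hg
  rcases List.eq_nil_or_concat L with rfl | ⟨L', a, rfl⟩
  · simp at h
  · by_cases ha : a = opp s
    · subst ha
      have h1 : FreeGroup.mk (L'.concat (opp s)) * FreeGroup.mk [s] = FreeGroup.mk L' := by
        rw [List.concat_eq_append, ← FreeGroup.mul_mk, mul_assoc]
        have : FreeGroup.mk [opp s] = (FreeGroup.mk [s])⁻¹ := gen_opp s
        rw [this, inv_mul_cancel, mul_one]
      rw [h1]
      have hr' : FreeGroup.IsReduced L' := by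
        rw [List.concat_eq_append] at hr
        exact hr.infix (List.prefix_append _ _).isInfix
      rw [FreeGroup.toWord_mk, hr'.reduce_eq]
      rcases L' with _ | ⟨b, L''⟩
      · right; rfl
      · left; simpa using h
    · left
      rw [FreeGroup.mul_mk, FreeGroup.toWord_mk]
      have hr' : FreeGroup.IsReduced (L'.concat a ++ [s]) := by
        unfold FreeGroup.IsReduced at hr ⊢
        rw [List.concat_eq_append] at hr ⊢
        rw [List.isChain_append]
        refine ⟨hr, by simp, ?_⟩
        intro x hx y hy
        simp at hx hy
        subst hx hy
        intro h1
        by_contra h2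
        apply ha
        ext1
        · exact h1
        · simp [opp]; cases h3 : a.2 <;> cases h4 : s.2 <;> simp_all
      rw [hr'.reduce_eq]
      rw [List.getElem?_append_left (by simp)]
      exact h

lemma W_closed {t s : Dir} {g : Gm} (h : g ∈ W t) : gen s * g ∈ W t ∨ gen s * g = 1 := by
  have := startsWith_mul (s := opp s) (show g⁻¹ ∈ FreeGroup.startsWith (opp t) from h)
  have h2 : (gen s * g)⁻¹ = g⁻¹ * FreeGroup.mk [opp s] := by
    rw [mul_inv_rev, ← gen_opp]; rfl
  rw [← h2] at this
  rcases this with h | h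
  · exact Or.inl h
  · exact Or.inr (inv_eq_one.1 h)

section config
variable {A : Type} [DecidableEq A]

/-- integer indicator -/
def ind (p : Prop) [Decidable p] : ℤ := if p then 1 else 0

def loc (c : Gm → A) (g : Gm) (a : A) : ℤ :=
  ∑ t : Dir, (ind (c (gen t * g) = a) - ind (c (gen t * g) = c g))

def run (c : Gm → A) : List (Gm × A) → (Gm → A)
  | [] => c
  | p :: l => run (Function.update c p.1 p.2) l

def D (c : Gm → A) : List (Gm × A) → ℤ
  | [] => 0
  | p :: l => loc c p.1 p.2 + D (Function.update c p.1 p.2) l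

lemma run_append (c : Gm → A) (l l' : List (Gm × A)) : run c (l ++ l') = run (run c l) l' := by
  induction l generalizing c with
  | nil => rfl
  | cons p l ih => simp [run, ih]

lemma D_append (c : Gm → A) (l l' : List (Gm × A)) : D c (l ++ l') = D c l + D (run c l) l' := by
  induction l generalizing c with
  | nil => simp [D, run]
  | cons p l ih => simp [D, run, ih, add_assoc]

lemma run_out (c : Gm → A) (l : List (Gm × A)) (g : Gm) (h : ∀ p ∈ l, p.1 ≠ g) :
    run c l g = c g := by
  induction l generalizing c with
  | nil => rfl
  | cons p l ih =>
    rw [run, ih _ (fun q hq => h q (by simp [hq])), Function.update_of_ne]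
    exact (h p (by simp)).symm

lemma local_eq (Q : Set Gm) (l : List (Gm × A)) (c c' : Gm → A)
    (hl : ∀ p ∈ l, p.1 ∈ Q ∧ ∀ t, gen t * p.1 ∈ Q) (hc : ∀ g ∈ Q, c g = c' g) :
    D c l = D c' l ∧ ∀ g ∈ Q, run c l g = run c' l g := by
  induction l generalizing c c' with
  | nil => exact ⟨rfl, hc⟩
  | cons p l ih =>
    have hp := hl p (by simp)
    have := ih (Function.update c p.1 p.2) (Function.update c' p.1 p.2)
      (fun q hq => hl q (by simp [hq])) (by
        intro g hg
        by_cases h : g = p.1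
        · subst h; simp
        · simp [Function.update_of_ne h, hc g hg])
    refine ⟨?_, this.2⟩
    rw [D, D, this.1]
    congr 1
    unfold loc
    refine Finset.sum_congr rfl fun t _ => ?_
    rw [hc _ hp.1, hc _ (hp.2 t)]

lemma translate (u : Gm) (l : List (Gm × A)) (c : Gm → A) :
    D (fun g => c (g * u)) l = D c (l.map fun p => (p.1 * u, p.2)) ∧
    ∀ g, run (fun g => c (g * u)) l g = run c (l.map fun p => (p.1 * u, p.2)) (g * u) := by
  induction l generalizing c with
  | nil => exact ⟨rfl, fun _ => rfl⟩
  | cons p l ih =>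
    have h1 : Function.update (fun g => c (g * u)) p.1 p.2
        = fun g => Function.update c (p.1 * u) p.2 (g * u) := by
      funext g
      by_cases h : g = p.1
      · subst h; simp
      · rw [Function.update_of_ne h, Function.update_of_ne (fun e => h (mul_right_cancel e))]
    have := ih (Function.update c (p.1 * u) p.2)
    simp only [List.map_cons, D, run]
    rw [h1]
    refine ⟨?_, this.2⟩
    rw [this.1]
    congr 1
    simp [loc, mul_assoc]

lemma local_W (t : Dir) (l : List (Gm × A)) (c c' : Gm → A)
    (hl : ∀ p ∈ l, p.1 ∈ W t) (hc : ∀ g ∈ W t, c g = c' g) (h1 : c 1 = c' 1) :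
    D c l = D c' l ∧ run c l (gen t) = run c' l (gen t) := by
  have := local_eq (insert 1 (W t)) l c c' (fun p hp => ⟨Or.inr (hl p hp), fun s => by
    rcases W_closed (s := s) (hl p hp) with h | h
    · exact Or.inr h
    · exact Or.inl h⟩) (by
    rintro g (rfl | hg)
    · exact h1
    · exact hc g hg)
  exact ⟨this.1, this.2 _ (Or.inr (gen_mem_W t))⟩

lemma glue (c : Gm → A) (R : Finset Dir) (l : Dir → List (Gm × A))
    (hl : ∀ r ∈ R, ∀ p ∈ l r, p.1 ∈ W r) (m : ℕ) (hm : ∀ r ∈ R, (l r).length ≤ m) :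
    ∃ L : List (Gm × A), (∀ p ∈ L, ∃ r ∈ R, p.1 ∈ W r) ∧ L.length ≤ R.card * m ∧
      D c L = ∑ r ∈ R, D c (l r) ∧ ∀ r ∈ R, run c L (gen r) = run c (l r) (gen r) := by
  induction R using Finset.induction_on with
  | empty => exact ⟨[], by simp, by simp, by simp [D], by simp⟩
  | insert s R hs ih =>
    obtain ⟨L, h1, h2, h3, h4⟩ := ih (fun r hr => hl r (by simp [hr])) (fun r hr => hm r (by simp [hr]))
    have hls := hl s (by simp)
    have hloc := local_W s (l s) (run c L) c hls (fun g hg => run_out _ _ _ (by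
        rintro p hp rfl
        obtain ⟨r, hr, hp'⟩ := h1 p hp
        refine W_disj ?_ hg hp'
        rintro rfl; exact hs hr)) (run_out _ _ _ (by
        rintro p hp h
        obtain ⟨r, hr, hp'⟩ := h1 p hp
        rw [h] at hp'
        exact one_notMem_W _ hp'))
    refine ⟨L ++ l s, ?_, ?_, ?_, ?_⟩
    · intro p hp
      rcases List.mem_append.1 hp with hp | hp
      · obtain ⟨r, hr, h⟩ := h1 p hp
        exact ⟨r, by simp [hr], h⟩
      · exact ⟨s, by simp, hls p hp⟩
    · rw [List.length_append, Finset.card_insert_of_notMem hs]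
      have := hm s (by simp)
      linarith
    · rw [D_append, Finset.sum_insert hs, h3, hloc.1, add_comm]
    · intro r hr
      rw [run_append]
      rcases Finset.mem_insert.1 hr with rfl | hr
      · exact hloc.2
      · rw [← h4 r hr]
        apply run_out
        rintro p hp h
        have := hls p hp
        rw [h] at this
        refine W_disj ?_ this (gen_mem_W r)
        rintro rfl; exact hs hr

end config
end FC
set_option linter.unusedSectionVars false
namespace FC

lemma opp_bij : Function.Bijective opp :=
  ⟨fun _ _ h => opp_inj h, fun t => ⟨opp t, opp_opp t⟩⟩

lemma ind_le_one (p : Prop) [Decidable p] : ind p ≤ 1 := by unfold ind; split_ifs <;> simp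
lemma ind_nonneg (p : Prop) [Decidable p] : 0 ≤ ind p := by unfold ind; split_ifs <;> simp

lemma card_dir : (Finset.univ : Finset Dir).card = 6 := by decide

section meas
variable {X : Type} [MeasurableSpace X] [MulAction Gm X] (μ : Measure X) [IsProbabilityMeasure μ]
variable {q : ℕ}

def cfg (f : X → Fin q) (x : X) : Gm → Fin q := fun g => f (g • x)

def ee (f : X → Fin q) (x : X) : ℤ := ∑ t : Dir, ind (f (gen t • x) = f x)

noncomputable def En (f : X → Fin q) : ℝ := ∫ x, (ee f x : ℝ) ∂μ

noncomputable def dd (f g : X → Fin q) : ℝ := μ.real {x | f x ≠ g x}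

lemma meas_ind {f g : X → Fin q} (hf : Measurable f) (hg : Measurable g) :
    Measurable (fun x => ind (f x = g x)) := by
  unfold ind
  exact Measurable.ite (measurableSet_eq_fun hf hg) measurable_const measurable_const

lemma loc_bound (c : Gm → Fin q) (g : Gm) (a : Fin q) : |loc c g a| ≤ 6 := by
  unfold loc
  refine (Finset.abs_sum_le_sum_abs _ _).trans ?_
  refine (Finset.sum_le_card_nsmul _ _ 1 ?_).trans (by simp)
  intro t _
  unfold ind
  split_ifs <;> simp

lemma D_bound (c : Gm → Fin q) (l : List (Gm × Fin q)) : |D c l| ≤ 6 * l.length := by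
  induction l generalizing c with
  | nil => simp [D]
  | cons p l ih =>
    rw [D]
    refine (abs_add_le _ _).trans ?_
    have := loc_bound c p.1 p.2
    have := ih (Function.update c p.1 p.2)
    push_cast [List.length_cons]
    linarith

lemma meas_loc {F : X → Gm → Fin q} (hF : ∀ g, Measurable fun x => F x g) (g : Gm) (a : Fin q) :
    Measurable fun x => loc (F x) g a := by
  unfold loc
  exact Finset.measurable_sum _ fun t _ => (meas_ind (hF _) measurable_const).sub (meas_ind (hF _) (hF _))

lemma meas_D {F : X → Gm → Fin q} (hF : ∀ g, Measurable fun x => F x g) (l : List (Gm × Fin q)) :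
    Measurable fun x => D (F x) l := by
  induction l generalizing F with
  | nil => exact measurable_const
  | cons p l ih =>
    simp only [D]
    refine (meas_loc hF _ _).add (ih ?_)
    intro g
    by_cases h : g = p.1
    · subst h; simp
    · simpa [Function.update_of_ne h] using hF g

variable (hmp : ∀ g : Gm, MeasurePreserving (fun x : X => g • x) μ μ)
include hmp

lemma meas_cfg {f : X → Fin q} (hf : Measurable f) (g : Gm) : Measurable fun x => cfg f x g :=
  hf.comp (hmp g).measurable

omit hmp in
lemma int_of_bdd {F : X → ℤ} (hF : Measurable F) (C : ℝ) (hC : ∀ x, |(F x : ℝ)| ≤ C) :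
    Integrable (fun x => (F x : ℝ)) μ := by
  refine Integrable.of_bound (measurable_from_top.comp hF).aestronglyMeasurable C ?_
  exact Filter.Eventually.of_forall hC

lemma meas_ee {f : X → Fin q} (hf : Measurable f) : Measurable (ee f) :=
  Finset.measurable_sum _ fun _ _ => meas_ind (hf.comp (hmp _).measurable) hf

lemma En_upd {f : X → Fin q} (hf : Measurable f) (V : Set X) [DecidablePred (· ∈ V)]
    (hV : MeasurableSet V)
    (hsep : ∀ t, ∀ x ∈ V, gen t • x ∉ V) (a : Fin q) :
    En μ (fun x => if x ∈ V then a else f x)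
      = En μ f + 2 * ∫ x in V, (loc (cfg f x) 1 a : ℝ) ∂μ := by
  let δ : Dir → X → ℤ := fun t x => ind (f (gen t • x) = a) - ind (f (gen t • x) = f x)
  have hδm : ∀ t, Measurable (δ t) := fun t =>
    (meas_ind (hf.comp (hmp _).measurable) measurable_const).sub
      (meas_ind (hf.comp (hmp _).measurable) hf)
  have hδb : ∀ t x, |(δ t x : ℝ)| ≤ 1 := by
    intro t x
    simp only [δ, ind]
    split_ifs <;> simp
  have hδi : ∀ t, Integrable (fun x => (δ t x : ℝ)) μ := fun t => int_of_bdd μ (hδm t) 1 (hδb t)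
  let φ : Dir → X → ℝ := fun t => V.indicator (fun x => (δ t x : ℝ))
  have hφi : ∀ t, Integrable (φ t) μ := fun t => (hδi t).indicator hV
  have hii : ∀ t, Integrable (fun x => (ind (f (gen t • x) = f x) : ℝ)) μ := fun t =>
    int_of_bdd μ (meas_ind (hf.comp (hmp _).measurable) hf) 1 (by
      intro x; unfold ind; split_ifs <;> simp)
  have hcomp : ∀ t, Integrable (fun x => φ (opp t) (gen t • x)) μ := fun t =>
    (hmp (gen t)).integrable_comp_of_integrable (hφi (opp t))
  have hpt : ∀ x, (ee (fun x => if x ∈ V then a else f x) x : ℝ)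
      = ∑ t, ((ind (f (gen t • x) = f x) : ℝ) + φ t x + φ (opp t) (gen t • x)) := by
    intro x
    unfold ee
    push_cast
    refine Finset.sum_congr rfl fun t _ => ?_
    have hoo : gen (opp t) • gen t • x = x := by rw [gen_opp, inv_smul_smul]
    by_cases h1 : x ∈ V
    · have h2 : gen t • x ∉ V := hsep t x h1
      simp [φ, h1, h2, δ]
    · by_cases h2 : gen t • x ∈ V
      · simp only [φ, h1, h2, δ, Set.indicator_of_notMem, not_false_eq_true, Set.indicator_of_mem,
          if_true, if_false, hoo]
        unfold ind
        by_cases h3 : f x = a <;> by_cases h4 : f x = f (gen t • x) <;> grind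
      · simp [φ, h1, h2]
  have h1 : En μ (fun x => if x ∈ V then a else f x)
      = ∑ t, (∫ x, (ind (f (gen t • x) = f x) : ℝ) ∂μ + ∫ x, φ t x ∂μ + ∫ x, φ (opp t) x ∂μ) := by
    unfold En
    simp_rw [hpt]
    rw [integral_finsetSum]
    · refine Finset.sum_congr rfl fun t _ => ?_
      have hadd : Integrable (fun x => (ind (f (gen t • x) = f x) : ℝ) + φ t x) μ := (hii t).add (hφi t)
      rw [integral_add hadd (hcomp t), integral_add (hii t) (hφi t)]
      congr 1
      have := (hmp (gen t)).map_eq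
      conv_rhs => rw [← this]
      rw [integral_map (hmp (gen t)).measurable.aemeasurable]
      rw [this]
      exact (hφi _).aestronglyMeasurable
    · intro t _
      exact ((hii t).add (hφi t)).add (hcomp t)
  have h2 : En μ f = ∑ t, ∫ x, (ind (f (gen t • x) = f x) : ℝ) ∂μ := by
    unfold En ee
    push_cast
    rw [integral_finsetSum _ fun t _ => hii t]
  have h3 : ∫ x in V, (loc (cfg f x) 1 a : ℝ) ∂μ = ∑ t, ∫ x, φ t x ∂μ := by
    rw [← integral_indicator hV, ← integral_finsetSum _ fun t _ => hφi t]
    congr 1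
    funext x
    by_cases hx : x ∈ V
    · simp [φ, hx, loc, δ, cfg]
    · simp [φ, hx]
  have h4 : ∑ t, ∫ x, φ (opp t) x ∂μ = ∑ t, ∫ x, φ t x ∂μ :=
    opp_bij.sum_comp (fun t => ∫ x, φ t x ∂μ)
  rw [h1, Finset.sum_add_distrib, Finset.sum_add_distrib, h2, h3, h4]
  ring

omit hmp in
lemma dd_tri {f g h : X → Fin q} : dd μ f h ≤ dd μ f g + dd μ g h := by
  unfold dd
  refine (measureReal_mono ?_).trans (measureReal_union_le _ _)
  intro x hx
  by_contra h'
  simp only [Set.mem_union, Set.mem_ofPred_eq, not_or, not_not] at h' hx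
  exact hx (h'.1.trans h'.2)

lemma realize (Q : Set Gm) (U : Set X) (hU : MeasurableSet U)
    (hsep : ∀ g ∈ Q, ∀ h ∈ Q, g ≠ h → ∀ x ∈ U, (g⁻¹ * h) • x ∉ U)
    (l : List (Gm × Fin q)) (hl : ∀ p ∈ l, p.1 ∈ Q ∧ ∀ t, gen t * p.1 ∈ Q)
    (f : X → Fin q) (hf : Measurable f) :
    ∃ g : X → Fin q, Measurable g ∧
      En μ g = En μ f + 2 * ∫ x in U, (D (cfg f x) l : ℝ) ∂μ ∧
      dd μ f g ≤ l.length * μ.real U := by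
  classical
  induction l generalizing f with
  | nil => exact ⟨f, hf, by simp [D], by simp [dd]⟩
  | cons p l ih =>
    have hp := hl p (by simp)
    set V : Set X := (fun x => p.1⁻¹ • x) ⁻¹' U with hVdef
    have hV : MeasurableSet V := (hmp p.1⁻¹).measurable hU
    have hVr : μ.real V = μ.real U := by
      unfold Measure.real
      rw [(hmp p.1⁻¹).measure_preimage hU.nullMeasurableSet]
    have gen_ne : ∀ t : Dir, gen t ≠ 1 := fun t h => one_notMem_W t (h ▸ gen_mem_W t)
    have hVs : ∀ t, ∀ x ∈ V, gen t • x ∉ V := by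
      intro t x hx hx'
      have hne : p.1 ≠ gen t * p.1 := by
        intro h
        exact gen_ne t (by simpa using h)
      refine hsep p.1 hp.1 (gen t * p.1) (hp.2 t) hne _ hx ?_
      rw [smul_smul]
      simpa [mul_assoc, hVdef, smul_smul] using hx'
    set f1 : X → Fin q := fun x => if x ∈ V then p.2 else f x with hf1
    have hf1m : Measurable f1 := Measurable.ite hV measurable_const hf
    obtain ⟨g, hg, hE, hd⟩ := ih (fun q hq => hl q (by simp [hq])) f1 hf1m
    refine ⟨g, hg, ?_, ?_⟩
    · have hcong : ∀ x ∈ U, D (cfg f1 x) l = D (Function.update (cfg f x) p.1 p.2) l := by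
        intro x hx
        refine (local_eq Q l _ _ (fun q hq => hl q (by simp [hq])) ?_).1
        intro g hg
        by_cases h : g = p.1
        · subst h
          simp [cfg, hf1, hVdef, hx]
        · have : (p.1⁻¹ * g) • x ∉ U := hsep p.1 hp.1 g hg (Ne.symm h) x hx
          simp [cfg, hf1, hVdef, smul_smul, this, Function.update_of_ne h]
      have hint : ∫ x in V, (loc (cfg f x) 1 p.2 : ℝ) ∂μ = ∫ x in U, (loc (cfg f x) p.1 p.2 : ℝ) ∂μ := by
        rw [← integral_indicator hV, ← integral_indicator hU]
        have h1 : ∀ x, V.indicator (fun x => (loc (cfg f x) 1 p.2 : ℝ)) x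
            = U.indicator (fun x => (loc (cfg f x) p.1 p.2 : ℝ)) (p.1⁻¹ • x) := by
          intro x
          by_cases hx : x ∈ V
          · have hx' : p.1⁻¹ • x ∈ U := hx
            rw [Set.indicator_of_mem hx, Set.indicator_of_mem hx']
            simp [loc, cfg, smul_smul, mul_assoc]
          · have hx' : p.1⁻¹ • x ∉ U := hx
            rw [Set.indicator_of_notMem hx, Set.indicator_of_notMem hx']
        simp_rw [h1]
        have := (hmp p.1⁻¹).map_eq
        conv_rhs => rw [← this]
        rw [integral_map (hmp p.1⁻¹).measurable.aemeasurable]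
        refine AEStronglyMeasurable.indicator ?_ hU
        exact (measurable_from_top.comp (meas_loc (meas_cfg μ hmp hf) p.1 p.2)).aestronglyMeasurable
      rw [hE, hf1, En_upd μ hmp hf V hV hVs, hint]
      have h2 : ∫ x in U, (D (cfg f1 x) l : ℝ) ∂μ
          = ∫ x in U, (D (Function.update (cfg f x) p.1 p.2) l : ℝ) ∂μ :=
        setIntegral_congr_fun hU fun x hx => by simp only [hcong x hx]
      rw [← hf1, h2]
      simp only [D, Int.cast_add]
      rw [integral_add]
      · ring
      · refine Integrable.integrableOn (int_of_bdd μ (meas_loc (meas_cfg μ hmp hf) _ _) 6 ?_)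
        intro x; exact_mod_cast loc_bound _ _ _
      · refine Integrable.integrableOn (int_of_bdd μ (meas_D (F := fun x => Function.update (cfg f x) p.1 p.2) ?_ l)
          (6 * l.length) ?_)
        · intro g
          by_cases h : g = p.1
          · subst h; simp
          · simpa [Function.update_of_ne h] using meas_cfg μ hmp hf g
        · intro x; exact_mod_cast D_bound _ _
    · refine (dd_tri μ (g := f1)).trans ?_
      have : dd μ f f1 ≤ μ.real U := by
        rw [← hVr]
        refine measureReal_mono ?_
        intro x hx
        by_contra h
        simp [hf1, h] at hx
      push_cast [List.length_cons]
      linarith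

def Stable (m : ℕ) (f : X → Fin q) : Prop :=
  ∀ᵐ x ∂μ, ∀ l : List (Gm × Fin q), l.length ≤ m → 0 ≤ D (cfg f x) l

variable (hfree : ∀ F : Finset Gm, 1 ∉ F → ∀ U : Set X, MeasurableSet U → μ U ≠ 0 →
  ∃ U' ⊆ U, MeasurableSet U' ∧ μ U' ≠ 0 ∧ ∀ g ∈ F, ∀ x ∈ U', g • x ∉ U')
include hfree

lemma stable_of_min (m : ℕ) (f : X → Fin q) (hf : Measurable f)
    (h : ∀ g : X → Fin q, Measurable g → dd μ f g ≤ m * (En μ f - En μ g) → En μ g = En μ f) :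
    Stable μ m f := by
  classical
  unfold Stable
  rw [ae_all_iff]
  intro l
  by_cases hlm : l.length ≤ m
  swap
  · exact Filter.Eventually.of_forall fun x h => absurd h hlm
  by_contra hcon
  have hDm := meas_D (meas_cfg μ hmp hf) l
  set U : Set X := {x | D (cfg f x) l < 0} with hUdef
  have hU : MeasurableSet U := hDm (measurableSet_Iio (a := (0:ℤ)))
  have hU0 : μ U ≠ 0 := by
    intro h0
    apply hcon
    have : ∀ᵐ x ∂μ, x ∉ U := measure_eq_zero_iff_ae_notMem.1 h0
    filter_upwards [this] with x hx _
    simpa [hUdef] using hx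
  let Q : Finset Gm := (l.map Prod.fst).toFinset ∪
    (l.map Prod.fst).toFinset.biUnion fun g => Finset.univ.image fun t : Dir => gen t * g
  have hlQ : ∀ p ∈ l, p.1 ∈ (Q : Set Gm) ∧ ∀ t, gen t * p.1 ∈ (Q : Set Gm) := by
    intro p hp
    have hp' : p.1 ∈ (l.map Prod.fst).toFinset := by
      rw [List.mem_toFinset]; exact List.mem_map_of_mem hp
    refine ⟨Finset.mem_coe.2 (Finset.mem_union_left _ hp'), fun t => ?_⟩
    refine Finset.mem_coe.2 (Finset.mem_union_right _ (Finset.mem_biUnion.2 ⟨p.1, hp', ?_⟩))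
    exact Finset.mem_image_of_mem _ (Finset.mem_univ t)
  let F : Finset Gm := ((Q ×ˢ Q).image fun p => p.1⁻¹ * p.2).erase 1
  obtain ⟨U', hsub, hU', hU'0, hs⟩ := hfree F (by simp [F]) U hU hU0
  obtain ⟨g, hg, hE, hd⟩ := realize μ hmp (Q : Set Gm) U' hU' (by
    intro g hg h hh hne x hx
    refine hs _ ?_ x hx
    refine Finset.mem_erase.2 ⟨?_, Finset.mem_image.2 ⟨(g, h), Finset.mem_product.2 ⟨hg, hh⟩, rfl⟩⟩
    intro e
    exact hne (by simpa [inv_mul_eq_one] using e)) l hlQ f hf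
  have hpos : 0 < μ.real U' := by
    rw [Measure.real, ENNReal.toReal_pos_iff]
    exact ⟨pos_iff_ne_zero.2 hU'0, measure_lt_top _ _⟩
  have hint : ∫ x in U', (D (cfg f x) l : ℝ) ∂μ ≤ - μ.real U' := by
    have : ∫ x in U', (D (cfg f x) l : ℝ) ∂μ ≤ ∫ x in U', (-1 : ℝ) ∂μ := by
      refine setIntegral_mono_on ?_ ?_ hU' ?_
      · refine Integrable.integrableOn (int_of_bdd μ hDm (6 * l.length) ?_)
        intro x; exact_mod_cast D_bound _ _
      · exact integrableOn_const (measure_ne_top _ _)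
      · intro x hx
        have : D (cfg f x) l < 0 := hsub hx
        have h2 : D (cfg f x) l ≤ -1 := by omega
        exact_mod_cast h2
    simpa using this
  have h1 : En μ f - En μ g ≥ 2 * μ.real U' := by rw [hE]; linarith
  have hlm' : (l.length : ℝ) ≤ m := by exact_mod_cast hlm
  have := h g hg (by
    refine hd.trans ?_
    have : (0:ℝ) ≤ m := by positivity
    nlinarith)
  linarith

end meas
end FC
set_option linter.unusedSectionVars false
namespace FC

section ek
variable {X : Type} [MeasurableSpace X] (μ : Measure X) [IsProbabilityMeasure μ]
variable {q : ℕ}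

lemma dd_nonneg (f g : X → Fin q) : 0 ≤ dd μ f g := measureReal_nonneg

lemma dd_symm (f g : X → Fin q) : dd μ f g = dd μ g f := by
  unfold dd; congr 1; ext x; exact ne_comm

lemma dd_tri' {f g h : X → Fin q} : dd μ f h ≤ dd μ f g + dd μ g h := by
  unfold dd
  refine (measureReal_mono ?_).trans (measureReal_union_le _ _)
  intro x hx
  by_contra h'
  simp only [Set.mem_union, Set.mem_ofPred_eq, not_or, not_not] at h' hx
  exact hx (h'.1.trans h'.2)

lemma dd_self (f : X → Fin q) : dd μ f f = 0 := by simp [dd]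

lemma dd_limit (f : ℕ → X → Fin q) (hf : ∀ n, Measurable (f n))
    (C : ℝ)
    (hC : ∀ n, ∑ k ∈ Finset.range n, dd μ (f k) (f (k+1)) ≤ C) :
    ∃ g : X → Fin q, Measurable g ∧ Filter.Tendsto (fun n => dd μ (f n) g) Filter.atTop (nhds 0) := by
  have hsum : Summable fun k => dd μ (f k) (f (k+1)) :=
    summable_of_sum_range_le (fun _ => dd_nonneg μ _ _) hC
  have hne : (∑' k, μ {x | f k x ≠ f (k+1) x}) ≠ ⊤ := by
    have : ∀ k, μ {x | f k x ≠ f (k+1) x} = ENNReal.ofReal (dd μ (f k) (f (k+1))) := by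
      intro k; rw [dd, ofReal_measureReal]
    simp_rw [this]
    exact hsum.tsum_ofReal_ne_top
  have hae := ae_eventually_notMem hne
  have hlim : ∀ᵐ x ∂μ, ∃ l, Filter.Tendsto (fun n => f n x) Filter.atTop (nhds l) := by
    filter_upwards [hae] with x hx
    obtain ⟨N, hN⟩ := Filter.eventually_atTop.1 hx
    refine ⟨f N x, tendsto_const_nhds.congr' ?_⟩
    filter_upwards [Filter.eventually_ge_atTop N] with n hn
    induction n, hn using Nat.le_induction with
    | base => rfl
    | succ n hn ih =>
      rw [ih]
      simpa using hN n hn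
  obtain ⟨g, hg, hgl⟩ := measurable_limit_of_tendsto_metrizable_ae (fun n => (hf n).aemeasurable) hlim
  refine ⟨g, hg, ?_⟩
  have := tendsto_measure_of_ae_tendsto_indicator (μ := μ) (L := Filter.atTop) (A := ∅)
    (As := fun n => {x | f n x ≠ g x}) MeasurableSet.empty
    (fun n => (measurableSet_eq_fun (hf n) hg).compl) (B := Set.univ) MeasurableSet.univ
    (measure_ne_top _ _) (Filter.Eventually.of_forall fun _ => Set.subset_univ _) (by
      filter_upwards [hgl] with x hx
      have : ∀ᶠ n in Filter.atTop, f n x = g x := by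
        have := hx (show {g x} ∈ nhds (g x) by simp)
        exact this
      filter_upwards [this] with n hn
      simp [hn])
  rw [measure_empty] at this
  have h2 := (ENNReal.tendsto_toReal (ENNReal.zero_ne_top)).comp this
  simpa [dd, Measure.real, Function.comp_def] using h2

lemma ekeland (Φ : (X → Fin q) → ℝ) (h0 : ∀ f, Measurable f → 0 ≤ Φ f)
    (hc : ∀ (f : ℕ → X → Fin q) (g : X → Fin q), (∀ n, Measurable (f n)) → Measurable g →
      Filter.Tendsto (fun n => dd μ (f n) g) Filter.atTop (nhds 0) →
      Filter.Tendsto (fun n => Φ (f n)) Filter.atTop (nhds (Φ g)))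
    (f0 : X → Fin q) (hf0 : Measurable f0) :
    ∃ g, Measurable g ∧ dd μ f0 g ≤ Φ f0 - Φ g ∧
      ∀ h, Measurable h → dd μ g h ≤ Φ g - Φ h → Φ h = Φ g := by
  have step : ∀ (n : ℕ) (f : {f : X → Fin q // Measurable f}), ∃ h : {f : X → Fin q // Measurable f},
      dd μ f.1 h.1 ≤ Φ f.1 - Φ h.1 ∧ ∀ k : X → Fin q, Measurable k → dd μ f.1 k ≤ Φ f.1 - Φ k →
        Φ h.1 ≤ Φ k + (1/2 : ℝ)^n := by
    intro n f
    let S : Set ℝ := {r | ∃ k : X → Fin q, Measurable k ∧ dd μ f.1 k ≤ Φ f.1 - Φ k ∧ Φ k = r}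
    have hne : S.Nonempty := ⟨Φ f.1, f.1, f.2, by simp [dd_self], rfl⟩
    have hb : BddBelow S := ⟨0, by rintro r ⟨k, hk, _, rfl⟩; exact h0 k hk⟩
    obtain ⟨r, ⟨h, hh, hd, rfl⟩, hlt⟩ := Real.lt_sInf_add_pos hne (show (0:ℝ) < (1/2)^n by positivity)
    refine ⟨⟨h, hh⟩, hd, fun k hk hkd => ?_⟩
    have : sInf S ≤ Φ k := csInf_le hb ⟨k, hk, hkd, rfl⟩
    simp only
    linarith
  choose nx hnx1 hnx2 using step
  let F : ℕ → {f : X → Fin q // Measurable f} := fun n => Nat.rec ⟨f0, hf0⟩ (fun n f => nx n f) n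
  have hF : ∀ n, F (n+1) = nx n (F n) := fun n => rfl
  have hd1 : ∀ n, dd μ (F n).1 (F (n+1)).1 ≤ Φ (F n).1 - Φ (F (n+1)).1 := fun n => hnx1 n (F n)
  have hd : ∀ n k, dd μ (F n).1 (F (n+k)).1 ≤ Φ (F n).1 - Φ (F (n+k)).1 := by
    intro n k
    induction k with
    | zero => simp [dd_self]
    | succ k ih =>
      have := dd_tri' μ (f := (F n).1) (g := (F (n+k)).1) (h := (F (n+(k+1))).1)
      have := hd1 (n+k)
      rw [← add_assoc] at *
      linarith
  have hsum : ∀ n, ∑ k ∈ Finset.range n, dd μ (F k).1 (F (k+1)).1 ≤ Φ f0 := by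
    intro n
    have h1 : ∑ k ∈ Finset.range n, dd μ (F k).1 (F (k+1)).1 ≤ Φ f0 - Φ (F n).1 := by
      induction n with
      | zero => simp [F]
      | succ n ih => rw [Finset.sum_range_succ]; linarith [hd1 n]
    linarith [h0 _ (F n).2]
  obtain ⟨g, hg, hl⟩ := dd_limit μ (fun n => (F n).1) (fun n => (F n).2) _ hsum
  have hΦ := hc _ g (fun n => (F n).2) hg hl
  have hdg : ∀ n, dd μ (F n).1 g ≤ Φ (F n).1 - Φ g := by
    intro n
    have h1 : Filter.Tendsto (fun k => Φ (F n).1 - Φ (F (k+n)).1 + dd μ (F (k+n)).1 g) Filter.atTop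
        (nhds (Φ (F n).1 - Φ g + 0)) :=
      ((tendsto_const_nhds.sub ((Filter.tendsto_add_atTop_iff_nat n).2 hΦ))).add
        ((Filter.tendsto_add_atTop_iff_nat n).2 hl)
    rw [add_zero] at h1
    refine ge_of_tendsto' h1 fun k => ?_
    have := hd n k
    rw [add_comm n k] at this
    have := dd_tri' μ (f := (F n).1) (g := (F (k+n)).1) (h := g)
    linarith
  refine ⟨g, hg, hdg 0, fun h hh hgh => ?_⟩
  have hle : Φ h ≤ Φ g := by linarith [dd_nonneg μ g h]
  refine le_antisymm hle ?_
  have h2 : Filter.Tendsto (fun n : ℕ => Φ h + (1/2:ℝ)^n) Filter.atTop (nhds (Φ h + 0)) :=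
    tendsto_const_nhds.add (tendsto_pow_atTop_nhds_zero_of_lt_one (by norm_num) (by norm_num))
  rw [add_zero] at h2
  refine le_of_tendsto_of_tendsto' ((Filter.tendsto_add_atTop_iff_nat 1).2 hΦ) h2 fun n => ?_
  refine hnx2 n (F n) h hh ?_
  have := dd_tri' μ (f := (F n).1) (g := g) (h := h)
  linarith [hdg n]

variable [MulAction Gm X] (hmp : ∀ g : Gm, MeasurePreserving (fun x : X => g • x) μ μ)
include hmp

lemma ee_bound (f : X → Fin q) (x : X) : |(ee f x : ℝ)| ≤ 6 := by
  have h0 : 0 ≤ ee f x := Finset.sum_nonneg fun _ _ => ind_nonneg _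
  have h1 : ee f x ≤ 6 := by
    refine (Finset.sum_le_card_nsmul _ _ 1 (fun _ _ => ind_le_one _)).trans (by simp)
  rw [abs_of_nonneg (by exact_mod_cast h0)]
  exact_mod_cast h1

lemma int_ee {f : X → Fin q} (hf : Measurable f) : Integrable (fun x => (ee f x : ℝ)) μ :=
  int_of_bdd μ (meas_ee μ hmp hf) 6 (ee_bound μ hmp f)

lemma En_nonneg (f : X → Fin q) : 0 ≤ En μ f :=
  integral_nonneg fun x => by
    have h0 : 0 ≤ ee f x := Finset.sum_nonneg fun _ _ => ind_nonneg _
    show (0:ℝ) ≤ (ee f x : ℝ)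
    exact_mod_cast h0

lemma En_lip1 {f g : X → Fin q} (hf : Measurable f) (hg : Measurable g) :
    En μ f - En μ g ≤ 12 * dd μ f g := by
  classical
  set V : Set X := {x | f x ≠ g x} with hVd
  have hV : MeasurableSet V := (measurableSet_eq_fun hf hg).compl
  let I : X → ℝ := V.indicator (fun _ => (1:ℝ))
  have hI : Integrable I μ := (integrable_const 1).indicator hV
  have hIi : ∫ x, I x ∂μ = dd μ f g := by
    simp only [I]; rw [integral_indicator hV]; simp [dd, hVd]
  have hc : ∀ t, Integrable (fun x => I (gen t • x)) μ := fun t =>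
    (hmp (gen t)).integrable_comp_of_integrable hI
  have hci : ∀ t, ∫ x, I (gen t • x) ∂μ = dd μ f g := fun t => by
    rw [← hIi]
    have := (hmp (gen t)).map_eq
    conv_rhs => rw [← this]
    rw [integral_map (hmp (gen t)).measurable.aemeasurable]
    rw [this]
    exact hI.aestronglyMeasurable
  have hcI : ∀ t, Integrable (fun x => I (gen t • x) + I x) μ := fun t => (hc t).add hI
  have hle : ∀ x, (ee f x : ℝ) - ee g x ≤ ∑ t : Dir, (I (gen t • x) + I x) := by
    intro x
    unfold ee
    push_cast
    rw [← Finset.sum_sub_distrib]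
    refine Finset.sum_le_sum fun t _ => ?_
    simp only [I, Set.indicator, hVd, Set.mem_ofPred_eq, ind]
    by_cases h1 : f (gen t • x) = g (gen t • x) <;> by_cases h2 : f x = g x
    · simp [h1, h2]
    all_goals simp [h1, h2] <;> split_ifs <;> norm_num
  have : ∫ x, ((ee f x : ℝ) - ee g x) ∂μ ≤ ∫ x, ∑ t : Dir, (I (gen t • x) + I x) ∂μ :=
    integral_mono ((int_ee μ hmp hf).sub (int_ee μ hmp hg))
      (integrable_finsetSum _ fun t _ => hcI t) hle
  rw [integral_sub (int_ee μ hmp hf) (int_ee μ hmp hg), integral_finsetSum _ fun t _ => hcI t] at this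
  have h2 : ∀ t, ∫ x, (I (gen t • x) + I x) ∂μ = 2 * dd μ f g := fun t => by
    rw [integral_add (hc t) hI, hci, hIi]; ring
  simp_rw [h2] at this
  simp only [Finset.sum_const, card_dir] at this
  unfold En
  simp at this ⊢
  linarith

lemma En_tendsto (f : ℕ → X → Fin q) (g : X → Fin q) (hf : ∀ n, Measurable (f n)) (hg : Measurable g)
    (h : Filter.Tendsto (fun n => dd μ (f n) g) Filter.atTop (nhds 0)) :
    Filter.Tendsto (fun n => En μ (f n)) Filter.atTop (nhds (En μ g)) := by
  rw [tendsto_iff_dist_tendsto_zero]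
  refine squeeze_zero (fun _ => dist_nonneg) (g := fun n => 12 * dd μ (f n) g) (fun n => ?_) (by simpa using h.const_mul 12)
  rw [Real.dist_eq, abs_le]
  have h1 := En_lip1 μ hmp (hf n) hg
  have h2 := En_lip1 μ hmp hg (hf n)
  rw [dd_symm] at h2
  constructor <;> linarith

end ek
end FC
set_option linter.unusedSectionVars false
namespace FC

def mn (k : Fin 4 → ℤ) : ℤ := min (min (k 0) (k 1)) (min (k 2) (k 3))

lemma mn_le (k : Fin 4 → ℤ) (i : Fin 4) : mn k ≤ k i := by
  unfold mn; fin_cases i <;> simp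

lemma mn_ex (k : Fin 4 → ℤ) : ∃ i, k i = mn k := by
  unfold mn
  rcases min_choice (min (k 0) (k 1)) (min (k 2) (k 3)) with h | h <;> rw [h]
  · rcases min_choice (k 0) (k 1) with h | h <;> rw [h] <;> exact ⟨_, rfl⟩
  · rcases min_choice (k 2) (k 3) with h | h <;> rw [h] <;> exact ⟨_, rfl⟩

lemma le_mn {k : Fin 4 → ℤ} {a : ℤ} (h : ∀ i, a ≤ k i) : a ≤ mn k := by
  obtain ⟨i, hi⟩ := mn_ex k
  rw [← hi]; exact h i

lemma ind_true {p : Prop} [Decidable p] (h : p) : ind p = 1 := by simp [ind, h]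
lemma ind_false {p : Prop} [Decidable p] (h : ¬ p) : ind p = 0 := by simp [ind, h]

lemma mn_form (k : Fin 4 → ℤ) : ∃ u : Option (Fin 4), ∀ ℓ,
    mn (fun i => k i + ind (i = ℓ)) = mn k + ind (u = some ℓ) := by
  obtain ⟨i0, hi0⟩ := mn_ex k
  by_cases h : ∃ j, j ≠ i0 ∧ k j = mn k
  · obtain ⟨j, hj, hkj⟩ := h
    refine ⟨none, fun ℓ => ?_⟩
    simp only [ind_false (show ¬ (none = some ℓ) by simp), add_zero]
    apply le_antisymm
    · by_cases hl : i0 = ℓ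
      · refine (mn_le _ j).trans ?_
        rw [ind_false (by rw [← hl]; exact hj)]; linarith
      · refine (mn_le _ i0).trans ?_
        rw [ind_false hl]; linarith
    · refine le_mn fun i => ?_
      have := mn_le k i
      have := ind_nonneg (i = ℓ)
      linarith
  · push Not at h
    refine ⟨some i0, fun ℓ => ?_⟩
    by_cases hl : i0 = ℓ
    · subst hl
      rw [ind_true rfl]
      apply le_antisymm
      · refine (mn_le _ i0).trans ?_
        rw [ind_true rfl]; linarith
      · refine le_mn fun i => ?_
        by_cases hi : i = i0
        · subst hi; rw [ind_true rfl]; linarith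
        · have := mn_le k i
          have := h i hi
          rw [ind_false hi]; omega
    · rw [ind_false (show ¬ (some i0 = some ℓ) by simpa using hl)]
      apply le_antisymm
      · refine (mn_le _ i0).trans ?_
        rw [ind_false hl]; linarith
      · refine le_mn fun i => ?_
        have := mn_le k i
        have := ind_nonneg (i = ℓ)
        linarith

lemma mn_add_const (k : Fin 4 → ℤ) (a : ℤ) : mn (fun i => a + k i) = a + mn k := by
  apply le_antisymm
  · obtain ⟨i, hi⟩ := mn_ex k
    rw [← hi]; exact mn_le (fun i => a + k i) i
  · exact le_mn fun i => by linarith [mn_le k i]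

lemma mn_ind (u : Option (Fin 4)) : mn (fun i => ind (u = some i)) = 0 := by
  revert u; unfold mn ind; decide

/-- key combinatorial inequality -/
lemma comb (u : Dir → Option (Fin 4)) :
    ∑ s : Dir, mn (fun i => ∑ r ∈ Finset.univ.erase s, ind (u r = some i))
      ≤ 4 * mn (fun i => ∑ r : Dir, ind (u r = some i)) := by
  set k : Fin 4 → ℤ := fun i => ∑ r : Dir, ind (u r = some i) with hk
  have hke : ∀ s i, ∑ r ∈ Finset.univ.erase s, ind (u r = some i) = k i - ind (u s = some i) := by
    intro s i
    have := Finset.add_sum_erase Finset.univ (fun r => ind (u r = some i)) (Finset.mem_univ s)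
    simp only [hk]; linarith
  simp_rw [hke]
  have hk0 : ∀ i, 0 ≤ k i := fun i => Finset.sum_nonneg fun _ _ => ind_nonneg _
  have hsum : k 0 + k 1 + k 2 + k 3 ≤ 6 := by
    simp only [hk, ← Finset.sum_add_distrib]
    refine (Finset.sum_le_card_nsmul _ _ 1 (fun t _ => ?_)).trans (by simp)
    generalize u t = v
    revert v; unfold ind; decide
  obtain ⟨i, hi⟩ := mn_ex k
  have hK0 : 0 ≤ mn k := le_mn hk0
  by_cases hK : mn k = 0
  · rw [hK]
    refine (Finset.sum_nonpos fun s _ => ?_)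
    refine (mn_le _ i).trans ?_
    have := ind_nonneg (u s = some i)
    linarith
  have h0 := mn_le k 0
  have h1 := mn_le k 1
  have h2 := mn_le k 2
  have h3 := mn_le k 3
  have hK1 : mn k = 1 := by omega
  have hj : ∃ j, j ≠ i ∧ k j = 1 := by
    by_contra hcon
    push Not at hcon
    have c0 := hcon 0
    have c1 := hcon 1
    have c2 := hcon 2
    have c3 := hcon 3
    fin_cases i <;> simp at * <;> omega
  obtain ⟨j, hji, hkj⟩ := hj
  have hb : ∀ s, mn (fun i => k i - ind (u s = some i)) ≤ 1 - ind (u s = some i) - ind (u s = some j) := by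
    intro s
    by_cases hs : u s = some i
    · rw [ind_true hs, ind_false (show ¬ u s = some j by rw [hs]; simpa using hji.symm)]
      refine (mn_le _ i).trans ?_
      rw [ind_true hs]; omega
    · rw [ind_false hs]
      refine (mn_le _ j).trans ?_
      have := ind_nonneg (u s = some j)
      omega
  refine (Finset.sum_le_sum fun s _ => hb s).trans ?_
  rw [Finset.sum_sub_distrib, Finset.sum_sub_distrib]
  have e1 : ∑ s, ind (u s = some i) = 1 := by have := hi; rw [hK1] at this; exact this
  have e2 : ∑ s, ind (u s = some j) = 1 := hkj
  rw [e1, e2, hK1]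
  simp

lemma comb2 (N : Dir → Fin 4 → ℤ) (e : Dir → ℤ) (c0 : Fin 4) (h1 : ∀ t, N t c0 ≤ e t)
    (hform : ∀ t, ∃ b : ℤ, ∃ u : Option (Fin 4), ∀ ℓ, N t ℓ = b + ind (u = some ℓ)) :
    ∑ s : Dir, mn (fun i => ∑ r ∈ Finset.univ.erase s, (N r i - e r)) ≤ ∑ t, mn (N t) - ∑ t, e t := by
  choose b u hbu using hform
  have hmn : ∀ t, mn (N t) = b t := by
    intro t
    have : N t = fun ℓ => b t + ind (u t = some ℓ) := funext (hbu t)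
    rw [this, mn_add_const, mn_ind, add_zero]
  simp_rw [hmn, hbu]
  have hs : ∀ s : Dir, mn (fun i => ∑ r ∈ Finset.univ.erase s, (b r + ind (u r = some i) - e r))
      = (∑ r, (b r - e r) - (b s - e s)) + mn (fun i => ∑ r ∈ Finset.univ.erase s, ind (u r = some i)) := by
    intro s
    rw [← mn_add_const]
    congr 1; funext i
    rw [← Finset.add_sum_erase Finset.univ (fun r => b r - e r) (Finset.mem_univ s), add_sub_cancel_left,
      ← Finset.sum_add_distrib]
    exact Finset.sum_congr rfl fun r _ => by ring
  simp_rw [hs]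
  rw [Finset.sum_add_distrib, Finset.sum_sub_distrib]
  have hc := comb u
  have hm := mn_le (fun i => ∑ r : Dir, ind (u r = some i)) c0
  have h2 : ∑ r : Dir, ind (u r = some c0) + ∑ r, (b r - e r) ≤ 0 := by
    rw [← Finset.sum_add_distrib]
    refine Finset.sum_nonpos fun t _ => ?_
    have := h1 t
    rw [hbu] at this
    linarith
  simp only [Finset.sum_const, card_dir] at *
  rw [Finset.sum_sub_distrib] at *
  simp only [nsmul_eq_mul]
  push_cast
  linarith

def sh (t : Dir) (c : Gm → Fin 4) : Gm → Fin 4 := fun g => c (g * gen t)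

def Nm : ℕ → (Gm → Fin 4) → Dir → Fin 4 → ℤ
  | 0, c, t, ℓ => ind (c (gen t) = ℓ)
  | n+1, c, t, ℓ => mn fun i => ∑ r ∈ Finset.univ.erase (opp t),
      (Nm n (sh t c) r i - ind (sh t c (gen r) = sh t c 1)) + ind (i = ℓ)

lemma Nm_le (n : ℕ) (c : Gm → Fin 4) (t : Dir) (ℓ : Fin 4) : Nm n c t ℓ ≤ ind (c (gen t) = ℓ) := by
  induction n generalizing c t ℓ with
  | zero => exact le_rfl
  | succ n ih =>
    rw [Nm]
    refine (mn_le _ (c (gen t))).trans ?_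
    have : ∑ r ∈ Finset.univ.erase (opp t),
      (Nm n (sh t c) r (c (gen t)) - ind (sh t c (gen r) = sh t c 1)) ≤ 0 := by
      refine Finset.sum_nonpos fun r _ => ?_
      have := ih (sh t c) r (c (gen t))
      have h1 : sh t c 1 = c (gen t) := by simp [sh]
      rw [h1]; linarith
    linarith

lemma Nm_form (n : ℕ) (c : Gm → Fin 4) (t : Dir) :
    ∃ b : ℤ, ∃ u : Option (Fin 4), ∀ ℓ, Nm n c t ℓ = b + ind (u = some ℓ) := by
  cases n with
  | zero => exact ⟨0, some (c (gen t)), fun ℓ => by simp [Nm]⟩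
  | succ n =>
    obtain ⟨u, hu⟩ := mn_form (fun i => ∑ r ∈ Finset.univ.erase (opp t),
      (Nm n (sh t c) r i - ind (sh t c (gen r) = sh t c 1)))
    exact ⟨_, u, fun ℓ => by rw [Nm, hu ℓ]⟩

lemma mn_Nm_succ (n : ℕ) (c : Gm → Fin 4) (t : Dir) : mn (Nm (n+1) c t) =
    mn fun i => ∑ r ∈ Finset.univ.erase (opp t),
      (Nm n (sh t c) r i - ind (sh t c (gen r) = sh t c 1)) := by
  obtain ⟨u, hu⟩ := mn_form (fun i => ∑ r ∈ Finset.univ.erase (opp t),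
      (Nm n (sh t c) r i - ind (sh t c (gen r) = sh t c 1)))
  have : Nm (n+1) c t = fun ℓ => (mn fun i => ∑ r ∈ Finset.univ.erase (opp t),
      (Nm n (sh t c) r i - ind (sh t c (gen r) = sh t c 1))) + ind (u = some ℓ) :=
    funext fun ℓ => by rw [Nm, hu ℓ]
  rw [this, mn_add_const, mn_ind, add_zero]

def MM : ℕ → ℕ
  | 0 => 0
  | n+1 => 5 * MM n + 1

lemma Nm_real (n : ℕ) (c : Gm → Fin 4) (t : Dir) (ℓ : Fin 4) :
    ∃ l : List (Gm × Fin 4), (∀ p ∈ l, p.1 ∈ W t) ∧ l.length ≤ MM n ∧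
      D c l + ind (run c l (gen t) = ℓ) - ind (run c l (gen t) = c 1) + ind (c (gen t) = c 1)
        ≤ Nm n c t ℓ := by
  induction n generalizing c t ℓ with
  | zero => exact ⟨[], by simp, by simp, by
    show 0 + ind (c (gen t) = ℓ) - ind (c (gen t) = c 1) + ind (c (gen t) = c 1) ≤ ind (c (gen t) = ℓ)
    linarith⟩
  | succ n ih =>
    obtain ⟨i, hi⟩ := mn_ex (fun i => ∑ r ∈ Finset.univ.erase (opp t),
      (Nm n (sh t c) r i - ind (sh t c (gen r) = sh t c 1)) + ind (i = ℓ))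
    have hN : Nm (n+1) c t ℓ = _ := hi.symm
    rw [hN]
    set c' := sh t c with hc'
    choose l hl1 hl2 hl3 using fun r => ih c' r i
    obtain ⟨L, hL1, hL2, hL3, hL4⟩ := glue c' (Finset.univ.erase (opp t)) l
      (fun r _ => hl1 r) (MM n) (fun r _ => hl2 r)
    have hne : ∀ p ∈ L, p.1 ∉ W (opp t) := by
      intro p hp
      obtain ⟨r, hr, hpr⟩ := hL1 p hp
      exact W_disj (Finset.ne_of_mem_erase hr) hpr
    have hr1 : run c' L 1 = c' 1 := run_out _ _ _ (by
      intro p hp h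
      obtain ⟨r, hr, hpr⟩ := hL1 p hp
      exact one_notMem_W r (h ▸ hpr))
    have hro : run c' L (gen (opp t)) = c 1 := by
      rw [run_out _ _ _ (by
        intro p hp h
        exact hne p hp (h ▸ gen_mem_W _))]
      simp [hc', sh, gen_opp]
    have htr := translate (gen t) (L ++ [(1, i)]) c
    refine ⟨(L ++ [(1, i)]).map fun p : Gm × Fin 4 => (p.1 * gen t, p.2), ?_, ?_, ?_⟩
    · intro p hp
      obtain ⟨p', hp', rfl⟩ := List.mem_map.1 hp
      apply mul_gen_mem_W
      rcases List.mem_append.1 hp' with h | h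
      · exact hne _ h
      · rw [List.mem_singleton.1 h]; exact one_notMem_W _
    · have : (Finset.univ.erase (opp t)).card = 5 := by
        rw [Finset.card_erase_of_mem (Finset.mem_univ _), card_dir]
      rw [this] at hL2
      simp [MM]; exact hL2
    · have hrun : run c ((L ++ [(1, i)]).map fun p : Gm × Fin 4 => (p.1 * gen t, p.2)) (gen t) = i := by
        have := (htr.2 1).symm
        rw [one_mul] at this
        rw [this, run_append]
        simp [run]
      rw [hrun, ← htr.1]
      change D c' _ + _ - _ + _ ≤ _
      rw [D_append, hL3]
      simp only [D, loc, hr1, mul_one, add_zero]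
      rw [← Finset.add_sum_erase Finset.univ _ (Finset.mem_univ (opp t)), hro]
      have h5 : ∑ r ∈ Finset.univ.erase (opp t), D c' (l r) + ∑ x ∈ Finset.univ.erase (opp t),
          (ind (run c' L (gen x) = i) - ind (run c' L (gen x) = c' 1)) ≤
          ∑ r ∈ Finset.univ.erase (opp t), (Nm n c' r i - ind (c' (gen r) = c' 1)) := by
        rw [← Finset.sum_add_distrib]
        refine Finset.sum_le_sum fun r hr => ?_
        rw [hL4 r hr]
        linarith [hl3 r]
      have h6 : c' 1 = c (gen t) := by simp [hc', sh]
      have h7 : ind (c 1 = c' 1) = ind (c (gen t) = c 1) := by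
        rw [h6]; simp only [ind, eq_comm]
      have h8 : ind (c 1 = i) = ind (i = c 1) := by simp only [ind, eq_comm]
      linarith

end FC
set_option linter.unusedSectionVars false
namespace FC
section p1
variable {X : Type} [MeasurableSpace X] [MulAction Gm X] (μ : Measure X) [IsProbabilityMeasure μ]

lemma meas_mn {k : X → Fin 4 → ℤ} (h : ∀ i, Measurable fun x => k x i) : Measurable fun x => mn (k x) :=
  ((h 0).min (h 1)).min ((h 2).min (h 3))

lemma meas_Nm (n : ℕ) {F : X → Gm → Fin 4} (hF : ∀ g, Measurable fun x => F x g) (t : Dir) (ℓ : Fin 4) :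
    Measurable fun x => Nm n (F x) t ℓ := by
  induction n generalizing F t ℓ with
  | zero => exact meas_ind (hF _) measurable_const
  | succ n ih =>
    simp only [Nm]
    refine meas_mn fun i => ?_
    refine Measurable.add ?_ measurable_const
    refine Finset.measurable_sum _ fun r _ => ?_
    exact (ih (F := fun x => sh t (F x)) (fun g => hF _) r i).sub (meas_ind (hF _) (hF _))

lemma abs_mn {k : Fin 4 → ℤ} {C : ℤ} (h : ∀ i, |k i| ≤ C) : |mn k| ≤ C := by
  obtain ⟨i, hi⟩ := mn_ex k
  rw [← hi]; exact h i

lemma ind_abs (p : Prop) [Decidable p] : |ind p| ≤ 1 := by unfold ind; split_ifs <;> simp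

lemma Nm_bdd (n : ℕ) : ∃ C : ℤ, ∀ c t ℓ, |Nm n c t ℓ| ≤ C := by
  induction n with
  | zero => exact ⟨1, fun c t ℓ => ind_abs _⟩
  | succ n ih =>
    obtain ⟨C, hC⟩ := ih
    refine ⟨5 * (C + 1) + 1, fun c t ℓ => abs_mn fun i => ?_⟩
    refine (abs_add_le _ _).trans (add_le_add ?_ (ind_abs _))
    refine (Finset.abs_sum_le_sum_abs _ _).trans ?_
    refine (Finset.sum_le_card_nsmul _ _ (C+1) (fun r _ => ?_)).trans ?_
    · exact (abs_sub _ _).trans (add_le_add (hC _ _ _) (ind_abs _))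
    · rw [Finset.card_erase_of_mem (Finset.mem_univ _), card_dir]; simp

lemma Nm_lower (n : ℕ) (c : Gm → Fin 4) (h : ∀ l, l.length ≤ MM n → 0 ≤ D c l) (t : Dir) :
    -1 ≤ mn (Nm n c t) := by
  refine le_mn fun ℓ => ?_
  obtain ⟨l, _, h2, h3⟩ := Nm_real n c t ℓ
  have := h l h2
  have := ind_nonneg (run c l (gen t) = ℓ)
  have := ind_nonneg (c (gen t) = c 1)
  have := ind_le_one (run c l (gen t) = c 1)
  linarith

variable (hmp : ∀ g : Gm, MeasurePreserving (fun x : X => g • x) μ μ)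
include hmp

lemma int_shift {F : X → ℝ} (hF : Integrable F μ) (g : Gm) : ∫ x, F (g • x) ∂μ = ∫ x, F x ∂μ := by
  have := (hmp g).map_eq
  conv_rhs => rw [← this]
  rw [integral_map (hmp g).measurable.aemeasurable]
  rw [this]
  exact hF.aestronglyMeasurable

noncomputable def Bn (f : X → Fin 4) (n : ℕ) : ℝ := ∑ t, ∫ x, (mn (Nm n (cfg f x) t) : ℝ) ∂μ

lemma Bn_step {f : X → Fin 4} (hf : Measurable f) (n : ℕ) : Bn μ f (n+1) ≤ Bn μ f n - En μ f := by
  have hcm := meas_cfg μ hmp hf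
  obtain ⟨C, hC⟩ := Nm_bdd n
  let O : Dir → X → ℤ := fun s x => mn fun i => ∑ r ∈ Finset.univ.erase s,
    (Nm n (cfg f x) r i - ind (cfg f x (gen r) = cfg f x 1))
  have hOm : ∀ s, Measurable (O s) := fun s => meas_mn fun i => Finset.measurable_sum _ fun r _ =>
    (meas_Nm n hcm r i).sub (meas_ind (hcm _) (hcm _))
  have hOb : ∀ s x, |O s x| ≤ 5 * (C+1) := by
    intro s x
    refine abs_mn fun i => ?_
    refine (Finset.abs_sum_le_sum_abs _ _).trans ?_
    refine (Finset.sum_le_card_nsmul _ _ (C+1) (fun r _ => ?_)).trans ?_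
    · exact (abs_sub _ _).trans (add_le_add (hC _ _ _) (ind_abs _))
    · rw [Finset.card_erase_of_mem (Finset.mem_univ _), card_dir]; simp
  have hOi : ∀ s, Integrable (fun x => (O s x : ℝ)) μ := fun s =>
    int_of_bdd μ (hOm s) ((5 * (C+1) : ℤ) : ℝ) fun x => by exact_mod_cast hOb s x
  have hNi : ∀ t, Integrable (fun x => (mn (Nm n (cfg f x) t) : ℝ)) μ := fun t =>
    int_of_bdd μ (meas_mn fun i => meas_Nm n hcm t i) (C : ℝ) fun x => by
      exact_mod_cast abs_mn fun i => hC _ _ _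
  have hshift : ∀ t x, sh t (cfg f x) = cfg f (gen t • x) := by
    intro t x; funext g; simp [sh, cfg, mul_smul]
  have h1 : Bn μ f (n+1) = ∑ t, ∫ x, (O t x : ℝ) ∂μ := by
    rw [← opp_bij.sum_comp]
    unfold Bn
    refine Finset.sum_congr rfl fun t _ => ?_
    rw [← int_shift μ hmp (hOi (opp t)) (gen t)]
    congr 1; funext x
    rw [mn_Nm_succ, hshift]
  have hei := int_ee μ hmp hf
  rw [h1]
  unfold Bn En
  rw [← integral_finsetSum _ fun t _ => hOi t, ← integral_finsetSum _ fun t _ => hNi t,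
    ← integral_sub (integrable_finsetSum _ fun t _ => hNi t) hei]
  refine integral_mono (integrable_finsetSum _ fun t _ => hOi t)
    ((integrable_finsetSum _ fun t _ => hNi t).sub hei) fun x => ?_
  have := comb2 (fun t => Nm n (cfg f x) t) (fun r => ind (cfg f x (gen r) = cfg f x 1)) (cfg f x 1)
    (fun t => Nm_le n _ t _) (fun t => Nm_form n _ t)
  have he : ee f x = ∑ r, ind (cfg f x (gen r) = cfg f x 1) := by
    unfold ee cfg; simp only [one_smul]
  simp only
  rw [he]
  exact_mod_cast this

lemma partI {f : X → Fin 4} (hf : Measurable f) (n : ℕ) (hs : Stable μ (MM n) f) :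
    n * En μ f ≤ 6 := by
  have hB : ∀ k : ℕ, Bn μ f k ≤ - (k * En μ f) := by
    intro k
    induction k with
    | zero =>
      simp only [Bn, Nat.cast_zero, zero_mul, neg_zero]
      refine Finset.sum_nonpos fun t _ => ?_
      refine integral_nonpos fun x => ?_
      have : mn (Nm 0 (cfg f x) t) = 0 := by
        have h := mn_ind (some (cfg f x (gen t)))
        have h2 : Nm 0 (cfg f x) t = fun i => ind (some (cfg f x (gen t)) = some i) := by
          funext i; simp [Nm]
        rw [h2, h]
      simp [this]
    | succ k ih =>
      have := Bn_step μ hmp hf k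
      push_cast
      linarith
  have hL : -6 ≤ Bn μ f n := by
    obtain ⟨C, hC⟩ := Nm_bdd n
    have hcm := meas_cfg μ hmp hf
    have : ∀ t ∈ (Finset.univ : Finset Dir), (-1:ℝ) ≤ ∫ x, (mn (Nm n (cfg f x) t) : ℝ) ∂μ := by
      intro t _
      have h1 : ∫ x, (-1:ℝ) ∂μ = -1 := by simp
      rw [← h1]
      refine integral_mono_ae (integrable_const _) (int_of_bdd μ (meas_mn fun i => meas_Nm n hcm t i) (C : ℝ) fun x => by
        exact_mod_cast abs_mn fun i => hC _ _ _) ?_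
      filter_upwards [hs] with x hx
      exact_mod_cast Nm_lower n (cfg f x) hx t
    have h2 := Finset.card_nsmul_le_sum _ _ _ this
    rw [card_dir] at h2
    unfold Bn
    simp at h2
    linarith
  linarith [hB n]

variable (hfree : ∀ F : Finset Gm, 1 ∉ F → ∀ U : Set X, MeasurableSet U → μ U ≠ 0 →
  ∃ U' ⊆ U, MeasurableSet U' ∧ μ U' ≠ 0 ∧ ∀ g ∈ F, ∀ x ∈ U', g • x ∉ U')
include hfree

lemma partI' (n : ℕ) : ∃ f : X → Fin 4, Measurable f ∧ n * En μ f ≤ 6 := by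
  obtain ⟨g, hg, _, hmin⟩ := ekeland μ (fun f : X → Fin 4 => (MM n + 1 : ℝ) * En μ f)
    (fun f _ => mul_nonneg (by positivity) (En_nonneg μ hmp f))
    (fun f g hf hg h => (En_tendsto μ hmp f g hf hg h).const_mul _)
    (fun _ => 0) measurable_const
  have hst : Stable μ (MM n + 1) g := stable_of_min μ hmp hfree _ g hg fun h hh hd => by
    have hpos : (0:ℝ) < MM n + 1 := by positivity
    push_cast at hd
    have := hmin h hh (by linarith)
    exact mul_left_cancel₀ hpos.ne' this
  refine ⟨g, hg, partI μ hmp hg n ?_⟩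
  filter_upwards [hst] with x hx l hl
  exact hx l (by omega)
end p1
end FC
set_option linter.unusedSectionVars false
namespace FC

def sh5 (t : Dir) (c : Gm → Fin 5) : Gm → Fin 5 := fun g => c (g * gen t)

def OO (T : Dir → Prop) (c : Gm → Fin 5) (s : Dir) : Prop :=
  ∃ t, t ≠ s ∧ T t ∧ c (gen s) ≠ c 1 ∧ ∀ r, r ≠ t → r ≠ s → c (gen r) ≠ c (gen s)

def Tk : ℕ → (Gm → Fin 5) → Dir → Prop
  | 0, c, t => c (gen t) = c 1
  | k+1, c, u => OO (Tk k (sh5 u c)) (sh5 u c) (opp u)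

lemma loc_bd (c : Gm → Fin 5) (j : Fin 5) (P : Dir → ℤ)
    (h : ∀ r, ind (c (gen r) = j) - ind (c (gen r) = c 1) ≤ P r) : loc c 1 j ≤ ∑ r, P r := by
  unfold loc
  simp only [mul_one]
  exact Finset.sum_le_sum fun r _ => h r

lemma Tk_real (k : ℕ) (c : Gm → Fin 5) (t : Dir) (h : Tk k c t) :
    ∃ l : List (Gm × Fin 5), (∀ p ∈ l, p.1 ∈ W t) ∧ l.length ≤ k ∧ D c l ≤ 0 ∧
      run c l (gen t) = c 1 := by
  induction k generalizing c t with
  | zero => exact ⟨[], by simp, by simp, le_rfl, h⟩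
  | succ k ih =>
    obtain ⟨s, hs, hT, hne, hun⟩ := h
    set c' := sh5 t c with hc'
    obtain ⟨L, hL1, hL2, hL3, hL4⟩ := ih c' s hT
    have hco : c' (gen (opp t)) = c 1 := by simp [hc', sh5, gen_opp]
    rw [hco] at hne hun
    have hout : ∀ r, r ≠ s → run c' L (gen r) = c' (gen r) := fun r hr =>
      run_out _ _ _ fun p hp h => W_disj (Ne.symm hr) (hL1 p hp) (h ▸ gen_mem_W r)
    have hr1 : run c' L 1 = c' 1 := run_out _ _ _ fun p hp h => one_notMem_W s (h ▸ hL1 p hp)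
    have htr := translate (gen t) (L ++ [(1, c 1)]) c
    refine ⟨(L ++ [(1, c 1)]).map fun p : Gm × Fin 5 => (p.1 * gen t, p.2), ?_, ?_, ?_, ?_⟩
    · intro p hp
      obtain ⟨p', hp', rfl⟩ := List.mem_map.1 hp
      apply mul_gen_mem_W
      rcases List.mem_append.1 hp' with h | h
      · exact W_disj hs (hL1 _ h)
      · rw [List.mem_singleton.1 h]; exact one_notMem_W _
    · simp; exact hL2
    · rw [← htr.1]
      change D c' _ ≤ 0
      rw [D_append]
      simp only [D, add_zero]
      have hloc : loc (run c' L) 1 (c 1) ≤ ∑ r, (ind (r = opp t) - ind (r = s)) := by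
        refine loc_bd _ _ _ fun r => ?_
        rw [hr1]
        by_cases h1 : r = s
        · subst h1
          rw [hL4, ind_false hne.symm, ind_true rfl, ind_true (rfl : r = r), ind_false hs]
        · rw [hout r h1]
          by_cases h2 : r = opp t
          · subst h2
            rw [hco, ind_true (rfl : c 1 = c 1), ind_false hne, ind_true (rfl : opp t = opp t), ind_false h1]
          · rw [ind_false (hun r h1 h2), ind_false h1, ind_false h2]
            have := ind_nonneg (c' (gen r) = c' 1)
            linarith
      have hz : ∑ r, (ind (r = opp t) - ind (r = s)) = 0 := by
        rw [Finset.sum_sub_distrib]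
        unfold ind
        simp
      linarith
    · have := (htr.2 1).symm
      rw [one_mul] at this
      rw [this, run_append]
      simp [run]

lemma sum_ind_eq (a : Fin 5) (b : Fin 5) : ∑ j ∈ Finset.univ.erase a, ind (b = j) ≤ 1 := by
  revert a b; unfold ind; decide

lemma Tk_unique (k : ℕ) (c : Gm → Fin 5) (hst : ∀ l, l.length ≤ 2*k+1 → 0 ≤ D c l)
    (s t : Dir) (hs : Tk k c s) (ht : Tk k c t) : s = t := by
  by_contra hne
  obtain ⟨l1, a1, a2, a3, a4⟩ := Tk_real k c s hs
  obtain ⟨l2, b1, b2, b3, b4⟩ := Tk_real k c t ht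
  obtain ⟨L, hL1, hL2, hL3, hL4⟩ := glue c {s, t} (fun r => if r = s then l1 else l2) (by
    intro r hr p hp
    by_cases h : r = s
    · subst h; simp at hp; exact a1 p hp
    · have : r = t := by simpa [h] using hr
      subst this; simp [h] at hp; exact b1 p hp) k (by
    intro r hr; split_ifs <;> assumption)
  have hts : t ≠ s := Ne.symm hne
  rw [Finset.sum_pair hne] at hL3
  rw [Finset.card_pair hne] at hL2
  have r1 := hL4 s (by simp)
  have r2 := hL4 t (by simp)
  simp only [if_true, if_neg hts] at hL3 r1 r2
  rw [a4] at r1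
  rw [b4] at r2
  have hout : ∀ r, r ≠ s → r ≠ t → run c L (gen r) = c (gen r) := fun r hr1 hr2 =>
    run_out _ _ _ fun p hp h => by
      obtain ⟨r', hr', hW⟩ := hL1 p hp
      rcases Finset.mem_insert.1 hr' with h' | h'
      · subst h'; exact W_disj (Ne.symm hr1) hW (h ▸ gen_mem_W r)
      · rw [Finset.mem_singleton] at h'
        subst h'; exact W_disj (Ne.symm hr2) hW (h ▸ gen_mem_W r)
  have hr1 : run c L 1 = c 1 := run_out _ _ _ fun p hp h => by
    obtain ⟨r', hr', hW⟩ := hL1 p hp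
    exact one_notMem_W r' (h ▸ hW)
  have key : ∀ j ∈ Finset.univ.erase (c 1), (2 : ℤ) ≤ ∑ r ∈ (Finset.univ.erase s).erase t, ind (c (gen r) = j) := by
    intro j hj
    have hj' : j ≠ c 1 := Finset.ne_of_mem_erase hj
    have h0 := hst (L ++ [(1, j)]) (by simp; omega)
    rw [D_append] at h0
    simp only [D, add_zero] at h0
    have hloc : loc (run c L) 1 j ≤ ∑ r, (if r = s then -1 else if r = t then -1 else ind (c (gen r) = j)) := by
      refine loc_bd _ _ _ fun r => ?_
      rw [hr1]
      by_cases h1 : r = s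
      · subst h1
        rw [r1, ind_false hj'.symm, ind_true rfl]; simp
      · by_cases h2 : r = t
        · subst h2
          rw [r2, ind_false hj'.symm, ind_true rfl]; simp [h1]
        · rw [hout r h1 h2, if_neg h1, if_neg h2]
          have := ind_nonneg (c (gen r) = c 1)
          linarith
    rw [← Finset.add_sum_erase Finset.univ _ (Finset.mem_univ s), ← Finset.add_sum_erase (Finset.univ.erase s) _ (show t ∈ Finset.univ.erase s by simpa using hts)] at hloc
    simp only [if_true, if_neg hts] at hloc
    have hcg : ∑ x ∈ (Finset.univ.erase s).erase t, (if x = s then -1 else if x = t then -1 else ind (c (gen x) = j))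
        = ∑ r ∈ (Finset.univ.erase s).erase t, ind (c (gen r) = j) := by
      refine Finset.sum_congr rfl fun x hx => ?_
      have h2 := Finset.ne_of_mem_erase hx
      have h1 := Finset.ne_of_mem_erase (Finset.mem_of_mem_erase hx)
      rw [if_neg h1, if_neg h2]
    rw [hcg] at hloc
    linarith
  have h1 := Finset.card_nsmul_le_sum _ _ _ key
  rw [Finset.sum_comm] at h1
  have h2 : ∑ y ∈ (Finset.univ.erase s).erase t, ∑ j ∈ Finset.univ.erase (c 1), ind (c (gen y) = j) ≤
      ((Finset.univ.erase s).erase t).card • 1 := Finset.sum_le_card_nsmul _ _ _ fun y _ => sum_ind_eq _ _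
  rw [Finset.card_erase_of_mem (show t ∈ Finset.univ.erase s by simpa using hts), Finset.card_erase_of_mem (Finset.mem_univ s), card_dir] at h2
  rw [Finset.card_erase_of_mem (Finset.mem_univ _)] at h1
  simp at h1 h2
  linarith

lemma Tk_colors (k : ℕ) (c : Gm → Fin 5) (hst : ∀ l, l.length ≤ 2*k+1 → 0 ≤ D c l)
    (t : Dir) (ht : Tk k c t) (j : Fin 5) (hj : j ≠ c 1) : ∃ r, r ≠ t ∧ c (gen r) = j := by
  by_contra hcon
  push Not at hcon
  obtain ⟨L, hL1, a2, a3, a4⟩ := Tk_real k c t ht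
  have hout : ∀ r, r ≠ t → run c L (gen r) = c (gen r) := fun r hr =>
    run_out _ _ _ fun p hp h => W_disj (Ne.symm hr) (hL1 p hp) (h ▸ gen_mem_W r)
  have hr1 : run c L 1 = c 1 := run_out _ _ _ fun p hp h => one_notMem_W t (h ▸ hL1 p hp)
  have h0 := hst (L ++ [(1, j)]) (by simp; omega)
  rw [D_append] at h0
  simp only [D, add_zero] at h0
  have hloc : loc (run c L) 1 j ≤ ∑ r, -ind (r = t) := by
    refine loc_bd _ _ _ fun r => ?_
    rw [hr1]
    by_cases h1 : r = t
    · subst h1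
      rw [a4, ind_false hj.symm, ind_true rfl, ind_true (rfl : r = r)]; simp
    · rw [hout r h1, ind_false (hcon r h1), ind_false h1]
      have := ind_nonneg (c (gen r) = c 1)
      linarith
  have : ∑ r, -ind (r = t) = -1 := by unfold ind; simp
  linarith

lemma count (v : Dir → Fin 5) (a : Fin 5) (t : Dir) (h : ∀ j, j ≠ a → ∃ r, r ≠ t ∧ v r = j) :
    3 ≤ (Finset.univ.filter fun s : Dir => t ≠ s ∧ v s ≠ a ∧ ∀ r, r ≠ t → r ≠ s → v r ≠ v s).card := by
  choose! ρ hρ1 hρ2 using h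
  set G := (Finset.univ.filter fun s : Dir => t ≠ s ∧ v s ≠ a ∧ ∀ r, r ≠ t → r ≠ s → v r ≠ v s) with hG
  set P : Finset Dir := (Finset.univ.erase a).image ρ with hP
  have hinj : Set.InjOn ρ ((Finset.univ.erase a : Finset (Fin 5)) : Set (Fin 5)) := by
    intro i hi j hj hij
    have hi' := Finset.ne_of_mem_erase (Finset.mem_coe.1 hi)
    have hj' := Finset.ne_of_mem_erase (Finset.mem_coe.1 hj)
    rw [← hρ2 i hi', ← hρ2 j hj', hij]
  have hPc : P.card = 4 := by
    rw [hP, Finset.card_image_of_injOn hinj, Finset.card_erase_of_mem (Finset.mem_univ _)]; simp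
  have hPs : P ⊆ Finset.univ.erase t := by
    intro r hr
    obtain ⟨j, hj, rfl⟩ := Finset.mem_image.1 hr
    simpa using hρ1 j (Finset.ne_of_mem_erase hj)
  have hQc : ((Finset.univ.erase t) \ P).card = 1 := by
    rw [Finset.card_sdiff_of_subset hPs, hPc, Finset.card_erase_of_mem (Finset.mem_univ _), card_dir]
  obtain ⟨x0, hx0⟩ := Finset.card_eq_one.1 hQc
  have hsub : ((Finset.univ.erase a).erase (v x0)).image ρ ⊆ G := by
    intro s hs
    obtain ⟨j, hj, rfl⟩ := Finset.mem_image.1 hs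
    have hj1 := Finset.ne_of_mem_erase hj
    have hj2 := Finset.ne_of_mem_erase (Finset.mem_of_mem_erase hj)
    rw [hG, Finset.mem_filter]
    refine ⟨Finset.mem_univ _, (hρ1 j hj2).symm, by rw [hρ2 j hj2]; exact hj2, fun r hrt hr => ?_⟩
    rw [hρ2 j hj2]
    by_cases hrP : r ∈ P
    · obtain ⟨i, hi, rfl⟩ := Finset.mem_image.1 hrP
      have hi2 := Finset.ne_of_mem_erase hi
      rw [hρ2 i hi2]
      rintro rfl
      exact hr rfl
    · have : r ∈ (Finset.univ.erase t) \ P := by simp [hrt, hrP]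
      rw [hx0, Finset.mem_singleton] at this
      rw [this]; exact hj1.symm
  refine le_trans ?_ (Finset.card_le_card hsub)
  rw [Finset.card_image_of_injOn (hinj.mono (by
    intro x hx
    exact Finset.mem_coe.2 (Finset.mem_of_mem_erase (Finset.mem_coe.1 hx))))]
  have := Finset.pred_card_le_card_erase (s := Finset.univ.erase a) (a := v x0)
  rw [Finset.card_erase_of_mem (Finset.mem_univ a)] at this
  simpa using this

open Classical in
lemma Tk_expand (k : ℕ) (c : Gm → Fin 5) (hst : ∀ l, l.length ≤ 2*k+1 → 0 ≤ D c l) :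
    3 * ∑ t, ind (Tk k c t) ≤ ∑ s, ind (OO (Tk k c) c s) ∧ ∑ t, ind (Tk k c t) ≤ 1 := by
  by_cases h : ∃ t, Tk k c t
  · obtain ⟨t, ht⟩ := h
    have hu : ∀ s, ind (Tk k c s) = ind (s = t) := by
      intro s
      by_cases hs : s = t
      · subst hs; rw [ind_true ht, ind_true rfl]
      · rw [ind_false hs, ind_false fun h => hs (Tk_unique k c hst s t h ht)]
    have h1 : ∑ s, ind (Tk k c s) = 1 := by
      simp_rw [hu]; unfold ind; simp
    refine ⟨?_, h1.le⟩
    rw [h1]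
    have hc := count (fun r => c (gen r)) (c 1) t (Tk_colors k c hst t ht)
    set G := (Finset.univ.filter fun s : Dir => t ≠ s ∧ c (gen s) ≠ c 1 ∧ ∀ r, r ≠ t → r ≠ s → c (gen r) ≠ c (gen s)) with hG
    have h2 : ∑ s, ind (OO (Tk k c) c s) ≥ ∑ s ∈ G, ind (OO (Tk k c) c s) :=
      Finset.sum_le_sum_of_subset_of_nonneg (Finset.subset_univ _) fun _ _ _ => ind_nonneg _
    have h3 : ∑ s ∈ G, ind (OO (Tk k c) c s) = G.card := by
      rw [Finset.card_eq_sum_ones]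
      push_cast
      refine Finset.sum_congr rfl fun s hs => ?_
      rw [hG, Finset.mem_filter] at hs
      exact ind_true ⟨t, hs.2.1, ht, hs.2.2.1, hs.2.2.2⟩
    rw [h3] at h2
    have : (3:ℤ) ≤ G.card := by exact_mod_cast hc
    linarith
  · push Not at h
    have : ∑ t, ind (Tk k c t) = 0 := Finset.sum_eq_zero fun t _ => ind_false (h t)
    rw [this]
    exact ⟨by simpa using Finset.sum_nonneg fun _ _ => ind_nonneg _, by norm_num⟩

end FC
set_option linter.unusedSectionVars false
namespace FC
section p2
variable {X : Type} [MeasurableSpace X] [MulAction Gm X] (μ : Measure X) [IsProbabilityMeasure μ]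

lemma ms_OO {T : X → Dir → Prop} (hT : ∀ t, MeasurableSet {x | T x t}) {F : X → Gm → Fin 5}
    (hF : ∀ g, Measurable fun x => F x g) (s : Dir) : MeasurableSet {x | OO (T x) (F x) s} := by
  unfold OO
  have : {x | ∃ t, t ≠ s ∧ T x t ∧ F x (gen s) ≠ F x 1 ∧ ∀ r, r ≠ t → r ≠ s → F x (gen r) ≠ F x (gen s)}
      = ⋃ t : Dir, ({x | t ≠ s} ∩ ({x | T x t} ∩ ({x | F x (gen s) = F x 1}ᶜ ∩
        ⋂ r : Dir, ({x | r ≠ t}ᶜ ∪ ({x | r ≠ s}ᶜ ∪ {x | F x (gen r) = F x (gen s)}ᶜ))))) := by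
    ext x
    simp only [Set.mem_iUnion, Set.mem_inter_iff, Set.mem_iInter, Set.mem_union, Set.mem_compl_iff,
      Set.mem_ofPred_eq, ← imp_iff_not_or]
  rw [this]
  refine MeasurableSet.iUnion fun t => (MeasurableSet.const _).inter ((hT t).inter
    ((measurableSet_eq_fun (hF _) (hF _)).compl.inter (MeasurableSet.iInter fun r =>
      (MeasurableSet.const _).compl.union ((MeasurableSet.const _).compl.union
        (measurableSet_eq_fun (hF _) (hF _)).compl))))

lemma ms_Tk (k : ℕ) {F : X → Gm → Fin 5} (hF : ∀ g, Measurable fun x => F x g) (t : Dir) :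
    MeasurableSet {x | Tk k (F x) t} := by
  induction k generalizing F t with
  | zero => exact measurableSet_eq_fun (hF _) (hF _)
  | succ k ih =>
    exact ms_OO (T := fun x => Tk k (sh5 t (F x))) (fun s => ih (F := fun x => sh5 t (F x)) (fun g => hF _) s)
      (F := fun x => sh5 t (F x)) (fun g => hF _) _

open Classical in
lemma int_ind {P : X → Prop} (h : MeasurableSet {x | P x}) :
    Integrable (fun x => (ind (P x) : ℝ)) μ := by
  refine int_of_bdd μ (F := fun x => ind (P x)) (Measurable.ite h measurable_const measurable_const) 1 fun x => ?_
  exact_mod_cast ind_abs _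

variable (hmp : ∀ g : Gm, MeasurePreserving (fun x : X => g • x) μ μ)
include hmp

open Classical in
noncomputable def Tn (f : X → Fin 5) (n : ℕ) : ℝ := ∑ t, ∫ x, (ind (Tk n (cfg f x) t) : ℝ) ∂μ

lemma Tn_zero {f : X → Fin 5} (hf : Measurable f) : Tn μ f 0 = En μ f := by
  unfold Tn En ee
  push_cast
  rw [integral_finsetSum]
  · refine Finset.sum_congr rfl fun t _ => ?_
    congr 1; funext x
    simp [Tk, cfg, ind]
  · intro t _
    exact int_of_bdd μ (meas_ind (hf.comp (hmp _).measurable) hf) 1 fun x => by exact_mod_cast ind_abs _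

lemma Tn_step {f : X → Fin 5} (hf : Measurable f) (k : ℕ) (hs : Stable μ (2*k+1) f) :
    3 * Tn μ f k ≤ Tn μ f (k+1) ∧ Tn μ f k ≤ 1 := by
  classical
  have hcm := meas_cfg μ hmp hf
  have hTi : ∀ t, Integrable (fun x => (ind (Tk k (cfg f x) t) : ℝ)) μ := fun t => int_ind μ (ms_Tk k hcm t)
  have hOi : ∀ s, Integrable (fun x => (ind (OO (Tk k (cfg f x)) (cfg f x) s) : ℝ)) μ := fun s =>
    int_ind μ (ms_OO (fun t => ms_Tk k hcm t) hcm s)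
  have hshift : ∀ t x, sh5 t (cfg f x) = cfg f (gen t • x) := by
    intro t x; funext g; simp [sh5, cfg, mul_smul]
  have h1 : Tn μ f (k+1) = ∑ s, ∫ x, (ind (OO (Tk k (cfg f x)) (cfg f x) s) : ℝ) ∂μ := by
    rw [← opp_bij.sum_comp]
    unfold Tn
    refine Finset.sum_congr rfl fun t _ => ?_
    rw [← int_shift μ hmp (hOi (opp t)) (gen t)]
    congr 1; funext x
    rw [← hshift]
    rfl
  have h2 : Tn μ f k = ∫ x, ∑ t, (ind (Tk k (cfg f x) t) : ℝ) ∂μ := by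
    rw [integral_finsetSum _ fun t _ => hTi t]
    unfold Tn
    refine Finset.sum_congr rfl fun t _ => ?_
    congr 1
  have hI := integrable_finsetSum Finset.univ fun t _ => hTi t
  constructor
  · rw [h1, h2, ← integral_finsetSum _ fun t _ => hOi t, ← integral_const_mul]
    refine integral_mono_ae (hI.const_mul 3) (integrable_finsetSum _ fun t _ => hOi t) ?_
    filter_upwards [hs] with x hx
    have := (Tk_expand k (cfg f x) hx).1
    exact_mod_cast this
  · rw [h2]
    have h3 : ∫ x, (1:ℝ) ∂μ = 1 := by simp
    rw [← h3]
    refine integral_mono_ae hI (integrable_const 1) ?_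
    filter_upwards [hs] with x hx
    have := (Tk_expand k (cfg f x) hx).2
    exact_mod_cast this

lemma partII {f : X → Fin 5} (hf : Measurable f) (k : ℕ) (hs : Stable μ (2*k+1) f) :
    3^k * En μ f ≤ 1 := by
  have h : ∀ j ≤ k, 3^j * En μ f ≤ Tn μ f j := by
    intro j hj
    induction j with
    | zero => simp [Tn_zero μ hmp hf]
    | succ j ih =>
      have h1 := ih (by omega)
      have h2 := (Tn_step μ hmp hf j (by
        filter_upwards [hs] with x hx l hl
        exact hx l (by omega))).1
      rw [pow_succ]; linarith
  exact (h k le_rfl).trans (Tn_step μ hmp hf k hs).2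

variable (hfree : ∀ F : Finset Gm, 1 ∉ F → ∀ U : Set X, MeasurableSet U → μ U ≠ 0 →
  ∃ U' ⊆ U, MeasurableSet U' ∧ μ U' ≠ 0 ∧ ∀ g ∈ F, ∀ x ∈ U', g • x ∉ U')
include hfree

lemma arith (k : ℕ) : (2*k+3 : ℝ)^2 ≤ 9 * 3^k := by
  induction k with
  | zero => norm_num
  | succ k ih =>
    rw [pow_succ 3 k]
    push_cast
    have : (0:ℝ) ≤ k := by positivity
    nlinarith

lemma partII' (f0 : X → Fin 5) (hf0 : Measurable f0) :
    ∃ g : X → Fin 5, Measurable g ∧ En μ g = 0 ∧ dd μ f0 g ≤ 6 * √(En μ f0) := by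
  obtain ⟨g, hg, hd, hmin⟩ := ekeland μ (fun f : X → Fin 5 => 6 * √(En μ f))
    (fun f _ => by positivity)
    (fun f g hf hg h => ((En_tendsto μ hmp f g hf hg h).sqrt).const_mul _)
    f0 hf0
  have hE0 := En_nonneg μ hmp g
  have hstab : ∀ k : ℕ, (2*k+1 : ℝ)^2 * En μ g ≤ 9 → 3^k * En μ g ≤ 1 := by
    intro k hk
    refine partII μ hmp hg k (stable_of_min μ hmp hfree _ g hg ?_)
    intro h hh hdh
    have hF0 := En_nonneg μ hmp h
    have hdn := dd_nonneg μ g h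
    have ha := Real.sqrt_nonneg (En μ g)
    have hb := Real.sqrt_nonneg (En μ h)
    have ha2 := Real.sq_sqrt hE0
    have hb2 := Real.sq_sqrt hF0
    push_cast at hdh
    have hm : (0:ℝ) < 2*k+1 := by positivity
    have hle : En μ h ≤ En μ g := by
      by_contra hc
      push Not at hc
      nlinarith
    have hba : √(En μ h) ≤ √(En μ g) := Real.sqrt_le_sqrt hle
    have hma : (2*k+1 : ℝ) * √(En μ g) ≤ 3 := by
      apply le_of_sq_le_sq _ (by norm_num : (0:ℝ) ≤ 3)
      rw [mul_pow, ha2]; linarith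
    have := hmin h hh (by
      refine hdh.trans ?_
      rw [← ha2, ← hb2]
      rw [Real.sqrt_sq ha, Real.sqrt_sq hb]
      have h5 : (2*k+1 : ℝ) * (√(En μ g) + √(En μ h)) ≤ 6 := by nlinarith
      nlinarith)
    have h6 : √(En μ h) = √(En μ g) := by linarith
    rw [← ha2, ← hb2, h6]
  have hall : ∀ k : ℕ, (2*k+1 : ℝ)^2 * En μ g ≤ 9 := by
    intro k
    induction k with
    | zero =>
      have : En μ g ≤ 6 := by
        have h3 : ∫ x, (6:ℝ) ∂μ = 6 := by simp
        rw [← h3]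
        exact integral_mono (int_ee μ hmp hg) (integrable_const 6) fun x => (le_abs_self _).trans (ee_bound μ hmp g x)
      norm_num; linarith
    | succ k ih =>
      have h1 := hstab k ih
      have h2 := arith μ hmp hfree k
      push_cast
      have h3 : (2 * ((k:ℝ)+1) + 1)^2 * En μ g ≤ 9 * 3^k * En μ g :=
        mul_le_mul_of_nonneg_right (by ring_nf at h2 ⊢; exact h2) hE0
      nlinarith
  refine ⟨g, hg, ?_, ?_⟩
  · by_contra hne
    have hpos : 0 < En μ g := lt_of_le_of_ne hE0 (Ne.symm hne)
    obtain ⟨n, hn⟩ := exists_nat_gt (9 / En μ g)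
    rw [div_lt_iff₀ hpos] at hn
    have := hall n
    have hn0 : (0:ℝ) ≤ n := by positivity
    nlinarith [mul_nonneg hn0 hpos.le, mul_nonneg (mul_nonneg hn0 hn0) hpos.le]
  · have := Real.sqrt_nonneg (En μ g)
    linarith

theorem main_abstract (ε : ℝ) (hε : 0 < ε) :
    ∃ f : X → Fin 5, Measurable f ∧ (∀ᵐ x ∂μ, ∀ t : Dir, f (gen t • x) ≠ f x) ∧
      μ {x | f x = 4} < ENNReal.ofReal ε := by
  obtain ⟨n, hn⟩ := exists_nat_gt (216 / ε^2)
  have hε2 : 0 < ε^2 := by positivity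
  have hn0 : (0:ℝ) < n := lt_of_le_of_lt (by positivity) hn
  obtain ⟨f4, hf4, hE4⟩ := partI' μ hmp hfree n
  have hf0 : Measurable (fun x => Fin.castSucc (f4 x)) := (measurable_of_countable _).comp hf4
  obtain ⟨g, hg, hE, hd⟩ := partII' μ hmp hfree (fun x => Fin.castSucc (f4 x)) hf0
  have hEe : En μ (fun x => Fin.castSucc (f4 x)) = En μ f4 := by
    unfold En ee
    simp [ind]
  rw [hEe] at hd
  refine ⟨g, hg, ?_, ?_⟩
  · have h0 : (fun x => (ee g x : ℝ)) =ᵐ[μ] 0 := by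
      refine (integral_eq_zero_iff_of_nonneg (fun x => ?_) (int_ee μ hmp hg)).1 hE
      have h0 : 0 ≤ ee g x := Finset.sum_nonneg fun _ _ => ind_nonneg _
      show (0:ℝ) ≤ (ee g x : ℝ)
      exact_mod_cast h0
    filter_upwards [h0] with x hx t ht
    have hx' : ee g x = 0 := by
      have : (ee g x : ℝ) = 0 := hx
      exact_mod_cast this
    have h1 := (Finset.sum_eq_zero_iff_of_nonneg (fun _ _ => ind_nonneg _)).1 hx' t (Finset.mem_univ t)
    rw [ind_true ht] at h1
    exact one_ne_zero h1
  · have h1 : μ.real {x | g x = 4} ≤ dd μ (fun x => Fin.castSucc (f4 x)) g := by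
      refine measureReal_mono ?_
      intro x hx
      have hx' : g x = 4 := hx
      show Fin.castSucc (f4 x) ≠ g x
      rw [hx']
      exact (Fin.castSucc_lt_last (f4 x)).ne
    have h2 : 6 * √(En μ f4) < ε := by
      have hE0 := En_nonneg μ hmp f4
      have hs := Real.sq_sqrt hE0
      refine lt_of_pow_lt_pow_left₀ 2 hε.le ?_
      rw [mul_pow, hs]
      rw [div_lt_iff₀ hε2] at hn
      have : n * (36 * En μ f4) < n * ε^2 := by linarith
      have := lt_of_mul_lt_mul_left this hn0.le
      linarith
    rw [← ofReal_measureReal]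
    exact (ENNReal.ofReal_lt_ofReal_iff hε).2 (by linarith)
end p2
end FC
set_option linter.unusedSectionVars false
namespace FC

@[reducible] def act : MulAction Gm (Gm → ℝ) where
  smul γ x := fun δ => x (γ⁻¹ * δ)
  one_smul x := by funext δ; show x (1⁻¹ * δ) = x δ; simp
  mul_smul a b x := by
    funext δ; show x ((a*b)⁻¹ * δ) = x (b⁻¹ * (a⁻¹ * δ)); simp [mul_assoc]

end FC

open FC in
theorem bernoulli_shift_F3_five_coloring
    (μ : Measure (FreeGroup (Fin 3) → ℝ)) [IsProbabilityMeasure μ]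
    (hμ : ∀ s : Finset (FreeGroup (Fin 3)),
      Measure.map (fun (x : FreeGroup (Fin 3) → ℝ) (v : s) => x v) μ
        = Measure.pi (fun _ : s => volume.restrict (Set.Icc (0:ℝ) 1)))
    (ε : ℝ) (hε : 0 < ε) :
    ∃ f : (FreeGroup (Fin 3) → ℝ) → Fin 5,
      Measurable f ∧
      (∀ᵐ x ∂μ, ∀ s : FreeGroup (Fin 3),
        (∃ i : Fin 3, s = FreeGroup.of i ∨ s = (FreeGroup.of i)⁻¹) →
          f (fun δ => x (s⁻¹ * δ)) ≠ f x) ∧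
      μ {x | f x = 4} < ENNReal.ofReal ε := by
  classical
  let _ := act
  let ν : Measure ℝ := volume.restrict (Set.Icc (0:ℝ) 1)
  have hν : IsProbabilityMeasure ν := ⟨by simp [ν]⟩
  have hsm : ∀ (g : Gm) (x : Gm → ℝ), g • x = fun δ => x (g⁻¹ * δ) := fun _ _ => rfl
  have hinf : μ = Measure.infinitePi (fun _ : Gm => ν) :=
    (Measure.isProjectiveLimit_infinitePi (fun _ : Gm => ν)).unique (fun s => hμ s) |>.symm
  have hmp : ∀ g : Gm, MeasurePreserving (fun x : Gm → ℝ => g • x) μ μ := by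
    intro g
    have hm : Measurable (fun x : Gm → ℝ => g • x) := by
      simp only [hsm]
      exact measurable_pi_lambda _ fun δ => measurable_pi_apply _
    refine ⟨hm, ?_⟩
    rw [hinf]
    exact Measure.map_infinitePi_infinitePi_of_inj (P := fun _ : Gm => ν) (f := fun δ => g⁻¹ * δ)
      (mul_right_injective g⁻¹)
  have hpair : ∀ γ : Gm, γ ≠ 1 → ∀ᵐ x ∂μ, x 1 ≠ x γ := by
    intro γ hγ
    have h2 := Measure.infinitePi_map_eval_prod (P := fun _ : Gm => ν) hγ.symm
    rw [← hinf] at h2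
    have hd : (ν.prod ν) {p : ℝ × ℝ | p.1 = p.2} = 0 := by
      rw [Measure.measure_prod_null (measurableSet_eq_fun measurable_fst measurable_snd)]
      refine Filter.Eventually.of_forall fun a => ?_
      have : Prod.mk a ⁻¹' {p : ℝ × ℝ | p.1 = p.2} = {a} := by
        ext b; simp [eq_comm]
      show ν (Prod.mk a ⁻¹' {p : ℝ × ℝ | p.1 = p.2}) = 0
      rw [this]; simp [ν]
    rw [← h2, Measure.map_apply (by fun_prop) (measurableSet_eq_fun measurable_fst measurable_snd)] at hd
    exact measure_eq_zero_iff_ae_notMem.1 hd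
  have hfree : ∀ F : Finset Gm, 1 ∉ F → ∀ U : Set (Gm → ℝ), MeasurableSet U → μ U ≠ 0 →
      ∃ U' ⊆ U, MeasurableSet U' ∧ μ U' ≠ 0 ∧ ∀ g ∈ F, ∀ x ∈ U', g • x ∉ U' := by
    intro F hF U hU hU0
    let Y : Set ℝ → Set (Gm → ℝ) := fun B => U ∩ ({x | x 1 ∈ B} ∩ ⋂ g ∈ F, {x | x g⁻¹ ∈ B}ᶜ)
    have hae : ∀ᵐ x ∂μ, ∀ g ∈ F, x 1 ≠ x g⁻¹ := by
      refine (ae_ball_iff F.countable_toSet).2 fun g hg => hpair _ ?_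
      intro h
      exact hF (by rw [← inv_eq_one.1 h]; exact hg)
    have hex : ∃ B ∈ TopologicalSpace.countableBasis ℝ, μ (Y B) ≠ 0 := by
      by_contra hcon
      push Not at hcon
      have h0 : μ (⋃ B ∈ TopologicalSpace.countableBasis ℝ, Y B) = 0 :=
        (measure_biUnion_null_iff (TopologicalSpace.countable_countableBasis ℝ)).2 hcon
      apply hU0
      rw [measure_eq_zero_iff_ae_notMem]
      filter_upwards [hae, measure_eq_zero_iff_ae_notMem.1 h0] with x hx hx' hxU
      apply hx'
      have hop : IsOpen (((F.image fun g => x g⁻¹ : Finset ℝ) : Set ℝ)ᶜ) := (Finset.finite_toSet _).isClosed.isOpen_compl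
      obtain ⟨B, hB, hxB, hBs⟩ := (TopologicalSpace.isBasis_countableBasis ℝ).exists_subset_of_mem_open
        (a := x 1) (by
          simp only [Set.mem_compl_iff, Finset.mem_coe, Finset.mem_image, not_exists, not_and]
          exact fun g hg h => hx g hg h.symm) hop
      refine Set.mem_biUnion hB ⟨hxU, hxB, ?_⟩
      simp only [Set.mem_iInter]
      intro g hg hgB
      exact hBs hgB (Finset.mem_coe.2 (Finset.mem_image.2 ⟨g, hg, rfl⟩))
    obtain ⟨B, hB, hB0⟩ := hex
    have hBm : MeasurableSet B := ((TopologicalSpace.isBasis_countableBasis ℝ).isOpen hB).measurableSet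
    refine ⟨Y B, Set.inter_subset_left, ?_, hB0, ?_⟩
    · have hev : ∀ g : Gm, MeasurableSet {x : Gm → ℝ | x g ∈ B} := fun g =>
        (measurable_pi_apply (X := fun _ : Gm => ℝ) g) hBm
      exact hU.inter ((hev _).inter (Finset.measurableSet_biInter _ fun g _ => (hev _).compl))
    · intro g hg x hx hgx
      have h1 : x g⁻¹ ∈ B := by
        have : (g • x) 1 ∈ B := hgx.2.1
        simpa [hsm] using this
      have h2 := hx.2.2
      simp only [Set.mem_iInter] at h2
      exact h2 g hg h1
  obtain ⟨f, hf, hp, hε'⟩ := main_abstract μ hmp hfree ε hε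
  refine ⟨f, hf, ?_, hε'⟩
  filter_upwards [hp] with x hx s hs
  obtain ⟨i, rfl | rfl⟩ := hs
  · exact hx (i, true)
  · have := hx (i, false)
    have h2 : gen (i, false) = (FreeGroup.of i)⁻¹ := gen_opp (i, true)
    rw [h2] at this
    exact this
end

section
/- For every ε > 0 there exists a measurable map f : X → Fin 4 such that μ({x : ∃ s ∈ S, f(s • x) = f(x)}) < ε. (The Bernoulli shift of F_3, equivalently the 6-regular tree, admits approximate measurable 4-colorings.) -/
open MeasureTheory

namespace FourCol

abbrev E := Fin 3 × Bool
abbrev Gam := FreeGroup (Fin 3)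
abbrev Col := Option (Fin 4)

def inv (e : E) : E := (e.1, !e.2)
def g (e : E) : Gam := FreeGroup.mk [e]
def ev (l : List E) : Gam := FreeGroup.mk l.reverse

theorem inv_inv (e : E) : inv (inv e) = e := by simp [inv]
theorem inv_ne (e : E) : inv e ≠ e := by rcases e with ⟨i, b⟩; cases b <;> simp [inv]
theorem g_inv (e : E) : g (inv e) = (g e)⁻¹ := by simp [g, inv, FreeGroup.inv_mk, FreeGroup.invRev]
theorem ev_nil : ev [] = 1 := rfl
theorem ev_cons (t : E) (l : List E) : ev (t :: l) = ev l * g t := by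
  simp [ev, g]
theorem ev_snoc (t : E) (l : List E) : ev (l ++ [t]) = g t * ev l := by
  simp [ev, g]

def Valid : Option E → List E → Prop
  | _, [] => True
  | e, t :: l => some t ≠ e ∧ Valid (some (inv t)) l

theorem valid_snoc_snoc (e : Option E) (l : List E) (t s : E) :
    Valid e (l ++ [t] ++ [s]) ↔ Valid e (l ++ [t]) ∧ s ≠ inv t := by
  induction l generalizing e with
  | nil => simp [Valid]
  | cons a l ih => 
    simp only [List.cons_append, Valid] at ih ⊢
    rw [ih]; tauto

theorem valid_init (e : Option E) (l l' : List E) (h : Valid e (l ++ l')) : Valid e l := by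
  induction l generalizing e with
  | nil => simp [Valid]
  | cons a l ih => 
    simp only [List.cons_append, Valid] at h ⊢
    exact ⟨h.1, ih _ h.2⟩

theorem valid_chain (e : Option E) (l : List E) (h : Valid e l) :
    List.IsChain (fun a b : E => b ≠ inv a) l := by
  induction l generalizing e with
  | nil => simp
  | cons a l ih =>
    cases l with
    | nil => simp
    | cons b l =>
      rw [List.isChain_cons_cons]
      refine ⟨?_, ih _ h.2⟩
      have := h.2.1
      simpa using this

theorem ev_inj (l l' : List E) (h : Valid none l) (h' : Valid none l') (hh : ev l = ev l') :
    l = l' := by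
  have key : ∀ l : List E, Valid none l → FreeGroup.IsReduced l.reverse := by
    intro l h
    have := valid_chain _ _ h
    rw [FreeGroup.IsReduced, List.isChain_reverse]
    refine this.imp ?_
    rintro ⟨a, b⟩ ⟨c, d⟩ hab
    simp only [inv, ne_eq, Prod.mk.injEq, not_and] at hab ⊢
    intro h1
    have := hab h1
    revert this; cases b <;> cases d <;> simp
  have h1 := (key l h).reduce_eq
  have h2 := (key l' h').reduce_eq
  have : l.reverse = l'.reverse := by
    rw [← h1, ← h2]
    have := congrArg FreeGroup.toWord hh
    simpa [ev] using this
  simpa using this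

def W : ℕ → Option E → Finset (List E)
  | 0, _ => {[]}
  | n + 1, e => insert [] ((Finset.univ.filter (fun t : E => some t ≠ e)).biUnion
      (fun t => (W n (some (inv t))).image (List.cons t)))

theorem mem_W (n : ℕ) (e : Option E) (l : List E) : l ∈ W n e ↔ Valid e l ∧ l.length ≤ n := by
  induction n generalizing e l with
  | zero => cases l <;> simp [W, Valid]
  | succ n ih =>
    cases l with
    | nil => simp [W, Valid]
    | cons t l => simp [W, Valid, ih]; tauto

def holes (n : ℕ) (e : Option E) (c : List E → Col) : ℕ :=
  ∑ l ∈ W n e, if c l = none then 1 else 0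

def comb (a : Col) (d : E → List E → Col) : List E → Col
  | [] => a
  | t :: l => d t l

theorem holes_succ (n : ℕ) (e : Option E) (c : List E → Col) :
    holes (n + 1) e c = (if c [] = none then 1 else 0) +
      ∑ t ∈ Finset.univ.filter (fun t : E => some t ≠ e),
        holes n (some (inv t)) (fun l => c (t :: l)) := by
  unfold holes
  rw [W, Finset.sum_insert, Finset.sum_biUnion]
  · congr 1
    refine Finset.sum_congr rfl fun t _ => ?_
    rw [Finset.sum_image]
    intro a _ b _ h
    simpa using h
  · intro s _ t _ hst
    simp only [Function.onFun, Finset.disjoint_left, Finset.mem_image, not_exists, not_and]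
    rintro _ ⟨l, _, rfl⟩ l' _ h
    simp at h
    exact hst h.1.symm
  · simp

def Pr (e : Option E) (c : List E → Col) : Prop :=
  ∀ l t, Valid e (l ++ [t]) → c l = c (l ++ [t]) → c l = none

variable {X : Type*} [MulAction Gam X] (f : X → Col)

def F (x : X) (l : List E) : Col := f (ev l • x)

theorem F_nil (x : X) : F f x [] = f x := by simp [F, ev_nil]
theorem F_cons (x : X) (t : E) (l : List E) : F f x (t :: l) = F f (g t • x) l := by
  simp [F, ev_cons, mul_smul]

def Proper : Prop := ∀ x e, f x = f (g e • x) → f x = none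

def Good (n : ℕ) (e : Option E) (x : X) (c : List E → Col) : Prop :=
  Pr e c ∧ ∀ l, n < l.length → c l = F f x l

theorem good_F (hf : Proper f) (n : ℕ) (e : Option E) (x : X) : Good f n e x (F f x) := by
  refine ⟨fun l t _ h => ?_, fun _ _ => rfl⟩
  simp only [F, ev_snoc, mul_smul] at h ⊢
  exact hf _ _ h

theorem good_comb (n : ℕ) (e : Option E) (x : X) (a : Col) (d : E → List E → Col)
    (hd : ∀ t, some t ≠ e → Good f n (some (inv t)) (g t • x) (d t))
    (ha : ∀ t, some t ≠ e → a = d t [] → a = none)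
    (hd' : ∀ t, some t = e → d t = F f (g t • x)) :
    Good f (n + 1) e x (comb a d) := by
  constructor
  · intro l t hv h
    cases l with
    | nil => exact ha t hv.1 h
    | cons s l => exact (hd s hv.1).1 l t hv.2 h
  · intro l hl
    cases l with
    | nil => simp at hl
    | cons s l =>
      rw [F_cons]
      by_cases hs : some s = e
      · simp [comb, hd' s hs]
      · exact (hd s hs).2 l (by simpa using hl)

def act : ℕ → X → E → Prop
  | 0, _, _ => False
  | n + 1, x, e => (f x = none ∨ ∃ t, t ≠ e ∧ act n (g t • x) (inv t)) ∧ f (g e • x) ≠ none ∧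
      ∀ t, t ≠ e → ¬ act n (g t • x) (inv t) → f (g t • x) ≠ f (g e • x)

def Fill (n : ℕ) (x : X) : Prop :=
  (f x = none ∨ ∃ t, act f n (g t • x) (inv t)) ∧
    ∃ c : Fin 4, some c ≠ f x ∧ ∀ t, ¬ act f n (g t • x) (inv t) → f (g t • x) ≠ some c

def IH (n : ℕ) : Prop := ∀ (x : X) e, act f n x e →
  (∃ c, Good f n (some e) x c ∧ c [] = none ∧ holes n (some e) c ≤ holes n (some e) (F f x)) ∧
  (∃ c, Good f n (some e) x c ∧ c [] = f (g e • x) ∧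
    holes n (some e) c + 1 ≤ holes n (some e) (F f x))

theorem inv_smul_g (t : E) (x : X) : g (inv t) • g t • x = x := by
  rw [g_inv]; simp

theorem core (hf : Proper f) (n : ℕ) (ih : IH f n) (x : X) (e : Option E)
    (h : f x = none ∨ ∃ t, some t ≠ e ∧ act f n (g t • x) (inv t)) (k : Fin 4)
    (hk : some k ≠ f x)
    (hk' : ∀ t, some t ≠ e → ¬ act f n (g t • x) (inv t) → f (g t • x) ≠ some k) :
    ∃ c, Good f (n + 1) e x c ∧ c [] = some k ∧
      holes (n + 1) e c + 1 ≤ holes (n + 1) e (F f x) := by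
  classical
  have hV : ∀ t, ∃ c, Good f n (some (inv t)) (g t • x) c ∧
      (some t ≠ e → c [] ≠ some k) ∧
      holes n (some (inv t)) c ≤ holes n (some (inv t)) (F f (g t • x)) ∧
      (some t = e → c = F f (g t • x)) := by
    intro t
    by_cases ht : some t ≠ e ∧ act f n (g t • x) (inv t)
    · obtain ⟨⟨c, h1, h2, h3⟩, _⟩ := ih _ _ ht.2
      exact ⟨c, h1, by simp [h2], h3, fun h => absurd h ht.1⟩
    · refine ⟨F f (g t • x), good_F f hf _ _ _, fun h => ?_, le_rfl, fun _ => rfl⟩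
      rw [F_nil]
      exact hk' t h (fun h' => ht ⟨h, h'⟩)
  choose dV hV1 hV2 hV3 hV4 using hV
  rcases hx : f x with _ | i
  · refine ⟨comb (some k) dV, good_comb f n e x _ _ (fun t _ => hV1 t)
      (fun t ht h => absurd h.symm (hV2 t ht)) (fun t ht => hV4 t ht), rfl, ?_⟩
    rw [holes_succ, holes_succ]
    simp only [comb, F_nil, hx, F_cons]
    have : ∑ t ∈ Finset.univ.filter (fun t : E => some t ≠ e), holes n (some (inv t)) (dV t) ≤
      ∑ t ∈ Finset.univ.filter (fun t : E => some t ≠ e),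
        holes n (some (inv t)) (F f (g t • x)) := Finset.sum_le_sum fun t _ => hV3 t
    have e1 : ∀ t, (fun l => dV t l) = dV t := fun _ => rfl
    have e2 : ∀ t, (fun l => F f (g t • x) l) = F f (g t • x) := fun _ => rfl
    simp only [e1, e2]
    simp
    simp at this
    omega
  · obtain ⟨t1, ht1, hact⟩ : ∃ t, some t ≠ e ∧ act f n (g t • x) (inv t) := by
      rcases h with h | h
      · simp [hx] at h
      · exact h
    obtain ⟨_, ⟨c1, h1, h2, h3⟩⟩ := ih _ _ hact
    rw [inv_smul_g] at h2
    refine ⟨comb (some k) (Function.update dV t1 c1), good_comb f n e x _ _ (fun t _ => ?_)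
      (fun t ht h => ?_) (fun t ht => ?_), rfl, ?_⟩
    · by_cases htt : t = t1
      · subst htt; simpa using h1
      · simpa [htt] using hV1 t
    · by_cases htt : t = t1
      · subst htt; simp [h2] at h; exact absurd h hk
      · simp [htt] at h; exact absurd h.symm (hV2 t ht)
    · by_cases htt : t = t1
      · subst htt; exact absurd ht ht1
      · simpa [htt] using hV4 t ht
    rw [holes_succ, holes_succ]
    simp only [comb, F_nil, hx, F_cons]
    have : ∑ t ∈ Finset.univ.filter (fun t : E => some t ≠ e), holes n (some (inv t)) (Function.update dV t1 c1 t) <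
      ∑ t ∈ Finset.univ.filter (fun t : E => some t ≠ e),
        holes n (some (inv t)) (F f (g t • x)) := by
      apply Finset.sum_lt_sum
      · intro t _
        by_cases htt : t = t1
        · subst htt; simp; omega
        · simpa [htt] using hV3 t
      · exact ⟨t1, by simp [ht1], by simp; omega⟩
    have e2 : ∀ t, (fun l => F f (g t • x) l) = F f (g t • x) := fun _ => rfl
    simp only [e2]
    simp
    simp at this
    omega

theorem ih_all (hf : Proper f) (n : ℕ) : IH f n := by
  classical
  induction n with
  | zero => intro x e h; exact absurd h (by simp [act])
  | succ n ih =>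
    intro x e h
    obtain ⟨h0, h1, h2⟩ := h
    constructor
    · rcases hx : f x with _ | i
      · exact ⟨F f x, good_F f hf _ _ _, by simp [F_nil, hx], le_rfl⟩
      · obtain ⟨t1, ht1, hact⟩ : ∃ t, t ≠ e ∧ act f n (g t • x) (inv t) := by
          rcases h0 with h | h
          · simp [hx] at h
          · exact h
        obtain ⟨_, ⟨c1, h1, h2, h3⟩⟩ := ih _ _ hact
        refine ⟨comb none (Function.update (fun t => F f (g t • x)) t1 c1),
          good_comb f n _ x _ _ (fun t _ => ?_) (fun t ht h => rfl) (fun t ht => ?_), rfl, ?_⟩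
        · by_cases htt : t = t1
          · subst htt; simpa using h1
          · simpa [htt] using good_F f hf _ _ _
        · by_cases htt : t = t1
          · subst htt; simp at ht; exact absurd ht ht1
          · simp [htt]
        rw [holes_succ, holes_succ]
        simp only [comb, F_nil, hx, F_cons]
        have : ∑ t ∈ Finset.univ.filter (fun t : E => some t ≠ some e), holes n (some (inv t))
            (Function.update (fun t => F f (g t • x)) t1 c1 t) <
          ∑ t ∈ Finset.univ.filter (fun t : E => some t ≠ some e),
            holes n (some (inv t)) (F f (g t • x)) := by
          apply Finset.sum_lt_sum
          · intro t _
            by_cases htt : t = t1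
            · subst htt; simp; omega
            · simp [htt]
          · exact ⟨t1, by simp [ht1], by simp; omega⟩
        have e1 : ∀ t, (fun l => Function.update (fun t => F f (g t • x)) t1 c1 t l) =
          Function.update (fun t => F f (g t • x)) t1 c1 t := fun _ => rfl
        have e2 : ∀ t, (fun l => F f (g t • x) l) = F f (g t • x) := fun _ => rfl
        simp only [e1, e2]
        simp
        simp at this
        omega
    · obtain ⟨k, hk⟩ := Option.ne_none_iff_exists'.1 h1
      have := core f hf n ih x (some e) (by simpa using h0) k
        (by
          intro h
          have := hf x e (by rw [hk, h])
          rw [← h] at this; simp at this)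
        (by intro t ht h; rw [← hk]; exact h2 t (by simpa using ht) h)
      rw [hk]; exact this

theorem fill_aug (hf : Proper f) (n : ℕ) (x : X) (h : Fill f n x) :
    ∃ c, Good f (n + 1) none x c ∧ holes (n + 1) none c + 1 ≤ holes (n + 1) none (F f x) := by
  obtain ⟨h0, k, hk, hk'⟩ := h
  obtain ⟨c, h1, _, h2⟩ := core f hf n (ih_all f hf n) x none (by simpa using h0) k hk
    (fun t _ h => hk' t h)
  exact ⟨c, h1, h2⟩

/-- Counting unique colours. -/
theorem count_unique (s : Finset E) (T : Finset (Fin 4)) (φ : E → Col)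
    (hT : ∀ c ∈ T, ∃ t ∈ s, φ t = some c) :
    2 * T.card ≤ s.card + (s.filter (fun e => φ e ≠ none ∧
      ∀ t ∈ s, t ≠ e → φ t ≠ φ e)).card := by
  classical
  set U := s.filter (fun e => φ e ≠ none ∧ ∀ t ∈ s, t ≠ e → φ t ≠ φ e)
  let A : Fin 4 → Finset E := fun c => s.filter (fun t => φ t = some c)
  have hdisj : ∀ R : E → Prop, [DecidablePred R] →
      ∑ c ∈ T, ((A c).filter R).card ≤ (s.filter R).card := by
    intro R _
    rw [← Finset.card_biUnion]
    · apply Finset.card_le_card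
      intro t
      simp only [Finset.mem_biUnion, A, Finset.mem_filter]
      rintro ⟨c, _, h1, h2⟩
      exact ⟨h1.1, h2⟩
    · intro a _ b _ hab
      simp only [Function.onFun]
      rw [Finset.disjoint_left]
      intro t
      simp only [A, Finset.mem_filter]
      rintro ⟨⟨_, h1⟩, _⟩ ⟨⟨_, h2⟩, _⟩
      rw [h1] at h2
      exact hab (by simpa using h2)
  have h1 : ∑ c ∈ T, (A c).card ≤ s.card := by
    have := hdisj (fun _ => True)
    simpa using this
  have h2 : ∑ c ∈ T, ((A c).filter (fun e => φ e ≠ none ∧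
      ∀ t ∈ s, t ≠ e → φ t ≠ φ e)).card ≤ U.card := hdisj _
  have h3 : ∀ c ∈ T, 2 ≤ (A c).card + ((A c).filter (fun e => φ e ≠ none ∧
      ∀ t ∈ s, t ≠ e → φ t ≠ φ e)).card := by
    intro c hc
    obtain ⟨t, hts, ht⟩ := hT c hc
    have htA : t ∈ A c := by simp [A, hts, ht]
    by_cases hu : ∀ t' ∈ s, t' ≠ t → φ t' ≠ φ t
    · have a1 : 0 < (A c).card := Finset.card_pos.2 ⟨t, htA⟩
      have a2 : 0 < ((A c).filter (fun e => φ e ≠ none ∧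
        ∀ t ∈ s, t ≠ e → φ t ≠ φ e)).card :=
        Finset.card_pos.2 ⟨t, by rw [Finset.mem_filter]; exact ⟨htA, by simp [ht], hu⟩⟩
      omega
    · push Not at hu
      obtain ⟨t', h1, h2, h3⟩ := hu
      have : 1 < (A c).card :=
        Finset.one_lt_card.2 ⟨t', by simp [A, h1, h3, ht], t, htA, h2⟩
      omega
  have h4 := Finset.sum_le_sum h3
  rw [Finset.sum_add_distrib] at h4
  simp at h4
  simp at h2
  omega

open Classical in
theorem flow (n : ℕ) (x : X) :
    (∑ t : E, if act f n (g t • x) (inv t) then 1 else 0) + 2 * (if f x = none then 1 else 0) ≤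
    (∑ e : E, if act f (n + 1) x e then 1 else 0) + 8 * (if Fill f n x then 1 else 0) := by
  set P := Finset.univ.filter (fun t : E => act f n (g t • x) (inv t)) with hP
  have hmem : ∀ t, t ∈ P ↔ act f n (g t • x) (inv t) := by simp [hP]
  rw [← Finset.card_filter, ← Finset.card_filter, ← hP]
  have hPc : P.card ≤ 6 := by
    have := Finset.card_le_univ P
    simpa using this
  by_cases hF : Fill f n x
  · simp only [hF, if_true]
    split_ifs <;> omega
  by_cases h0 : f x = none ∨ ∃ t, act f n (g t • x) (inv t)
  swap
  · push Not at h0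
    have : P = ∅ := by
      rw [hP, Finset.filter_eq_empty_iff]; intro t _; exact h0.2 t
    simp [this, h0.1]
  · have hall : ∀ c : Fin 4, some c ≠ f x → ∃ t ∈ Pᶜ, f (g t • x) = some c := by
      intro c hc
      by_contra hcon
      push Not at hcon
      exact hF ⟨h0, c, hc, fun t ht => hcon t (by rw [Finset.mem_compl, hmem]; exact ht)⟩
    have hc := count_unique Pᶜ (Finset.univ.filter (fun c => some c ≠ f x))
      (fun t => f (g t • x)) (by intro c hc; exact hall c (by simpa using hc))
    have hsub : (Pᶜ.filter (fun e => f (g e • x) ≠ none ∧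
      ∀ t ∈ Pᶜ, t ≠ e → f (g t • x) ≠ f (g e • x))) ⊆
      Finset.univ.filter (fun e => act f (n + 1) x e) := by
      intro e he
      simp only [Finset.mem_filter, Finset.mem_compl, hmem, Finset.mem_univ, true_and] at he ⊢
      refine ⟨?_, he.2.1, fun t h1 h2 => he.2.2 t h2 h1⟩
      rcases h0 with h | ⟨t, ht⟩
      · exact Or.inl h
      · exact Or.inr ⟨t, fun h => he.1 (h ▸ ht), ht⟩
    have hle := Finset.card_le_card hsub
    have hcc : Pᶜ.card = 6 - P.card := by
      rw [Finset.card_compl]; simp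
    have hT : (Finset.univ.filter (fun c : Fin 4 => some c ≠ f x)).card =
        3 + (if f x = none then 1 else 0) := by
      rcases f x with _ | i
      · simp
      · revert i; decide
    rw [hT] at hc
    split_ifs at hc ⊢ <;> omega


instance : MeasurableSpace Col := ⊤
instance : DiscreteMeasurableSpace Col := ⟨fun _ => trivial⟩

section measure
variable [MeasurableSpace X] (μ : Measure X) [IsProbabilityMeasure μ]

open Classical in
theorem int_key {ι : Type*} [Fintype ι] (a : ι → ℝ) (A : ι → Set X)
    (hA : ∀ i, MeasurableSet (A i)) :
    Integrable (fun x => ∑ i, a i * (if x ∈ A i then (1:ℝ) else 0)) μ ∧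
      ∫ x, ∑ i, a i * (if x ∈ A i then (1:ℝ) else 0) ∂μ = ∑ i, a i * μ.real (A i) := by
  have e : ∀ i, (fun x => a i * (if x ∈ A i then (1:ℝ) else 0)) =
      fun x => a i * (A i).indicator 1 x := by
    intro i; ext x; simp [Set.indicator_apply]
  have hi : ∀ i, Integrable (fun x => a i * (if x ∈ A i then (1:ℝ) else 0)) μ := by
    intro i
    rw [e]
    exact ((integrable_const (1:ℝ)).indicator (hA i)).const_mul _
  refine ⟨integrable_finsetSum _ fun i _ => hi i, ?_⟩
  rw [integral_finsetSum _ fun i _ => hi i]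
  refine Finset.sum_congr rfl fun i _ => ?_
  rw [e, integral_const_mul, integral_indicator_one (hA i)]

open Classical in
theorem int_le {ι κ : Type*} [Fintype ι] [Fintype κ] (a : ι → ℝ) (b : κ → ℝ)
    (A : ι → Set X) (B : κ → Set X) (hA : ∀ i, MeasurableSet (A i)) (hB : ∀ i, MeasurableSet (B i))
    (h : ∀ x, ∑ i, a i * (if x ∈ A i then 1 else 0) ≤ ∑ i, b i * (if x ∈ B i then 1 else 0)) :
    ∑ i, a i * μ.real (A i) ≤ ∑ i, b i * μ.real (B i) := by
  have k1 := int_key μ a A hA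
  have k2 := int_key μ b B hB
  rw [← k1.2, ← k2.2]
  exact integral_mono k1.1 k2.1 h

variable (hmp : ∀ γ : Gam, MeasurePreserving (fun x : X => γ • x) μ μ)
include hmp

theorem meas_act (hf : Measurable f) (n : ℕ) (e : E) : MeasurableSet {x | act f n x e} := by
  have hm : ∀ t : Gam, Measurable fun x : X => t • x := fun t => (hmp t).measurable
  induction n generalizing e with
  | zero => simp [act]
  | succ n ih =>
    have ih' : ∀ t, MeasurableSet {x | act f n (g t • x) (inv t)} := fun t => hm (g t) (ih (inv t))
    have h1 : MeasurableSet {x | f x = none} := hf (measurableSet_singleton none)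
    have h2 : ∀ t, MeasurableSet {x | f (g t • x) = none} := fun t => hm (g t) h1
    have h3 : ∀ t, MeasurableSet {x | f (g t • x) = f (g e • x)} := fun t =>
      measurableSet_eq_fun (hf.comp (hm _)) (hf.comp (hm _))
    simp only [act]
    refine MeasurableSet.inter (MeasurableSet.union h1 ?_) (MeasurableSet.inter (h2 e).compl ?_)
    · have : {x | ∃ t, t ≠ e ∧ act f n (g t • x) (inv t)} =
        ⋃ t, ⋃ (_ : t ≠ e), {x | act f n (g t • x) (inv t)} := by ext; simp
      change MeasurableSet {x | ∃ t, t ≠ e ∧ act f n (g t • x) (inv t)}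
      rw [this]
      exact MeasurableSet.iUnion fun t => MeasurableSet.iUnion fun _ => ih' t
    · change MeasurableSet {x | ∀ t, t ≠ e → ¬ act f n (g t • x) (inv t) → f (g t • x) ≠ f (g e • x)}
      have : {x | ∀ t, t ≠ e → ¬ act f n (g t • x) (inv t) → f (g t • x) ≠ f (g e • x)} =
        ⋂ t, ⋂ (_ : t ≠ e), ({x | act f n (g t • x) (inv t)} ∪ {x | f (g t • x) = f (g e • x)}ᶜ) := by
        ext x; simp [or_iff_not_imp_left]
      rw [this]
      exact MeasurableSet.iInter fun t => MeasurableSet.iInter fun _ => (ih' t).union (h3 t).compl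

theorem meas_fill (hf : Measurable f) (n : ℕ) : MeasurableSet {x | Fill f n x} := by
  have hm : ∀ t : Gam, Measurable fun x : X => t • x := fun t => (hmp t).measurable
  have ih' : ∀ t, MeasurableSet {x | act f n (g t • x) (inv t)} :=
    fun t => hm (g t) (meas_act f μ hmp hf n (inv t))
  have h1 : ∀ c, MeasurableSet {x | f x = c} := fun c => hf (measurableSet_singleton c)
  have h2 : ∀ t c, MeasurableSet {x | f (g t • x) = c} := fun t c => hm (g t) (h1 c)
  have : {x | Fill f n x} = ({x | f x = none} ∪ ⋃ t, {x | act f n (g t • x) (inv t)}) ∩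
      ⋃ c : Fin 4, ({x | f x = some c}ᶜ ∩ ⋂ t, ({x | act f n (g t • x) (inv t)} ∪
        {x | f (g t • x) = some c}ᶜ)) := by
    ext x; simp [Fill, or_iff_not_imp_left, eq_comm]
  rw [this]
  refine ((h1 _).union (MeasurableSet.iUnion ih')).inter (MeasurableSet.iUnion fun c =>
    (h1 _).compl.inter (MeasurableSet.iInter fun t => (ih' t).union (h2 t _).compl))

theorem exists_fill (hf : Measurable f) (δ : ℝ) (hδ : δ ≤ μ.real {x | f x = none}) (N : ℕ)
    (hN : 6 < N * δ) : ∃ n < N, δ / 8 ≤ μ.real {x | Fill f n x} := by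
  classical
  by_contra hcon
  push Not at hcon
  let a : ℕ → ℝ := fun n => ∑ e : E, μ.real {x | act f n x e}
  have hin : ∀ n, a n = ∑ t : E, μ.real {x | act f n (g t • x) (inv t)} := by
    intro n
    have : ∀ t, μ.real {x | act f n (g t • x) (inv t)} = μ.real {x | act f n x (inv t)} := by
      intro t
      exact (hmp (g t)).measureReal_preimage (meas_act f μ hmp hf n (inv t)).nullMeasurableSet
    simp only [this, a]
    exact (Function.Involutive.bijective inv_inv).sum_comp (fun e => μ.real {x | act f n x e}) |>.symm
  have hstep : ∀ n, a n + 2 * μ.real {x | f x = none} ≤ a (n + 1) + 8 * μ.real {x | Fill f n x} := by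
    intro n
    have := int_le μ (ι := Option E) (κ := Option E)
      (fun i => i.elim 2 (fun _ => 1)) (fun i => i.elim 8 (fun _ => 1))
      (fun i => i.elim {x | f x = none} (fun t => {x | act f n (g t • x) (inv t)}))
      (fun i => i.elim {x | Fill f n x} (fun e => {x | act f (n + 1) x e}))
      (by
        rintro (_ | t)
        · exact hf (measurableSet_singleton none)
        · exact (hmp (g t)).measurable (meas_act f μ hmp hf n (inv t)))
      (by
        rintro (_ | t)
        · exact meas_fill f μ hmp hf n
        · exact meas_act f μ hmp hf (n + 1) t)
      (by
        intro x
        have := flow f n x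
        simp only [Fintype.sum_option, Option.elim, one_mul, Set.mem_ofPred_eq]
        have h' : (((∑ t : E, if act f n (g t • x) (inv t) then 1 else 0) +
          2 * (if f x = none then 1 else 0) : ℕ) : ℝ) ≤
          (((∑ e : E, if act f (n + 1) x e then 1 else 0) +
            8 * (if Fill f n x then 1 else 0) : ℕ) : ℝ) := by exact_mod_cast this
        push_cast at h'
        rw [add_comm (2 * _), add_comm (8 * _)]
        convert h'
        all_goals (split_ifs <;> first | rfl | exact if_pos (by assumption) | exact if_neg (by assumption)))
    simp only [Fintype.sum_option, Option.elim, one_mul] at this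
    rw [hin n]
    simp only [a]
    linarith
  have hlow : ∀ n ≤ N, n * δ ≤ a n := by
    intro n
    induction n with
    | zero => intro _; simp only [a]; simp; positivity
    | succ n ih =>
      intro hn
      have h1 := ih (by omega)
      have h2 := hstep n
      have h3 := hcon n (by omega)
      push_cast
      linarith
  have hup : a N ≤ 6 := by
    have : a N ≤ ∑ e : E, (1:ℝ) := Finset.sum_le_sum fun e _ => measureReal_le_one
    simpa using this
  have := hlow N le_rfl
  linarith
omit hmp

def Sparse : Prop := ∀ (K : Finset Gam) (b : ℝ), 0 < b → ∃ η > 0, ∀ B : Set X, MeasurableSet B →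
  b ≤ μ.real B → ∃ M ⊆ B, MeasurableSet M ∧ η ≤ μ.real M ∧ ∀ γ ∈ K, γ ≠ 1 → ∀ x ∈ M, γ • x ∉ M

theorem valid_cases (l : List E) (e : E) (h : Valid none l) :
    Valid none (l ++ [e]) ∨ ∃ l', l = l' ++ [inv e] := by
  rcases List.eq_nil_or_concat l with rfl | ⟨l', t, rfl⟩
  · left; simp [Valid]
  · simp only [List.concat_eq_append] at h ⊢
    by_cases he : e = inv t
    · right; exact ⟨l', by rw [he, inv_inv]⟩
    · left; rw [valid_snoc_snoc]; exact ⟨h, he⟩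

include hmp in
theorem surgery (hf : Measurable f) (hp : Proper f) (n : ℕ) (M : Set X) (hM : MeasurableSet M)
    (x0 : X) (hx0 : x0 ∈ M)
    (hpat : ∀ x ∈ M, ∀ l ∈ W (n + 2) none, F f x l = F f x0 l)
    (hsp : ∀ l ∈ W (n + 2) none, ∀ l' ∈ W (n + 2) none, (ev l)⁻¹ * ev l' ≠ 1 →
      ∀ x ∈ M, ((ev l)⁻¹ * ev l') • x ∉ M)
    (c : List E → Col) (hc : Good f (n + 1) none x0 c)
    (hh : holes (n + 1) none c + 1 ≤ holes (n + 1) none (F f x0)) :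
    ∃ f' : X → Col, Measurable f' ∧ Proper f' ∧
      μ.real {x | f' x = none} + μ.real M ≤ μ.real {x | f x = none} := by
  classical
  let T : List E → Set X := fun l => {y | (ev l)⁻¹ • y ∈ M}
  have hTm : ∀ l, MeasurableSet (T l) := fun l => (hmp _).measurable hM
  have hTμ : ∀ l, μ.real (T l) = μ.real M := fun l =>
    (hmp (ev l)⁻¹).measureReal_preimage hM.nullMeasurableSet
  have huniq : ∀ l ∈ W (n + 2) none, ∀ l' ∈ W (n + 2) none, ∀ y, y ∈ T l → y ∈ T l' → l = l' := by
    intro l hl l' hl' y h h'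
    by_cases h1 : (ev l)⁻¹ * ev l' = 1
    · exact ev_inj l l' ((mem_W _ _ _).1 hl).1 ((mem_W _ _ _).1 hl').1 (inv_mul_eq_one.1 h1)
    · exfalso
      refine hsp l hl l' hl' h1 _ h' ?_
      rw [mul_smul, smul_inv_smul]; exact h
  have hsub : W (n + 1) none ⊆ W (n + 2) none := by
    intro l hl
    rw [mem_W] at hl ⊢
    exact ⟨hl.1, by omega⟩
  let f' : X → Col := fun y =>
    if h : ∃ l ∈ W (n + 1) none, y ∈ T l then c h.choose else f y
  have hK1 : ∀ l ∈ W (n + 2) none, ∀ y ∈ T l, f' y = c l := by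
    intro l hl y hy
    by_cases h : ∃ l ∈ W (n + 1) none, y ∈ T l
    · have : h.choose = l := huniq _ (hsub h.choose_spec.1) _ hl y h.choose_spec.2 hy
      simp only [f', dif_pos h, this]
    · have hlen : n + 1 < l.length := by
        by_contra hcon
        exact h ⟨l, (mem_W _ _ _).2 ⟨((mem_W _ _ _).1 hl).1, by omega⟩, hy⟩
      rw [hc.2 l hlen, ← hpat _ hy l hl]
      simp only [f', dif_neg h, F, smul_inv_smul]
  have hK2 : ∀ y, (¬ ∃ l ∈ W (n + 1) none, y ∈ T l) → f' y = f y := by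
    intro y h; simp only [f', dif_neg h]
  have hprop1 : ∀ y e, (∃ l ∈ W (n + 1) none, y ∈ T l) → f' y = f' (g e • y) → f' y = none := by
    rintro y e ⟨l, hl, hy⟩ heq
    have hlW := (mem_W _ _ _).1 hl
    rcases valid_cases l e hlW.1 with hv | ⟨l', rfl⟩
    · have h1 : l ++ [e] ∈ W (n + 2) none := (mem_W _ _ _).2 ⟨hv, by simp; omega⟩
      have h2 : g e • y ∈ T (l ++ [e]) := by
        simp only [T, Set.mem_ofPred_eq, ev_snoc, mul_inv_rev, mul_smul, inv_smul_smul]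
        exact hy
      rw [hK1 _ (hsub hl) _ hy, hK1 _ h1 _ h2] at heq
      rw [hK1 _ (hsub hl) _ hy]
      exact hc.1 _ _ hv heq
    · have h1 : l' ∈ W (n + 2) none :=
        (mem_W _ _ _).2 ⟨valid_init _ _ _ hlW.1, by have := hlW.2; simp at this; omega⟩
      have h2 : g e • y ∈ T l' := by
        have : (ev (l' ++ [inv e]))⁻¹ • y ∈ M := hy
        simp only [ev_snoc, mul_inv_rev, mul_smul, g_inv, _root_.inv_inv] at this
        exact this
      rw [hK1 _ (hsub hl) _ hy, hK1 _ h1 _ h2] at heq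
      have := hc.1 _ _ hlW.1 heq.symm
      rw [hK1 _ (hsub hl) _ hy, heq, this]
  have hf'meas : Measurable f' := by
    apply measurable_to_countable'
    intro k
    have : f' ⁻¹' {k} = (⋃ l ∈ (W (n + 1) none).filter (fun l => c l = k), T l) ∪
        (f ⁻¹' {k} \ ⋃ l ∈ W (n + 1) none, T l) := by
      ext y
      simp only [Set.mem_preimage, Set.mem_singleton_iff, Set.mem_union, Set.mem_iUnion,
        Finset.mem_filter, Set.mem_sdiff, exists_prop]
      by_cases h : ∃ l ∈ W (n + 1) none, y ∈ T l
      · obtain ⟨l, hl, hy⟩ := h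
        rw [hK1 l (hsub hl) y hy]
        constructor
        · intro hk; exact Or.inl ⟨l, ⟨hl, hk⟩, hy⟩
        · rintro (⟨l', ⟨h1, h2⟩, h3⟩ | ⟨_, h2⟩)
          · rw [huniq l (hsub hl) l' (hsub h1) y hy h3]; exact h2
          · exact absurd ⟨l, hl, hy⟩ h2
      · rw [hK2 y h]
        constructor
        · intro hk; exact Or.inr ⟨hk, h⟩
        · rintro (⟨l', ⟨h1, h2⟩, h3⟩ | ⟨h1, h2⟩)
          · exact absurd ⟨l', h1, h3⟩ h
          · exact h1
    rw [this]
    refine (Finset.measurableSet_biUnion _ fun l _ => hTm l).union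
      ((hf (measurableSet_singleton k)).diff (Finset.measurableSet_biUnion _ fun l _ => hTm l))
  refine ⟨f', hf'meas, ?_, ?_⟩
  · intro y e heq
    by_cases h1 : ∃ l ∈ W (n + 1) none, y ∈ T l
    · exact hprop1 y e h1 heq
    by_cases h2 : ∃ l ∈ W (n + 1) none, g e • y ∈ T l
    · rw [heq]
      exact hprop1 _ (inv e) h2 (by rw [inv_smul_g]; exact heq.symm)
    · rw [hK2 _ h1, hK2 _ h2] at heq
      rw [hK2 _ h1]
      exact hp y e heq
  · have hf'm : MeasurableSet {x | f' x = none} := hf'meas (measurableSet_singleton none)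
    have key := int_le μ (ι := Option (W (n + 1) none)) (κ := Option (W (n + 1) none))
      (fun i => i.elim 1 (fun l => if F f x0 l = none then 1 else 0))
      (fun i => i.elim 1 (fun l => if c l = none then 1 else 0))
      (fun i => i.elim {x | f' x = none} (fun l => T l))
      (fun i => i.elim {x | f x = none} (fun l => T l))
      (by rintro (_ | l); exacts [hf'm, hTm l])
      (by rintro (_ | l); exacts [hf (measurableSet_singleton none), hTm l])
      (by
        intro y
        simp only [Fintype.sum_option, Option.elim, one_mul, Set.mem_ofPred_eq]
        by_cases h : ∃ l ∈ W (n + 1) none, y ∈ T l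
        · obtain ⟨l, hl, hy⟩ := h
          have hz : ∀ l' : W (n + 1) none, y ∈ T l' ↔ l' = ⟨l, hl⟩ := by
            intro l'
            constructor
            · intro h; ext1; exact huniq _ (hsub l'.2) _ (hsub hl) y h hy
            · rintro rfl; exact hy
          have hfy : f y = F f x0 l := by
            rw [← hpat _ hy l (hsub hl)]; simp [F]
          simp only [hz, mul_ite, mul_one, mul_zero, Finset.sum_ite_eq', Finset.mem_univ, if_true,
            hK1 l (hsub hl) y hy, hfy]
          exact (add_comm _ _).le
        · have hz : ∀ l' : W (n + 1) none, ¬ y ∈ T l' := fun l' h' => h ⟨l', l'.2, h'⟩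
          by_cases hfy : f y = none <;> simp [hz, hK2 y h, hfy])
    simp only [Fintype.sum_option, Option.elim, one_mul, hTμ, ← Finset.sum_mul] at key
    have e1 : ∀ d : List E → Col, (∑ l : W (n + 1) none, if d l = none then (1:ℝ) else 0) =
        (holes (n + 1) none d : ℝ) := by
      intro d
      rw [holes, Finset.sum_coe_sort (W (n + 1) none) (fun l => if d l = none then (1:ℝ) else 0)]
      push_cast
      rfl
    rw [e1, e1] at key
    have h2 : (holes (n + 1) none c : ℝ) + 1 ≤ holes (n + 1) none (F f x0) := by exact_mod_cast hh
    have h3 : 0 ≤ μ.real M := measureReal_nonneg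
    nlinarith

include hmp in
theorem step (hs : Sparse μ) (n : ℕ) (b : ℝ) (hb : 0 < b) : ∃ η > 0, ∀ f : X → Col, Measurable f →
    Proper f → b ≤ μ.real {x | Fill f n x} → ∃ f' : X → Col, Measurable f' ∧ Proper f' ∧
      μ.real {x | f' x = none} + η ≤ μ.real {x | f x = none} := by
  classical
  let Q : ℝ := Fintype.card (W (n + 2) none → Col)
  have hQ : 0 < Q := by
    have : 0 < Fintype.card (W (n + 2) none → Col) := Fintype.card_pos
    exact Nat.cast_pos.2 this
  obtain ⟨η, hη, hη'⟩ := hs (Finset.image₂ (fun l l' => (ev l)⁻¹ * ev l') (W (n + 2) none)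
    (W (n + 2) none)) (b / Q) (by positivity)
  refine ⟨η, hη, fun f hf hp hfill => ?_⟩
  let pat : X → (W (n + 2) none → Col) := fun x l => F f x l
  have hpm : Measurable pat := by
    refine measurable_pi_lambda _ fun l => ?_
    exact hf.comp (hmp (ev l)).measurable
  let B : (W (n + 2) none → Col) → Set X := fun π => {x | Fill f n x} ∩ pat ⁻¹' {π}
  have hB : ∀ π, MeasurableSet (B π) := fun π =>
    (meas_fill f μ hmp hf n).inter (hpm (measurableSet_singleton π))
  obtain ⟨π, hπ⟩ : ∃ π, b / Q ≤ μ.real (B π) := by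
    by_contra hcon
    push Not at hcon
    have h1 : {x | Fill f n x} ⊆ ⋃ π, B π := by
      intro x hx
      exact Set.mem_iUnion.2 ⟨pat x, hx, rfl⟩
    have h2 : μ.real {x | Fill f n x} ≤ ∑ π, μ.real (B π) :=
      (measureReal_mono h1).trans (measureReal_iUnion_fintype_le _)
    have h3 : ∑ π, μ.real (B π) < ∑ _π : (W (n + 2) none → Col), b / Q :=
      Finset.sum_lt_sum_of_nonempty Finset.univ_nonempty fun π _ => hcon π
    have h4 : ∑ _π : (W (n + 2) none → Col), b / Q = b := by
      rw [Finset.sum_const, Finset.card_univ, nsmul_eq_mul]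
      exact mul_div_cancel₀ b hQ.ne'
    linarith
  obtain ⟨M, hMB, hM, hMη, hsp⟩ := hη' (B π) (hB π) hπ
  obtain ⟨x0, hx0⟩ : M.Nonempty := by
    by_contra hne
    rw [Set.not_nonempty_iff_eq_empty] at hne
    simp [hne] at hMη
    linarith
  obtain ⟨c, hc, hh⟩ := fill_aug f hp n x0 (hMB hx0).1
  obtain ⟨f', h1, h2, h3⟩ := surgery f μ hmp hf hp n M hM x0 hx0
    (by
      intro x hx l hl
      have e1 : pat x = π := (hMB hx).2
      have e2 : pat x0 = π := (hMB hx0).2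
      exact congrFun (e1.trans e2.symm) ⟨l, hl⟩)
    (by
      intro l hl l' hl' hne
      exact hsp _ (Finset.mem_image₂_of_mem hl hl') hne) c hc hh
  exact ⟨f', h1, h2, by linarith⟩

include hmp in
theorem abstract_main (hs : Sparse μ) (ε : ℝ) (hε : 0 < ε) :
    ∃ f : X → Col, Measurable f ∧ Proper f ∧ μ.real {x | f x = none} < ε := by
  classical
  obtain ⟨N, hN⟩ := exists_nat_gt (6 / ε)
  have hN' : 6 < N * ε := by rwa [div_lt_iff₀ hε] at hN
  choose η hη hstep using fun n => step μ hmp hs n (ε / 8) (by positivity)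
  obtain ⟨η0, hη0, hη0'⟩ : ∃ η0 > 0, ∀ n < N, η0 ≤ η n := by
    clear hN hN' hstep
    induction N with
    | zero => exact ⟨1, one_pos, by simp⟩
    | succ N ih =>
      obtain ⟨η0, h1, h2⟩ := ih
      refine ⟨min η0 (η N), lt_min h1 (hη N), fun n hn => ?_⟩
      rcases Nat.lt_succ_iff_lt_or_eq.1 hn with h | rfl
      · exact (min_le_left _ _).trans (h2 n h)
      · exact min_le_right _ _
  have hiter : ∀ k : ℕ, ∃ f : X → Col, Measurable f ∧ Proper f ∧
      (μ.real {x | f x = none} < ε ∨ μ.real {x | f x = none} + k * η0 ≤ 1) := by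
    intro k
    induction k with
    | zero =>
      exact ⟨fun _ => none, measurable_const, fun _ _ _ => rfl, Or.inr (by simp)⟩
    | succ k ih =>
      obtain ⟨f, hf, hp, h | h⟩ := ih
      · exact ⟨f, hf, hp, Or.inl h⟩
      by_cases hlt : μ.real {x | f x = none} < ε
      · exact ⟨f, hf, hp, Or.inl hlt⟩
      obtain ⟨n, hn, hfill⟩ := exists_fill f μ hmp hf ε (not_lt.1 hlt) N hN'
      obtain ⟨f', h1, h2, h3⟩ := hstep n f hf hp hfill
      refine ⟨f', h1, h2, Or.inr ?_⟩
      have := hη0' n hn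
      push_cast
      linarith
  obtain ⟨k, hk⟩ := exists_nat_gt (1 / η0)
  obtain ⟨f, hf, hp, h | h⟩ := hiter k
  · exact ⟨f, hf, hp, h⟩
  · exfalso
    rw [div_lt_iff₀ hη0] at hk
    have : 0 ≤ μ.real {x | f x = none} := measureReal_nonneg
    linarith

end measure

section concrete

abbrev XX := Gam → ℝ

instance actXX : MulAction Gam XX where
  smul γ x := fun δ => x (γ⁻¹ * δ)
  one_smul x := by
    funext δ
    change x (1⁻¹ * δ) = x δ
    simp
  mul_smul a b x := by
    funext δ
    change x ((a * b)⁻¹ * δ) = x (b⁻¹ * (a⁻¹ * δ))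
    simp [mul_assoc]

theorem smul_def' (γ : Gam) (x : XX) (δ : Gam) : (γ • x) δ = x (γ⁻¹ * δ) := rfl

noncomputable abbrev lam : Measure ℝ := volume.restrict (Set.Icc (0:ℝ) 1)

instance : IsProbabilityMeasure lam := ⟨by simp [lam]⟩

noncomputable abbrev nu : Measure XX := Measure.infinitePi (fun _ : Gam => lam)

theorem mp (γ : Gam) : MeasurePreserving (fun x : XX => γ • x) nu nu := by
  have hm : Measurable (fun x : XX => γ • x) := by
    refine measurable_pi_lambda _ fun δ => ?_
    exact measurable_pi_apply (γ⁻¹ * δ)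
  refine ⟨hm, ?_⟩
  classical
  refine Measure.eq_infinitePi _ fun s t ht => ?_
  rw [Measure.map_apply hm (MeasurableSet.pi s.countable_toSet fun i _ => ht i)]
  have : (fun x : XX => γ • x) ⁻¹' (Set.pi (s : Set Gam) t) =
      Set.pi ((s.map (mulLeftEmbedding γ⁻¹) : Finset Gam) : Set Gam) (fun d => t (γ * d)) := by
    ext x
    simp only [Set.mem_preimage, Set.mem_pi, Finset.mem_coe, Finset.mem_map, smul_def',
      mulLeftEmbedding_apply]
    constructor
    · rintro h d ⟨a, ha, rfl⟩
      simpa using h a ha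
    · intro h a ha
      simpa using h (γ⁻¹ * a) ⟨a, ha, rfl⟩
  rw [this, Measure.infinitePi_pi _ (fun i _ => ht _)]
  simp

theorem two (c d : Gam) (h : c ≠ d) (s t : Set ℝ) (hs : MeasurableSet s) (ht : MeasurableSet t) :
    nu {x | x c ∈ s ∧ x d ∈ t} = lam s * lam t := by
  classical
  have : {x : XX | x c ∈ s ∧ x d ∈ t} =
      Set.pi (({c, d} : Finset Gam) : Set Gam) (fun i => if i = c then s else t) := by
    ext x
    simp [Set.mem_pi, h.symm]
  rw [this, Measure.infinitePi_pi _ (fun i _ => by split_ifs <;> assumption)]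
  rw [Finset.prod_pair h]
  simp [h.symm]

theorem one' (c : Gam) (s : Set ℝ) (hs : MeasurableSet s) :
    nu {x | x c ∈ s} = lam s := by
  classical
  have : {x : XX | x c ∈ s} =
      Set.pi (({c} : Finset Gam) : Set Gam) (fun i => s) := by
    ext x
    simp [Set.mem_pi]
  rw [this, Measure.infinitePi_pi _ (fun i _ => hs)]
  simp

def J (N : ℕ) (j : ℕ) : Set ℝ := Set.Ico ((j:ℝ) / N) (((j:ℝ) + 1) / N)

theorem lam_J (N j : ℕ) : lam (J N j) ≤ ENNReal.ofReal (1 / N) := by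
  refine (Measure.restrict_apply_le _ _).trans ?_
  rw [J, Real.volume_Ico]
  apply ENNReal.ofReal_le_ofReal
  apply le_of_eq
  ring

theorem J_cover (N : ℕ) (hN : 0 < N) (t : ℝ) (h0 : 0 ≤ t) (h1 : t < 1) :
    ∃ j ∈ Finset.range N, t ∈ J N j := by
  have hN' : (0:ℝ) < N := by exact_mod_cast hN
  refine ⟨⌊t * N⌋₊, ?_, ?_, ?_⟩
  · rw [Finset.mem_range, Nat.floor_lt (by positivity)]
    nlinarith
  · rw [div_le_iff₀ hN']
    exact Nat.floor_le (by positivity)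
  · rw [lt_div_iff₀ hN']
    exact Nat.lt_floor_add_one _

theorem null_out : nu.real {x : XX | x 1 ∉ Set.Ico (0:ℝ) 1} = 0 := by
  have := one' 1 (Set.Ico (0:ℝ) 1)ᶜ measurableSet_Ico.compl
  rw [Measure.real]
  change (nu {x : XX | x 1 ∈ (Set.Ico (0:ℝ) 1)ᶜ}).toReal = 0
  rw [this, Measure.restrict_apply measurableSet_Ico.compl]
  have h : (Set.Ico (0:ℝ) 1)ᶜ ∩ Set.Icc 0 1 ⊆ {1} := by
    rintro t ⟨h1, h2, h3⟩
    simp only [Set.mem_compl_iff, Set.mem_Ico, not_and, not_lt] at h1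
    exact le_antisymm h3 (h1 h2)
  rw [measure_mono_null h (by simp)]
  simp

theorem sparse_nu : Sparse nu := by
  classical
  intro K b hb
  obtain ⟨N, hN⟩ := exists_nat_gt (2 * K.card / b)
  have hN0 : (0:ℝ) < N := lt_of_le_of_lt (by positivity) hN
  have hN1 : 0 < N := by exact_mod_cast hN0
  rw [div_lt_iff₀ hb] at hN
  refine ⟨b / (2 * N), by positivity, fun B hB hbB => ?_⟩
  have hJm : ∀ j, MeasurableSet (J N j) := fun j => measurableSet_Ico
  let K' := K.filter (fun γ => γ ≠ 1)
  let bad : ℕ → Gam → Set XX := fun j γ => {x | x 1 ∈ J N j ∧ x γ⁻¹ ∈ J N j}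
  let M : ℕ → Set XX := fun j => (B ∩ {x | x 1 ∈ J N j}) \ ⋃ γ ∈ K', bad j γ
  have hev : ∀ (c : Gam) j, MeasurableSet {x : XX | x c ∈ J N j} := fun c j =>
    measurable_pi_apply c (hJm j)
  have hMm : ∀ j, MeasurableSet (M j) := fun j =>
    (hB.inter (hev 1 j)).diff (Finset.measurableSet_biUnion _ fun γ _ =>
      (hev 1 j).inter (hev γ⁻¹ j))
  have hbad : ∀ j, ∀ γ ∈ K', nu.real (bad j γ) ≤ 1 / N * (1 / N) := by
    intro j γ hγ
    have hne : (1 : Gam) ≠ γ⁻¹ := by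
      have : γ ≠ 1 := (Finset.mem_filter.1 hγ).2
      intro h
      exact this (inv_eq_one.1 h.symm)
    rw [Measure.real]
    apply ENNReal.toReal_le_of_le_ofReal (by positivity)
    change nu {x : XX | x 1 ∈ J N j ∧ x γ⁻¹ ∈ J N j} ≤ _
    rw [two 1 γ⁻¹ hne _ _ (hJm j) (hJm j), ENNReal.ofReal_mul (by positivity)]
    gcongr <;> exact lam_J N j
  have hcov : B ⊆ ((⋃ j ∈ Finset.range N, M j) ∪
      ⋃ j ∈ Finset.range N, ⋃ γ ∈ K', bad j γ) ∪ {x : XX | x 1 ∉ Set.Ico (0:ℝ) 1} := by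
    intro x hx
    by_cases h : x 1 ∈ Set.Ico (0:ℝ) 1
    · left
      obtain ⟨j, hj, hxj⟩ := J_cover N hN1 (x 1) h.1 h.2
      by_cases h2 : x ∈ ⋃ γ ∈ K', bad j γ
      · right
        exact Set.mem_biUnion hj h2
      · left
        exact Set.mem_biUnion (x := j) hj ⟨⟨hx, hxj⟩, h2⟩
    · right
      exact h
  have hsum : b ≤ ∑ j ∈ Finset.range N, nu.real (M j) + K.card / N := by
    have h1 := (hbB.trans (measureReal_mono hcov)).trans (measureReal_union_le _ _)
    rw [null_out, add_zero] at h1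
    have h2 := h1.trans (measureReal_union_le _ _)
    have h3 := measureReal_biUnion_finset_le (μ := nu) (Finset.range N) M
    have h4 : nu.real (⋃ j ∈ Finset.range N, ⋃ γ ∈ K', bad j γ) ≤ K.card / N := by
      calc _ ≤ ∑ j ∈ Finset.range N, nu.real (⋃ γ ∈ K', bad j γ) :=
            measureReal_biUnion_finset_le _ _
        _ ≤ ∑ j ∈ Finset.range N, ∑ γ ∈ K', nu.real (bad j γ) :=
            Finset.sum_le_sum fun j _ => measureReal_biUnion_finset_le _ _
        _ ≤ ∑ j ∈ Finset.range N, ∑ γ ∈ K', (1 / (N:ℝ) * (1 / N)) :=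
            Finset.sum_le_sum fun j _ => Finset.sum_le_sum fun γ hγ => hbad j γ hγ
        _ = K'.card / N := by
            simp
            field_simp
        _ ≤ K.card / N := by
            gcongr
            exact Finset.filter_subset _ _
    linarith
  have hK : (K.card : ℝ) / N ≤ b / 2 := by
    rw [div_le_iff₀ hN0]; linarith
  obtain ⟨j, -, hj⟩ : ∃ j ∈ Finset.range N, b / (2 * N) ≤ nu.real (M j) := by
    apply Finset.exists_le_of_sum_le (by simpa using hN1.ne')
    have : ∑ j ∈ Finset.range N, b / (2 * (N:ℝ)) = b / 2 := by
      simp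
      field_simp
    rw [this]; linarith
  refine ⟨M j, fun x hx => hx.1.1, hMm j, hj, fun γ hγ hne x hx hx' => ?_⟩
  apply hx.2
  have h3 : (γ • x) 1 ∈ J N j := hx'.1.2
  rw [smul_def', mul_one] at h3
  exact Set.mem_biUnion (x := γ) (Finset.mem_filter.2 ⟨hγ, hne⟩ : γ ∈ K') ⟨hx.1.2, h3⟩

theorem final (ε : ℝ) (hε : 0 < ε) :
    ∃ f : XX → Fin 4,
      Measurable f ∧
      nu {x | ∃ s : Gam,
          (∃ i : Fin 3, s = FreeGroup.of i ∨ s = (FreeGroup.of i)⁻¹) ∧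
          f (fun δ => x (s⁻¹ * δ)) = f x} < ENNReal.ofReal ε := by
  classical
  obtain ⟨f, hf, hp, hε'⟩ := abstract_main nu mp sparse_nu (ε / 7) (by positivity)
  have hH : MeasurableSet {x : XX | f x = none} := hf (measurableSet_singleton none)
  refine ⟨fun x => (f x).getD 0, (measurable_from_top (f := fun c : Col => c.getD 0)).comp hf, ?_⟩
  have hsub : {x : XX | ∃ s : Gam,
          (∃ i : Fin 3, s = FreeGroup.of i ∨ s = (FreeGroup.of i)⁻¹) ∧
          (f (fun δ => x (s⁻¹ * δ))).getD 0 = (f x).getD 0} ⊆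
      {x | f x = none} ∪ ⋃ e ∈ (Finset.univ : Finset E),
        (fun x : XX => g e • x) ⁻¹' {x | f x = none} := by
    rintro x ⟨s, ⟨i, hi⟩, hfx⟩
    obtain ⟨e, rfl⟩ : ∃ e : E, s = g e := by
      rcases hi with rfl | rfl
      · exact ⟨(i, true), rfl⟩
      · exact ⟨(i, false), rfl⟩
    change (f (g e • x)).getD 0 = (f x).getD 0 at hfx
    by_cases h1 : f x = none
    · left; exact h1
    · right
      refine Set.mem_biUnion (x := e) (Finset.mem_univ e) ?_
      change f (g e • x) = none
      by_contra h2
      apply h1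
      apply hp x e
      obtain ⟨a, ha⟩ := Option.ne_none_iff_exists'.1 h1
      obtain ⟨c, hc⟩ := Option.ne_none_iff_exists'.1 h2
      rw [ha, hc] at hfx ⊢
      simp only [Option.getD_some] at hfx
      rw [hfx]
  have hb : nu.real ({x | f x = none} ∪ ⋃ e ∈ (Finset.univ : Finset E),
        (fun x : XX => g e • x) ⁻¹' {x | f x = none}) < ε := by
    have h1 := measureReal_union_le (μ := nu) {x | f x = none} (⋃ e ∈ (Finset.univ : Finset E),
        (fun x : XX => g e • x) ⁻¹' {x | f x = none})
    have h2 := measureReal_biUnion_finset_le (μ := nu) (Finset.univ : Finset E)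
      (fun e => (fun x : XX => g e • x) ⁻¹' {x | f x = none})
    have h3 : ∀ e : E, nu.real ((fun x : XX => g e • x) ⁻¹' {x | f x = none}) =
        nu.real {x | f x = none} := by
      intro e
      rw [Measure.real, (mp (g e)).measure_preimage hH.nullMeasurableSet]
      rfl
    simp only [h3, Finset.sum_const, nsmul_eq_mul] at h2
    have h4 : ((Finset.univ : Finset E).card : ℝ) = 6 := by
      have : (Finset.univ : Finset E).card = 6 := by decide
      rw [this]; norm_num
    rw [h4] at h2
    linarith
  refine (measure_mono hsub).trans_lt ?_
  rw [← ENNReal.ofReal_toReal (measure_ne_top nu _)]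
  exact (ENNReal.ofReal_lt_ofReal_iff hε).2 hb

end concrete
end FourCol

/-- Approximate coloring of the Bernoulli shift of the free group of rank 3: for every
ε > 0 there is a measurable map `f : (FreeGroup (Fin 3) → ℝ) → Fin 4` which is improper
(i.e. `f (s • x) = f x` for some generator or inverse generator `s`) only on a set of
measure less than ε. Here μ is the product over the group of Lebesgue measure on [0,1],
characterized by its finite marginals, and `(γ • x) δ = x (γ⁻¹ * δ)`. -/
theorem bernoulli_shift_F3_approximate_four_coloring
    (μ : Measure (FreeGroup (Fin 3) → ℝ)) [IsProbabilityMeasure μ]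
    (hμ : ∀ s : Finset (FreeGroup (Fin 3)),
      Measure.map (fun (x : FreeGroup (Fin 3) → ℝ) (v : s) => x v) μ
        = Measure.pi (fun _ : s => volume.restrict (Set.Icc (0:ℝ) 1)))
    (ε : ℝ) (hε : 0 < ε) :
    ∃ f : (FreeGroup (Fin 3) → ℝ) → Fin 4,
      Measurable f ∧
      μ {x | ∃ s : FreeGroup (Fin 3),
          (∃ i : Fin 3, s = FreeGroup.of i ∨ s = (FreeGroup.of i)⁻¹) ∧
          f (fun δ => x (s⁻¹ * δ)) = f x} < ENNReal.ofReal ε := by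
  have h1 : IsProjectiveLimit μ (fun s : Finset (FreeGroup (Fin 3)) =>
      Measure.pi (fun _ : s => FourCol.lam)) := fun s => hμ s
  have h : μ = FourCol.nu :=
    IsProjectiveLimit.unique h1 (Measure.isProjectiveLimit_infinitePi (fun _ => FourCol.lam))
  subst h
  exact FourCol.final ε hε
end

section
/- For every ε > 0 there exists an fiid labelling f : X → (V → Fin 5) of the 5-regular tree T_5 such that for μ-a.e. x ∈ X the labelling f(x) is a proper coloring of G (i.e. f(x)(u) ≠ f(x)(v) whenever u and v are adjacent), and such that for every vertex v ∈ V, μ({x : f(x)(v) = 4}) < ε; that is, T_5 has fiid 5-colorings which are approximate 4-colorings. -/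
open MeasureTheory

namespace T5

theorem closer_unique {V : Type} {G : SimpleGraph V} (hG : G.IsTree) (o v a b : V)
    (ha : G.Adj v a) (hb : G.Adj v b) (hda : G.dist o a < G.dist o v)
    (hdb : G.dist o b < G.dist o v) : a = b := by
  have key : ∀ a, G.Adj v a → G.dist o a < G.dist o v →
      ∃ p : G.Walk o v, p.IsPath ∧ p.penultimate = a := by
    intro a ha hda
    obtain ⟨p, hp⟩ := (hG.connected o a).exists_walk_length_eq_dist
    have h1 := hG.dist_eq_dist_add_one_of_adj o ha
    refine ⟨p.concat ha.symm, ?_, by simp⟩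
    apply SimpleGraph.Walk.isPath_of_length_eq_dist
    rw [SimpleGraph.Walk.length_concat]; omega
  obtain ⟨p, hp, hpa⟩ := key a ha hda
  obtain ⟨q, hq, hqb⟩ := key b hb hdb
  have := (hG.isAcyclic.subsingleton_path o v).elim ⟨p, hp⟩ ⟨q, hq⟩
  have h2 : p = q := congrArg Subtype.val this
  rw [← hpa, ← hqb, h2]

theorem exists_closer {V : Type} {G : SimpleGraph V} (hG : G.IsTree) (o v : V) (h : v ≠ o) :
    ∃ a, G.Adj v a ∧ G.dist o a < G.dist o v := by
  obtain ⟨p, hp⟩ := (hG.connected o v).exists_walk_length_eq_dist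
  have hn : ¬ p.Nil := fun hn => h hn.eq.symm
  refine ⟨p.penultimate, (p.adj_penultimate hn).symm, ?_⟩
  have h1 : G.dist o p.penultimate ≤ p.dropLast.length := SimpleGraph.dist_le _
  have h2 : p.dropLast.length + 1 = p.length := by
    simpa using p.length_dropLast_add_one hn
  omega

theorem exists_rec {V α : Type} (o : V) (rank : V → ℕ) (par : V → V)
    (hpar : ∀ v, v ≠ o → rank (par v) < rank v) (a : α) (Φ : V → α → α) :
    ∃ F : V → α, F o = a ∧ ∀ v, v ≠ o → F v = Φ v (F (par v)) := by
  classical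
  let wf : WellFounded (fun u v : V => rank u < rank v) := (measure rank).wf
  let F : V → α := wf.fix (fun v ih => if h : v = o then a else Φ v (ih (par v) (hpar v h)))
  refine ⟨F, ?_, ?_⟩
  · simp only [F]; rw [WellFounded.fix_eq]; simp
  · intro v hv
    simp only [F]; rw [WellFounded.fix_eq]; simp [hv]

theorem exists_labelling {V : Type} {G : SimpleGraph V} (hG : G.IsTree)
    (hreg : ∀ v : V, (G.neighborSet v).ncard = 5) (o : V) :
    ∃ nb : V → Fin 5 → V, (∀ v, Function.Injective (nb v)) ∧
      (∀ v u, G.Adj v u ↔ ∃ i, nb v i = u) ∧ ∀ v i, nb (nb v i) i = v := by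
  classical
  have h0 : ∀ v, ∃ e : Fin 5 → V, Function.Injective e ∧ ∀ u, G.Adj v u ↔ ∃ i, e i = u := by
    intro v
    have hf : (G.neighborSet v).Finite := Set.finite_of_ncard_ne_zero (by rw [hreg]; norm_num)
    have : Nat.card (G.neighborSet v) = 5 := hreg v
    have := hf.to_subtype
    let e := (Finite.equivFinOfCardEq (hreg v)).symm
    refine ⟨fun i => (e i : V), fun i j hij => e.injective (Subtype.ext hij), fun u => ⟨?_, ?_⟩⟩
    · intro hu
      exact ⟨e.symm ⟨u, hu⟩, by simp⟩
    · rintro ⟨i, rfl⟩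
      exact (e i).2
  have h1 : ∀ v p (i : Fin 5), ∃ e : Fin 5 → V, G.Adj v p → (Function.Injective e ∧
      (∀ u, G.Adj v u ↔ ∃ i, e i = u) ∧ e i = p) := by
    intro v p i
    by_cases hvp : G.Adj v p
    · obtain ⟨e, he, he2⟩ := h0 v
      obtain ⟨j, hj⟩ := (he2 p).1 hvp
      refine ⟨e ∘ Equiv.swap i j, fun _ => ⟨he.comp (Equiv.injective _), fun u => ?_, by simp [hj]⟩⟩
      rw [he2]
      constructor
      · rintro ⟨k, hk⟩; exact ⟨Equiv.swap i j k, by simp [hk]⟩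
      · rintro ⟨k, hk⟩; exact ⟨_, hk⟩
    · exact ⟨fun _ => v, fun h => absurd h hvp⟩
  choose E hE using h1
  obtain ⟨e0, he0, he0'⟩ := h0 o
  have h2 : ∀ v, ∃ a, v ≠ o → G.Adj v a ∧ G.dist o a < G.dist o v := by
    intro v
    by_cases h : v = o
    · exact ⟨v, fun h' => absurd h h'⟩
    · obtain ⟨a, ha⟩ := exists_closer hG o v h
      exact ⟨a, fun _ => ha⟩
  choose par hpar using h2
  obtain ⟨nb, hnb0, hnb⟩ := exists_rec o (fun v => G.dist o v) par (fun v hv => (hpar v hv).2) e0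
    (fun v f => E v (par v) (Function.invFun f v))
  have h3 : ∀ v, Function.Injective (nb v) ∧ ∀ u, G.Adj v u ↔ ∃ i, nb v i = u := by
    intro v
    by_cases hv : v = o
    · subst hv; rw [hnb0]; exact ⟨he0, he0'⟩
    · rw [hnb v hv]
      have := hE v (par v) (Function.invFun (nb (par v)) v) (hpar v hv).1
      exact ⟨this.1, this.2.1⟩
  have h4 : ∀ v, v ≠ o → ∀ i, nb (par v) i = v → nb v i = par v := by
    intro v hv i hi
    have h5 := hE v (par v) (Function.invFun (nb (par v)) v) (hpar v hv).1
    rw [hnb v hv]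
    have : Function.invFun (nb (par v)) v = i := by
      calc Function.invFun (nb (par v)) v
          = Function.invFun (nb (par v)) (nb (par v) i) := by rw [hi]
        _ = i := Function.leftInverse_invFun (h3 _).1 i
    rw [this] at h5 ⊢
    exact h5.2.2
  refine ⟨nb, fun v => (h3 v).1, fun v => (h3 v).2, fun v i => ?_⟩
  have hadj : G.Adj v (nb v i) := ((h3 v).2 _).2 ⟨i, rfl⟩
  rcases hG.dist_eq_dist_add_one_of_adj o hadj with h | h
  · -- the parent of v is nb v i
    have hv : v ≠ o := by rintro rfl; simp at h
    have hp : par v = nb v i := closer_unique hG o v _ _ (hpar v hv).1 hadj (hpar v hv).2 (by omega)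
    obtain ⟨j, hj⟩ := ((h3 (par v)).2 v).1 (hpar v hv).1.symm
    have h5 := h4 v hv j hj
    rw [hp] at h5
    have : j = i := (h3 v).1 h5
    subst this
    rw [← hp]; exact hj
  · have hv : nb v i ≠ o := by
      intro h'
      rw [h'] at h; simp at h
    have hp : par (nb v i) = v := closer_unique hG o (nb v i) _ _ (hpar _ hv).1 hadj.symm
      (hpar _ hv).2 (by omega)
    have := h4 (nb v i) hv i (by rw [hp])
    rw [this, hp]

theorem exists_swap {V : Type} {G : SimpleGraph V} (hG : G.IsTree)
    (hreg : ∀ v : V, (G.neighborSet v).ncard = 5) (a b : V) (hab : G.Adj a b) :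
    ∃ φ : G ≃g G, φ a = b ∧ φ b = a := by
  classical
  obtain ⟨nb, hinj, hadj, hinv⟩ := exists_labelling hG hreg a
  have h2 : ∀ v, ∃ p : V, ∃ i : Fin 5, v ≠ a → G.dist a p < G.dist a v ∧ nb p i = v := by
    intro v
    by_cases h : v = a
    · exact ⟨v, 0, fun h' => absurd h h'⟩
    · obtain ⟨p, hp, hp2⟩ := exists_closer hG a v h
      obtain ⟨i, hi⟩ := (hadj p v).1 hp.symm
      exact ⟨p, i, fun _ => ⟨hp2, hi⟩⟩
  choose par lab hpar using h2
  obtain ⟨φ, hφ0, hφ⟩ := exists_rec a (fun v => G.dist a v) par (fun v hv => (hpar v hv).1) b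
    (fun v u => nb u (lab v))
  have hlab : ∀ v i, φ (nb v i) = nb (φ v) i := by
    have hdown : ∀ v i, G.dist a (nb v i) = G.dist a v + 1 → φ (nb v i) = nb (φ v) i := by
      intro v i h
      have hv : nb v i ≠ a := by
        intro h'
        rw [h'] at h; simp at h
      have h3 := hpar _ hv
      have hp : par (nb v i) = v := closer_unique hG a (nb v i) _ _
        ((hadj _ _).2 ⟨lab (nb v i), h3.2⟩).symm ((hadj _ _).2 ⟨i, rfl⟩).symm h3.1 (by omega)
      rw [hφ _ hv]
      rw [hp] at h3 ⊢
      rw [hinj _ h3.2]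
    intro v i
    rcases hG.dist_eq_dist_add_one_of_adj a ((hadj v (nb v i)).2 ⟨i, rfl⟩) with h | h
    · have := hdown (nb v i) i (by rw [hinv]; exact h)
      rw [hinv] at this
      rw [this, hinv]
    · exact hdown v i h
  obtain ⟨i, hi⟩ := (hadj a b).1 hab
  have hφb : φ b = a := by rw [← hi, hlab, hφ0, ← hi, hinv]
  have hpres : ∀ u v, G.Adj u v → G.Adj (φ u) (φ v) := by
    intro u v h
    obtain ⟨j, rfl⟩ := (hadj u v).1 h
    rw [hlab]
    exact (hadj _ _).2 ⟨j, rfl⟩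
  have hwalk : ∀ u w (_ : G.Walk u w), φ (φ w) = w → φ (φ u) = u := by
    intro u w p
    induction p with
    | nil => exact id
    | cons h p ih =>
      rename_i u w _
      intro h0
      obtain ⟨j, rfl⟩ := (hadj w u).1 h.symm
      have h1 := ih h0
      rw [hlab, hlab, h1]
  have hid : ∀ v, φ (φ v) = v := by
    intro v
    obtain ⟨p⟩ := hG.connected v a
    exact hwalk v a p (by rw [hφ0, hφb])
  refine ⟨⟨⟨φ, φ, hid, hid⟩, ?_⟩, hφ0, hφb⟩
  intro u v
  constructor
  · intro h
    have := hpres _ _ h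
    simpa [hid] using this
  · exact hpres u v

end T5

namespace T5

def Iset {V : Type} (G : SimpleGraph V) (w : V × ℕ → Bool) (v : V) (t : ℕ) : Prop :=
  w (v, t) = true ∧ ∀ u, G.Adj v u → w (u, t) = false

def Big {V : Type} (G : SimpleGraph V) (c : V → Prop) (v : V) : Prop :=
  ∃ a b d, a ≠ b ∧ a ≠ d ∧ b ≠ d ∧ G.Adj v a ∧ G.Adj v b ∧ G.Adj v d ∧
    (c a ↔ c v) ∧ (c b ↔ c v) ∧ (c d ↔ c v)

def col {V : Type} (G : SimpleGraph V) (w : V × ℕ → Bool) : ℕ → V → Prop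
  | 0 => fun _ => False
  | t + 1 => fun v => (col G w t v ↔ ¬ (Iset G w v t ∧ Big G (col G w t) v))

def flp {V : Type} (G : SimpleGraph V) (w : V × ℕ → Bool) (t : ℕ) (v : V) : Prop :=
  Iset G w v t ∧ Big G (col G w t) v

theorem col_succ {V : Type} (G : SimpleGraph V) (w : V × ℕ → Bool) (t : ℕ) (v : V) :
    col G w (t + 1) v ↔ (col G w t v ↔ ¬ flp G w t v) := Iff.rfl

def lim {V : Type} (G : SimpleGraph V) (w : V × ℕ → Bool) (v : V) : Prop :=
  ∃ T, ∀ t, T ≤ t → col G w t v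

def HAdj {V : Type} (G : SimpleGraph V) (c S : V → Prop) (u v : V) : Prop :=
  G.Adj u v ∧ (c u ↔ c v) ∧ ¬ S u ∧ ¬ S v

def Rch {V : Type} (A : V → V → Prop) : ℕ → V → V → Prop
  | 0 => fun u v => u = v
  | n + 1 => fun u v => ∃ z, A u z ∧ Rch A n z v

def bit {V : Type} (A : V → V → Prop) (x : V → ℝ) (v : V) : Prop :=
  ∃ n r, Even n ∧ Rch A n v r ∧ ∀ m w, Rch A m v w → x r ≤ x w

section equivariance

variable {V : Type} {G : SimpleGraph V} (φ : G ≃g G)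

theorem Iset_equiv (w : V × ℕ → Bool) (v : V) (t : ℕ) :
    Iset G (fun p => w (φ p.1, p.2)) v t ↔ Iset G w (φ v) t := by
  unfold Iset
  refine and_congr Iff.rfl ⟨fun h u hu => ?_, fun h u hu => h _ (φ.map_adj_iff.2 hu)⟩
  have := h (φ.symm u) (by rw [← φ.map_adj_iff]; simpa using hu)
  simpa using this

theorem Big_equiv (c : V → Prop) (v : V) :
    Big G (fun u => c (φ u)) v ↔ Big G c (φ v) := by
  unfold Big
  constructor
  · rintro ⟨a, b, d, h1, h2, h3, h4, h5, h6, h⟩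
    exact ⟨φ a, φ b, φ d, φ.injective.ne h1, φ.injective.ne h2, φ.injective.ne h3,
      φ.map_adj_iff.2 h4, φ.map_adj_iff.2 h5, φ.map_adj_iff.2 h6, h⟩
  · rintro ⟨a, b, d, h1, h2, h3, h4, h5, h6, h⟩
    obtain ⟨a, rfl⟩ := φ.surjective a
    obtain ⟨b, rfl⟩ := φ.surjective b
    obtain ⟨d, rfl⟩ := φ.surjective d
    exact ⟨a, b, d, fun h => h1 (by rw [h]), fun h => h2 (by rw [h]), fun h => h3 (by rw [h]),
      φ.map_adj_iff.1 h4, φ.map_adj_iff.1 h5, φ.map_adj_iff.1 h6, h⟩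

theorem col_equiv (w : V × ℕ → Bool) (t : ℕ) :
    col G (fun p => w (φ p.1, p.2)) t = fun v => col G w t (φ v) := by
  induction t with
  | zero => rfl
  | succ t ih =>
    funext v
    simp only [col, ih, Iset_equiv, Big_equiv]

theorem flp_equiv (w : V × ℕ → Bool) (t : ℕ) (v : V) :
    flp G (fun p => w (φ p.1, p.2)) t v ↔ flp G w t (φ v) := by
  simp only [flp, col_equiv, Iset_equiv, Big_equiv]

theorem lim_equiv (w : V × ℕ → Bool) (v : V) :
    lim G (fun p => w (φ p.1, p.2)) v ↔ lim G w (φ v) := by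
  simp only [lim, col_equiv]

theorem Rch_equiv (e : V ≃ V) (A : V → V → Prop) (n : ℕ) (u v : V) :
    Rch (fun a b => A (e a) (e b)) n u v ↔ Rch A n (e u) (e v) := by
  induction n generalizing u with
  | zero => simp [Rch]
  | succ n ih =>
    simp only [Rch, ih]
    exact ⟨fun ⟨z, h⟩ => ⟨e z, h⟩, fun ⟨z, h⟩ => ⟨e.symm z, by simpa using h⟩⟩

theorem bit_equiv (e : V ≃ V) (A : V → V → Prop) (x : V → ℝ) (v : V) :
    bit (fun a b => A (e a) (e b)) (fun u => x (e u)) v ↔ bit A x (e v) := by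
  simp only [bit, Rch_equiv]
  constructor
  · rintro ⟨n, r, hn, hr, h⟩
    refine ⟨n, e r, hn, hr, fun m w hw => ?_⟩
    have := h m (e.symm w) (by simpa using hw)
    simpa using this
  · rintro ⟨n, r, hn, hr, h⟩
    exact ⟨n, e.symm r, hn, by simpa using hr, fun m w hw => by simpa using h m _ hw⟩

end equivariance

section meas

set_option linter.unusedSectionVars false

variable {V : Type} [Countable V] (G : SimpleGraph V) {Ω : Type} [MeasurableSpace Ω]

theorem meas_bool {f : Ω → Bool} (hf : Measurable f) (b : Bool) :
    Measurable (fun w => f w = b) :=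
  measurableSet_setOfPred.1 (hf (measurableSet_singleton b))

theorem meas_Iset (v : V) (t : ℕ) : Measurable (fun w => Iset G w v t) := by
  unfold Iset
  refine (meas_bool (measurable_pi_apply _) _).and ?_
  exact Measurable.forall fun u => measurable_const.imp (meas_bool (measurable_pi_apply _) _)

theorem meas_Big (c : Ω → V → Prop) (hc : ∀ v, Measurable (fun w => c w v)) (v : V) :
    Measurable (fun w => Big G (c w) v) := by
  unfold Big
  refine Measurable.exists fun a => Measurable.exists fun b => Measurable.exists fun d => ?_
  refine measurable_const.and <| measurable_const.and <| measurable_const.and <|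
    measurable_const.and <| measurable_const.and <| measurable_const.and <| ?_
  exact ((hc a).iff (hc v)).and (((hc b).iff (hc v)).and ((hc d).iff (hc v)))

theorem meas_col (t : ℕ) (v : V) : Measurable (fun w => col G w t v) := by
  induction t generalizing v with
  | zero => exact measurable_const
  | succ t ih =>
    simp only [col]
    exact (ih v).iff ((meas_Iset G v t).and (meas_Big G _ ih v)).not

theorem meas_flp (t : ℕ) (v : V) : Measurable (fun w => flp G w t v) :=
  (meas_Iset G v t).and (meas_Big G _ (meas_col G t) v)

theorem meas_lim (v : V) : Measurable (fun w => lim G w v) :=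
  Measurable.exists fun _ => Measurable.forall fun t => measurable_const.imp (meas_col G t v)

theorem meas_HAdj (c S : Ω → V → Prop) (hc : ∀ v, Measurable (fun w => c w v))
    (hS : ∀ v, Measurable (fun w => S w v)) (u v : V) :
    Measurable (fun w => HAdj G (c w) (S w) u v) :=
  measurable_const.and (((hc u).iff (hc v)).and ((hS u).not.and (hS v).not))

theorem meas_Rch (A : Ω → V → V → Prop) (hA : ∀ u v, Measurable (fun w => A w u v)) (n : ℕ)
    (u v : V) : Measurable (fun w => Rch (A w) n u v) := by
  induction n generalizing u with
  | zero => exact measurable_const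
  | succ n ih => exact Measurable.exists fun z => (hA u z).and (ih z)

theorem meas_bit (A : Ω → V → V → Prop) (hA : ∀ u v, Measurable (fun w => A w u v))
    (x : Ω → V → ℝ) (hx : ∀ v, Measurable (fun w => x w v)) (v : V) :
    Measurable (fun w => bit (A w) (x w) v) := by
  refine Measurable.exists fun n => Measurable.exists fun r => measurable_const.and <|
    (meas_Rch A hA n v r).and <| Measurable.forall fun m => Measurable.forall fun z =>
      (meas_Rch A hA m v z).imp ?_
  exact measurableSet_setOfPred.1 (measurableSet_le (hx r) (hx z))

end meas

end T5

namespace T5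

open ProbabilityTheory

theorem hit_bound {ι : Type} (b : Measure Bool) [IsProbabilityMeasure b]
    (a : ℕ → ι) (N : ℕ → Finset ι) (hN : ∀ j, a j ∉ N j) (hcard : ∀ j, (N j).card = 5) (k : ℕ)
    (hdisj : ∀ i j, i < j → j < k → ∀ u, (u = a i ∨ u ∈ N i) → (u = a j ∨ u ∈ N j) → False) :
    Measure.infinitePi (fun _ : ι => b)
      {w | ∀ j, j < k → ¬ (w (a j) = true ∧ ∀ u ∈ N j, w u = false)}
      ≤ (1 - b {true} * b {false} ^ 5) ^ k := by
  classical
  induction k with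
  | zero => simpa using prob_le_one
  | succ k ih =>
    have ih' := ih (fun i j hij hj => hdisj i j hij (by omega))
    set ν := Measure.infinitePi (fun _ : ι => b) with hν
    let T : Finset ι := (Finset.range k).biUnion (fun j => insert (a j) (N j))
    let U : Finset ι := insert (a k) (N k)
    have hTU : Disjoint T U := by
      rw [Finset.disjoint_left]
      intro u hu hu'
      simp only [T, Finset.mem_biUnion, Finset.mem_range, Finset.mem_insert] at hu
      simp only [U, Finset.mem_insert] at hu'
      obtain ⟨i, hi, hu⟩ := hu
      exact hdisj i k hi (by omega) u hu hu'
    have hind : iIndepFun (fun (i : ι) (w : ι → Bool) => w i) ν :=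
      iIndepFun_infinitePi (X := fun _ x => x) (fun _ => measurable_id)
    have hI := hind.indepFun_finset T U hTU (fun i => measurable_pi_apply i)
    have hT1 : ∀ j, j < k → a j ∈ T := fun j hj => by
      simp only [T, Finset.mem_biUnion, Finset.mem_range, Finset.mem_insert]
      exact ⟨j, hj, Or.inl rfl⟩
    have hT2 : ∀ j, j < k → ∀ u ∈ N j, u ∈ T := fun j hj u hu => by
      simp only [T, Finset.mem_biUnion, Finset.mem_range, Finset.mem_insert]
      exact ⟨j, hj, Or.inr hu⟩
    let A : Set (T → Bool) := {y | ∀ j (hj : j < k), ¬ (y ⟨a j, hT1 j hj⟩ = true ∧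
      ∀ u (hu : u ∈ N j), y ⟨u, hT2 j hj u hu⟩ = false)}
    let B : Set (U → Bool) := {y | ¬ (y ⟨a k, Finset.mem_insert_self _ _⟩ = true ∧
      ∀ u (hu : u ∈ N k), y ⟨u, Finset.mem_insert_of_mem hu⟩ = false)}
    have hA : MeasurableSet A := (Set.toFinite A).measurableSet
    have hB : MeasurableSet B := (Set.toFinite B).measurableSet
    have hmul := hI.measure_inter_preimage_eq_mul A B hA hB
    have hset : {w : ι → Bool | ∀ j, j < k + 1 → ¬ (w (a j) = true ∧ ∀ u ∈ N j, w u = false)}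
        = (fun w (i : T) => w i) ⁻¹' A ∩ (fun w (i : U) => w i) ⁻¹' B := by
      ext w
      simp only [Set.mem_ofPred_eq, Set.mem_inter_iff, Set.mem_preimage, A, B]
      constructor
      · intro h
        exact ⟨fun j hj => h j (by omega), h k (by omega)⟩
      · rintro ⟨h1, h2⟩ j hj
        rcases Nat.lt_succ_iff_lt_or_eq.1 hj with h | rfl
        · exact h1 j h
        · exact h2
    have hsetA : (fun (w : ι → Bool) (i : T) => w i) ⁻¹' A =
        {w | ∀ j, j < k → ¬ (w (a j) = true ∧ ∀ u ∈ N j, w u = false)} := rfl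
    have hBc : ν ((fun w (i : U) => w i) ⁻¹' B) = 1 - b {true} * b {false} ^ 5 := by
      have h1 : (fun (w : ι → Bool) (i : U) => w i) ⁻¹' B =
          (Set.pi (U : Set ι) (fun u => if u = a k then {true} else {false}))ᶜ := by
        ext w
        simp only [Set.mem_preimage, Set.mem_ofPred_eq, B, Set.mem_compl_iff, Set.mem_pi, U,
          Finset.coe_insert, Set.mem_insert_iff, Finset.mem_coe]
        refine not_congr ⟨?_, ?_⟩
        · rintro ⟨h1, h2⟩ u hu
          by_cases h : u = a k
          · simp [h, h1]
          · simp [h, h2 u (hu.resolve_left h)]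
        · intro h
          refine ⟨by simpa using h (a k) (Or.inl rfl), fun u hu => ?_⟩
          have hne : u ≠ a k := fun h' => hN k (h' ▸ hu)
          simpa [hne] using h u (Or.inr hu)
      rw [h1, prob_compl_eq_one_sub, Measure.infinitePi_pi]
      · simp only [U]
        rw [Finset.prod_insert (hN k)]
        congr 2
        · simp
        · rw [← hcard k, ← Finset.prod_const]
          refine Finset.prod_congr rfl fun u hu => ?_
          have hne : u ≠ a k := fun h' => hN k (h' ▸ hu)
          simp [hne]
      · intro i _; exact MeasurableSet.of_discrete
      · exact MeasurableSet.pi (Finset.countable_toSet _) fun i _ => MeasurableSet.of_discrete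
    rw [hset, hmul, hBc, hsetA, pow_succ _ k]
    exact mul_le_mul' ih' le_rfl

theorem q_lt_one (b : Measure Bool) [IsProbabilityMeasure b] (h1 : b {true} ≠ 0)
    (h0 : b {false} ≠ 0) : 1 - b {true} * b {false} ^ 5 < 1 := by
  apply ENNReal.sub_lt_self ENNReal.one_ne_top one_ne_zero
  exact mul_ne_zero h1 (pow_ne_zero _ h0)

theorem exists_nbrs {V : Type} {G : SimpleGraph V}
    (hreg : ∀ v : V, (G.neighborSet v).ncard = 5) :
    ∃ N : V → Finset V, (∀ v u, u ∈ N v ↔ G.Adj v u) ∧ ∀ v, (N v).card = 5 := by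
  have hf : ∀ v, (G.neighborSet v).Finite := fun v =>
    Set.finite_of_ncard_ne_zero (by rw [hreg]; norm_num)
  refine ⟨fun v => (hf v).toFinset, fun v u => by simp, fun v => ?_⟩
  rw [← hreg v, Set.ncard_eq_toFinset_card _ (hf v)]

theorem ae_Iset {V : Type} [Countable V] {G : SimpleGraph V}
    (hreg : ∀ v : V, (G.neighborSet v).ncard = 5)
    (b : Measure Bool) [IsProbabilityMeasure b] (h1 : b {true} ≠ 0) (h0 : b {false} ≠ 0) :
    ∀ᵐ w ∂(Measure.infinitePi (fun _ : V × ℕ => b)), ∀ v T, ∃ t, T ≤ t ∧ Iset G w v t := by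
  classical
  obtain ⟨N, hN, hNc⟩ := exists_nbrs hreg
  rw [ae_all_iff]; intro v
  rw [ae_all_iff]; intro T
  rw [ae_iff]
  have key : ∀ k, Measure.infinitePi (fun _ : V × ℕ => b)
      {w | ¬ ∃ t, T ≤ t ∧ Iset G w v t} ≤ (1 - b {true} * b {false} ^ 5) ^ k := by
    intro k
    refine le_trans (measure_mono ?_) (hit_bound b (fun j => (v, T + j))
      (fun j => (N v) ×ˢ {T + j}) ?_ ?_ k ?_)
    · intro w hw j _ hj
      refine hw ⟨T + j, by omega, hj.1, fun u hu => ?_⟩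
      exact hj.2 _ (by simpa [hN] using hu)
    · intro j; simp [hN]
    · intro j; simp [hNc]
    · intro i j hij _ u hi hj
      have e1 : u.2 = T + i := by
        rcases hi with rfl | hi
        · rfl
        · simpa using (Finset.mem_product.1 hi).2
      have e2 : u.2 = T + j := by
        rcases hj with rfl | hj
        · rfl
        · simpa using (Finset.mem_product.1 hj).2
      omega
  have ht := ENNReal.tendsto_pow_atTop_nhds_zero_of_lt_one (q_lt_one b h1 h0)
  exact le_antisymm (ge_of_tendsto' ht key) bot_le

theorem nu_inv {V : Type} {G : SimpleGraph V} (b : Measure Bool) [IsProbabilityMeasure b]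
    (φ : G ≃g G) :
    (Measure.infinitePi (fun _ : V × ℕ => b)).map (fun w p => w (φ p.1, p.2)) =
      Measure.infinitePi (fun _ : V × ℕ => b) := by
  have hinj : Function.Injective (fun p : V × ℕ => (φ p.1, p.2)) := by
    rintro ⟨a, i⟩ ⟨c, j⟩ h
    simpa using h
  exact Measure.map_infinitePi_infinitePi_of_inj (P := fun _ : V × ℕ => b) hinj

open Classical in
noncomputable def ind (p : Prop) : ℝ := if p then 1 else 0

theorem meas_ind {Ω : Type} [MeasurableSpace Ω] {p : Ω → Prop} (hp : Measurable p) :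
    Measurable (fun w => ind (p w)) := by
  unfold ind
  exact Measurable.ite (measurableSet_setOfPred.2 hp) measurable_const measurable_const

theorem ind_bd (p : Prop) : 0 ≤ ind p ∧ ind p ≤ 1 := by
  unfold ind; split_ifs <;> simp

theorem int_of_bd {Ω : Type} [MeasurableSpace Ω] (ν : Measure Ω) [IsProbabilityMeasure ν]
    {f : Ω → ℝ} (hf : Measurable f) (C : ℝ) (h : ∀ w, |f w| ≤ C) : Integrable f ν :=
  Integrable.of_bound hf.aestronglyMeasurable C (Filter.Eventually.of_forall h)

theorem integral_ind {Ω : Type} [MeasurableSpace Ω] (ν : Measure Ω) {p : Ω → Prop}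
    (hp : Measurable p) : ∫ w, ind (p w) ∂ν = ν.real {w | p w} := by
  have : (fun w => ind (p w)) = Set.indicator {w | p w} 1 := by
    funext w
    by_cases h : p w <;> simp [ind, h]
  rw [this, integral_indicator_one (measurableSet_setOfPred.2 hp)]

/-- transported quantity -/
noncomputable def hq {V : Type} (G : SimpleGraph V) (t : ℕ) (v u : V) (w : V × ℕ → Bool) : ℝ :=
  ind (flp G w t v) * (1 - 2 * ind (col G w t v ↔ col G w t u))

theorem hq_meas {V : Type} [Countable V] (G : SimpleGraph V) (t : ℕ) (v u : V) :
    Measurable (hq G t v u) :=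
  (meas_ind (meas_flp G t v)).mul (measurable_const.sub
    (measurable_const.mul (meas_ind ((meas_col G t v).iff (meas_col G t u)))))

theorem hq_int {V : Type} [Countable V] (G : SimpleGraph V) (t : ℕ) (v u : V)
    (ν : Measure (V × ℕ → Bool)) [IsProbabilityMeasure ν] : Integrable (hq G t v u) ν := by
  refine int_of_bd ν (hq_meas G t v u) 1 fun w => ?_
  unfold hq ind
  split_ifs <;> norm_num

theorem hq_swap {V : Type} [Countable V] {G : SimpleGraph V} (hG : G.IsTree)
    (hreg : ∀ v : V, (G.neighborSet v).ncard = 5) (b : Measure Bool) [IsProbabilityMeasure b]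
    (t : ℕ) (v u : V) (hvu : G.Adj v u) :
    ∫ w, hq G t u v w ∂(Measure.infinitePi (fun _ : V × ℕ => b)) =
      ∫ w, hq G t v u w ∂(Measure.infinitePi (fun _ : V × ℕ => b)) := by
  obtain ⟨φ, h1, h2⟩ := exists_swap hG hreg v u hvu
  conv_rhs => rw [← nu_inv b φ]
  rw [integral_map]
  · congr 1
    funext w
    simp only [hq, flp_equiv, col_equiv, h1, h2]
  · apply Measurable.aemeasurable
    exact measurable_pi_lambda _ fun p => measurable_pi_apply _
  · exact (hq_meas G t v u).aestronglyMeasurable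

theorem ind_step (p q F1 F2 : Prop) (h : ¬ (F1 ∧ F2)) :
    ind ((p ↔ ¬ F1) ↔ (q ↔ ¬ F2)) = ind (p ↔ q) + ind F1 * (1 - 2 * ind (p ↔ q)) +
      ind F2 * (1 - 2 * ind (q ↔ p)) := by
  unfold ind
  by_cases h1 : F1 <;> by_cases h2 : F2 <;> by_cases h3 : p <;>
    by_cases h4 : q <;> simp_all <;> norm_num

theorem hq_step {V : Type} (G : SimpleGraph V) (t : ℕ) (v u : V) (hvu : G.Adj v u)
    (w : V × ℕ → Bool) :
    ind (col G w (t + 1) v ↔ col G w (t + 1) u) =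
      ind (col G w t v ↔ col G w t u) + hq G t v u w + hq G t u v w := by
  have hn : ¬ (flp G w t v ∧ flp G w t u) := by
    rintro ⟨⟨h1, _⟩, ⟨h2, _⟩⟩
    have := h1.2 u hvu
    rw [h2.1] at this
    simp at this
  exact ind_step _ _ _ _ hn

theorem hq_sum {V : Type} (G : SimpleGraph V) (t : ℕ) (v : V) (N : Finset V)
    (hN : ∀ u, u ∈ N ↔ G.Adj v u) (hc : N.card = 5) (w : V × ℕ → Bool) :
    ∑ u ∈ N, hq G t v u w ≤ - ind (flp G w t v) := by
  classical
  unfold hq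
  rw [← Finset.mul_sum, Finset.sum_sub_distrib, ← Finset.mul_sum]
  by_cases hf : flp G w t v
  · have h1 : ind (flp G w t v) = 1 := by simp [ind, hf]
    have h2 : ∑ u ∈ N, ind (col G w t v ↔ col G w t u) =
        ((N.filter (fun u => (col G w t v ↔ col G w t u))).card : ℝ) := by
      rw [Finset.card_filter]
      push_cast
      refine Finset.sum_congr rfl fun u _ => ?_
      unfold ind
      split_ifs <;> rfl
    obtain ⟨_, a, b, d, hab, had, hbd, ha, hb, hd, ca, cb, cd⟩ := hf
    have h3 : 3 ≤ (N.filter (fun u => (col G w t v ↔ col G w t u))).card := by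
      have : ({a, b, d} : Finset V).card = 3 := by
        rw [Finset.card_eq_three]; exact ⟨a, b, d, hab, had, hbd, rfl⟩
      rw [← this]
      apply Finset.card_le_card
      intro u hu
      simp only [Finset.mem_insert, Finset.mem_singleton] at hu
      rw [Finset.mem_filter, hN]
      rcases hu with rfl | rfl | rfl
      · exact ⟨ha, ca.symm⟩
      · exact ⟨hb, cb.symm⟩
      · exact ⟨hd, cd.symm⟩
    have h3' : (3 : ℝ) ≤ ((N.filter (fun u => (col G w t v ↔ col G w t u))).card : ℝ) := by
      exact_mod_cast h3
    rw [h1, h2]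
    simp [hc]
    linarith
  · have h1 : ind (flp G w t v) = 0 := by simp [ind, hf]
    rw [h1]; simp

theorem flp_summable {V : Type} [Countable V] {G : SimpleGraph V} (hG : G.IsTree)
    (hreg : ∀ v : V, (G.neighborSet v).ncard = 5) (b : Measure Bool) [IsProbabilityMeasure b]
    (v : V) :
    ∑' t, Measure.infinitePi (fun _ : V × ℕ => b) {w | flp G w t v} ≠ ⊤ := by
  classical
  set ν := Measure.infinitePi (fun _ : V × ℕ => b) with hν
  obtain ⟨N, hN, hNc⟩ := exists_nbrs hreg
  let M : ℕ → ℝ := fun t => ∑ u ∈ N v, ∫ w, ind (col G w t v ↔ col G w t u) ∂ν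
  have hint : ∀ t u, Integrable (fun w => ind (col G w t v ↔ col G w t u)) ν := fun t u =>
    int_of_bd ν (meas_ind ((meas_col G t v).iff (meas_col G t u))) 1 fun w => by
      have := ind_bd (col G w t v ↔ col G w t u)
      rw [abs_of_nonneg this.1]; exact this.2
  have hstep : ∀ t, M (t + 1) + 2 * ν.real {w | flp G w t v} ≤ M t := by
    intro t
    have e1 : ∀ u ∈ N v, ∫ w, ind (col G w (t + 1) v ↔ col G w (t + 1) u) ∂ν =
        ∫ w, ind (col G w t v ↔ col G w t u) ∂ν + 2 * ∫ w, hq G t v u w ∂ν := by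
      intro u hu
      have hadj := (hN v u).1 hu
      simp_rw [hq_step G t v u hadj]
      have hh : Integrable (fun w => ind (col G w t v ↔ col G w t u) + hq G t v u w) ν :=
        (hint t u).add (hq_int G t v u ν)
      rw [integral_add hh (hq_int G t u v ν),
        integral_add (hint t u) (hq_int G t v u ν), hq_swap hG hreg b t v u hadj]
      ring
    have e2 : M (t + 1) = M t + 2 * ∫ w, ∑ u ∈ N v, hq G t v u w ∂ν := by
      simp only [M]
      rw [Finset.sum_congr rfl e1, Finset.sum_add_distrib, ← Finset.mul_sum,
        integral_finsetSum _ (fun u _ => hq_int G t v u ν)]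
    have e3 : ∫ w, ∑ u ∈ N v, hq G t v u w ∂ν ≤ ∫ w, - ind (flp G w t v) ∂ν := by
      refine integral_mono (integrable_finsetSum _ fun u _ => hq_int G t v u ν) ?_
        (fun w => hq_sum G t v (N v) (hN v) (hNc v) w)
      refine (int_of_bd ν (meas_ind (meas_flp G t v)) 1 fun w => ?_).neg
      have := ind_bd (flp G w t v)
      rw [abs_of_nonneg this.1]; exact this.2
    rw [integral_neg, integral_ind ν (meas_flp G t v)] at e3
    linarith
  have hM0 : ∀ t, 0 ≤ M t := fun t => Finset.sum_nonneg fun u _ =>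
    integral_nonneg fun w => (ind_bd _).1
  have hpart : ∀ n, ∑ t ∈ Finset.range n, ν.real {w | flp G w t v} ≤ (M 0 - M n) / 2 := by
    intro n
    induction n with
    | zero => simp
    | succ n ih => rw [Finset.sum_range_succ]; have := hstep n; linarith
  have hpart' : ∀ n, ∑ t ∈ Finset.range n, ν.real {w | flp G w t v} ≤ M 0 / 2 := fun n => by
    have := hpart n; have := hM0 n; linarith
  have hs : Summable fun t => ν.real {w | flp G w t v} :=
    summable_of_sum_range_le (fun _ => measureReal_nonneg) hpart'
  have : (fun t => ν {w | flp G w t v}) = fun t => ENNReal.ofReal (ν.real {w | flp G w t v}) := by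
    funext t; rw [ofReal_measureReal]
  rw [this]
  exact hs.tsum_ofReal_ne_top

theorem ae_lim {V : Type} [Countable V] {G : SimpleGraph V} (hG : G.IsTree)
    (hreg : ∀ v : V, (G.neighborSet v).ncard = 5) (b : Measure Bool) [IsProbabilityMeasure b]
    (h1 : b {true} ≠ 0) (h0 : b {false} ≠ 0) :
    ∀ᵐ w ∂(Measure.infinitePi (fun _ : V × ℕ => b)), ∀ v, ¬ Big G (lim G w) v := by
  have hA := ae_Iset hreg b h1 h0
  have hB : ∀ᵐ w ∂(Measure.infinitePi (fun _ : V × ℕ => b)), ∀ v,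
      ∀ᶠ t in Filter.atTop, ¬ flp G w t v := by
    rw [ae_all_iff]; intro v
    exact ae_eventually_notMem (flp_summable hG hreg b v)
  filter_upwards [hA, hB] with w hI hF v
  have hst : ∀ u, ∃ T, ∀ t, T ≤ t → ¬ flp G w t u ∧ (lim G w u ↔ col G w t u) := by
    intro u
    obtain ⟨T, hT⟩ := Filter.eventually_atTop.1 (hF u)
    have hc : ∀ t, T ≤ t → (col G w t u ↔ col G w T u) := by
      intro t ht
      induction t, ht using Nat.le_induction with
      | base => rfl
      | succ t ht ih =>
        rw [col_succ, ih]
        have := hT t ht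
        tauto
    refine ⟨T, fun t ht => ⟨hT t ht, ?_⟩⟩
    rw [hc t ht]
    constructor
    · rintro ⟨T', hT'⟩
      rw [← hc (max T T') (le_max_left _ _)]
      exact hT' _ (le_max_right _ _)
    · intro h
      exact ⟨T, fun t ht => (hc t ht).2 h⟩
  choose T hT using hst
  rintro ⟨a, c, d, hab, had, hbd, ha, hb, hd, ca, cb, cd⟩
  obtain ⟨t, ht, hIt⟩ := hI v (max (max (T v) (T a)) (max (T c) (T d)))
  have hv := hT v t (by omega)
  have ha' := hT a t (by omega)
  have hc' := hT c t (by omega)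
  have hd' := hT d t (by omega)
  refine hv.1 ⟨hIt, a, c, d, hab, had, hbd, ha, hb, hd, ?_, ?_, ?_⟩
  · rw [← ha'.2, ← hv.2]; exact ca
  · rw [← hc'.2, ← hv.2]; exact cb
  · rw [← hd'.2, ← hv.2]; exact cd

end T5

namespace T5

def KP {V : Type} (G : SimpleGraph V) (c : V → Prop) (n : ℕ) (p : ℕ → V) : Prop :=
  (∀ i, i < n → G.Adj (p i) (p (i + 1)) ∧ (c (p i) ↔ c (p (i + 1)))) ∧
  ∀ i, i + 1 < n → p (i + 2) ≠ p i

theorem KP_dist {V : Type} {G : SimpleGraph V} (hG : G.IsTree) (c : V → Prop) (n : ℕ) (p : ℕ → V)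
    (h : KP G c n p) (i k : ℕ) (hk : i + k ≤ n) : G.dist (p i) (p (i + k)) = k := by
  induction k using Nat.strong_induction_on with
  | _ k ih =>
    match k with
    | 0 => simp
    | 1 => exact SimpleGraph.dist_eq_one_iff_adj.2 (h.1 i (by omega)).1
    | k + 2 =>
      have h1 := ih (k + 1) (by omega) (by omega)
      have h0 := ih k (by omega) (by omega)
      have hadj := (h.1 (i + k + 1) (by omega)).1
      have hadj0 := (h.1 (i + k) (by omega)).1
      have hne := h.2 (i + k) (by omega)
      rw [← add_assoc] at h1 ⊢
      rcases hG.dist_eq_dist_add_one_of_adj (p i) hadj with hd | hd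
      · exfalso
        apply hne
        refine closer_unique hG (p i) (p (i + k + 1)) _ _ hadj hadj0.symm ?_ ?_
        · change G.dist (p i) (p (i + k + 1 + 1)) < _
          omega
        · omega
      · change G.dist (p i) (p (i + k + 1 + 1)) = _
        omega

theorem KP_unique {V : Type} {G : SimpleGraph V} (c : V → Prop) (hc : ∀ v, ¬ Big G c v)
    (n : ℕ) (p p' : ℕ → V) (h : KP G c n p) (h' : KP G c n p') (e0 : p 0 = p' 0)
    (e1 : p 1 = p' 1) (i : ℕ) (hi : i ≤ n) : p i = p' i := by
  induction i using Nat.strong_induction_on with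
  | _ i ih =>
    match i with
    | 0 => exact e0
    | 1 => exact e1
    | i + 2 =>
      by_contra hne
      have a0 := ih i (by omega) (by omega)
      have a1 := ih (i + 1) (by omega) (by omega)
      have b0 := h.1 i (by omega)
      have b1 := h.1 (i + 1) (by omega)
      have b2 := h'.1 (i + 1) (by omega)
      rw [← a1] at b2
      refine hc (p (i + 1)) ⟨p (i + 2), p' (i + 2), p i, hne, h.2 i (by omega), ?_, b1.1, b2.1,
        b0.1.symm, b1.2.symm, b2.2.symm, b0.2⟩
      rw [a0]; exact h'.2 i (by omega)

theorem Rch_fun {V : Type} (A : V → V → Prop) (n : ℕ) (u z : V) :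
    Rch A n u z ↔ ∃ p : ℕ → V, p 0 = u ∧ p n = z ∧ ∀ i, i < n → A (p i) (p (i + 1)) := by
  induction n generalizing u with
  | zero =>
    simp only [Rch]
    exact ⟨fun h => ⟨fun _ => u, rfl, h, fun i hi => by omega⟩,
      fun ⟨p, h1, h2, _⟩ => h1.symm.trans h2⟩
  | succ n ih =>
    simp only [Rch, ih]
    constructor
    · rintro ⟨y, hy, p, h0, hn, hp⟩
      refine ⟨fun i => Nat.casesOn i u p, rfl, hn, fun i hi => ?_⟩
      cases i with
      | zero => simpa [h0] using hy
      | succ i => exact hp i (by omega)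
    · rintro ⟨p, h0, hn, hp⟩
      exact ⟨p 1, h0 ▸ hp 0 (by omega), fun i => p (i + 1), rfl, hn, fun i hi => hp _ (by omega)⟩

theorem Rch_finite {V : Type} (A : V → V → Prop) (N : V → Finset V)
    (hN : ∀ u z, A u z → z ∈ N u) (n : ℕ) (u : V) : {z | Rch A n u z}.Finite := by
  induction n generalizing u with
  | zero => exact (Set.finite_singleton u).subset fun z hz => (Eq.symm hz : z = u)
  | succ n ih =>
    refine ((N u).finite_toSet.biUnion fun y _ => ih y).subset ?_
    rintro z ⟨y, hy, hz⟩
    exact Set.mem_biUnion (hN u y hy) hz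

theorem exists_long {V : Type} (A : V → V → Prop) (N : V → Finset V)
    (hN : ∀ u z, A u z → z ∈ N u) (v : V) (hinf : ¬ {z | ∃ m, Rch A m v z}.Finite) (n : ℕ) :
    ∃ p : ℕ → V, p 0 = v ∧ (∀ i, i < n → A (p i) (p (i + 1))) ∧
      ∀ i, i + 1 < n → p (i + 2) ≠ p i := by
  classical
  have h1 : ∃ z, (∃ m, Rch A m v z) ∧ ∀ m, m < n → ¬ Rch A m v z := by
    by_contra hcon
    apply hinf
    refine ((Finset.range n).finite_toSet.biUnion fun m _ => Rch_finite A N hN m v).subset ?_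
    intro z hz
    by_contra hz'
    refine hcon ⟨z, hz, fun m hm hr => hz' ?_⟩
    exact Set.mem_biUnion (by simpa using hm : m ∈ (Finset.range n : Set ℕ)) hr
  obtain ⟨z, hz, hlt⟩ := h1
  have hmin := Nat.find_spec hz
  have hmin' := fun m (hm : m < Nat.find hz) => Nat.find_min hz hm
  set m := Nat.find hz
  have hnm : n ≤ m := by
    by_contra h
    exact hlt m (by omega) hmin
  obtain ⟨p, p0, pm, hp⟩ := (Rch_fun A m v z).1 hmin
  refine ⟨p, p0, fun i hi => hp i (by omega), fun i hi he => ?_⟩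
  refine hmin' (m - 2) (by omega) ((Rch_fun A (m - 2) v z).2
    ⟨fun j => if j ≤ i then p j else p (j + 2), by simpa using p0, ?_, fun j hj => ?_⟩)
  · by_cases h : m - 2 ≤ i
    · have : m - 2 = i := by omega
      simp only [h, if_true]
      rw [this, ← he, ← pm]; congr 1; omega
    · simp only [h, if_false]
      rw [← pm]; congr 1; omega
  · rcases lt_trichotomy j i with h | h | h
    · have h1 : j ≤ i := by omega
      have h2 : j + 1 ≤ i := by omega
      simp only [h1, h2, if_true]
      exact hp j (by omega)
    · subst h
      have h2 : ¬ (j + 1 ≤ j) := by omega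
      simp only [le_refl, h2, if_true, if_false]
      rw [← he]
      have := hp (j + 2) (by omega)
      convert this using 2
    · have h1 : ¬ (j ≤ i) := by omega
      have h2 : ¬ (j + 1 ≤ i) := by omega
      simp only [h1, h2, if_false]
      have := hp (j + 2) (by omega)
      convert this using 2
      

theorem ae_finite {V : Type} [Countable V] {G : SimpleGraph V} (hG : G.IsTree)
    (hreg : ∀ v : V, (G.neighborSet v).ncard = 5) (b : Measure Bool) [IsProbabilityMeasure b]
    (h1 : b {true} ≠ 0) (h0 : b {false} ≠ 0) (c : V → Prop) (hc : ∀ v, ¬ Big G c v) :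
    ∀ᵐ s ∂(Measure.infinitePi (fun _ : V × ℕ => b)), ∀ v,
      {z | ∃ m, Rch (HAdj G c (fun v => Iset G s v 0)) m v z}.Finite := by
  classical
  obtain ⟨N, hN, hNc⟩ := exists_nbrs hreg
  rw [ae_all_iff]; intro v
  rw [ae_iff]
  set ν := Measure.infinitePi (fun _ : V × ℕ => b) with hν
  set q := 1 - b {true} * b {false} ^ 5 with hq
  have hone : ∀ (a : V) (k : ℕ), ν {s | ∃ p, KP G c (3 * k + 1) p ∧ p 0 = v ∧ p 1 = a ∧
      ∀ i, i < 3 * k + 1 → ¬ Iset G s (p i) 0} ≤ q ^ k := by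
    intro a k
    by_cases hex : ∃ p, KP G c (3 * k + 1) p ∧ p 0 = v ∧ p 1 = a
    · obtain ⟨p, hp, p0, p1⟩ := hex
      refine le_trans (measure_mono ?_) (hit_bound b (fun j => (p (3 * j), 0))
        (fun j => (N (p (3 * j))) ×ˢ {0}) ?_ ?_ k ?_)
      · rintro s ⟨p', hp', p0', p1', hs⟩ j hj hI
        refine hs (3 * j) (by omega) ?_
        rw [← KP_unique c hc _ p p' hp hp' (p0.trans p0'.symm) (p1.trans p1'.symm) (3 * j)
          (by omega)]
        exact ⟨hI.1, fun u hu => hI.2 _ (by simpa [hN] using hu)⟩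
      · intro j; simp [hN]
      · intro j; simp [hNc]
      · intro i j hij hj u hi hj'
        have hd : ∀ i, (u = (p (3 * i), 0) ∨ u ∈ (N (p (3 * i))) ×ˢ ({0} : Finset ℕ)) →
            G.dist (p (3 * i)) u.1 ≤ 1 := by
          intro i hi
          rcases hi with rfl | hi
          · simp
          · have := (hN _ _).1 (Finset.mem_product.1 hi).1
            exact (SimpleGraph.dist_eq_one_iff_adj.2 this).le
        have d1 := hd i hi
        have d2 := hd j hj'
        have d3 := KP_dist hG c _ p hp (3 * i) (3 * j - 3 * i) (by omega)
        have d4 := hG.connected.dist_triangle (u := p (3 * i)) (v := u.1) (w := p (3 * j))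
        rw [SimpleGraph.dist_comm (u := u.1)] at d4
        rw [show 3 * i + (3 * j - 3 * i) = 3 * j by omega] at d3
        omega
    · refine le_trans (le_of_eq ?_) zero_le
      convert measure_empty (μ := ν)
      ext s
      simp only [Set.mem_ofPred_eq, Set.mem_empty_iff_false, iff_false]
      rintro ⟨p, hp, e0, e1, _⟩
      exact hex ⟨p, hp, e0, e1⟩
  have key : ∀ k, ν {s | ¬ {z | ∃ m, Rch (HAdj G c (fun v => Iset G s v 0)) m v z}.Finite}
      ≤ 5 * q ^ k := by
    intro k
    have hsub : {s | ¬ {z | ∃ m, Rch (HAdj G c (fun v => Iset G s v 0)) m v z}.Finite} ⊆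
        ⋃ a ∈ N v, {s | ∃ p, KP G c (3 * k + 1) p ∧ p 0 = v ∧ p 1 = a ∧
          ∀ i, i < 3 * k + 1 → ¬ Iset G s (p i) 0} := by
      intro s hs
      obtain ⟨p, p0, hp, hp'⟩ := exists_long _ N (fun u z h => (hN u z).2 h.1) v hs (3 * k + 1)
      refine Set.mem_biUnion (x := p 1) ?_ ⟨p, ⟨fun i hi => ⟨(hp i hi).1, (hp i hi).2.1⟩, hp'⟩,
        p0, rfl, fun i hi => (hp i hi).2.2.1⟩
      refine (hN _ _).2 ?_
      rw [← p0]; exact (hp 0 (by omega)).1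
    refine (measure_mono hsub).trans ((measure_biUnion_finset_le _ _).trans ?_)
    refine (Finset.sum_le_sum fun a _ => hone a k).trans ?_
    rw [Finset.sum_const, hNc]
    simp
  have ht := ENNReal.Tendsto.const_mul
    (ENNReal.tendsto_pow_atTop_nhds_zero_of_lt_one (q_lt_one b h1 h0))
    (Or.inr (by simp : (5 : ENNReal) ≠ ⊤))
  rw [mul_zero] at ht
  exact le_antisymm (ge_of_tendsto' ht key) bot_le

end T5

namespace T5

theorem Rch_par {V : Type} (A : V → V → Prop) (κ : V → Prop)
    (hκ : ∀ u v, A u v → (κ u ↔ ¬ κ v)) (n : ℕ) (u z : V) (h : Rch A n u z) :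
    (κ u ↔ κ z) ↔ Even n := by
  induction n generalizing u with
  | zero => cases h; simp
  | succ n ih =>
    obtain ⟨y, hy, hz⟩ := h
    have h1 := hκ _ _ hy
    have h2 := ih y hz
    rw [Nat.even_add_one]
    tauto

theorem bit_adj {V : Type} (A : V → V → Prop) (hsymm : ∀ u v, A u v → A v u) (κ : V → Prop)
    (hκ : ∀ u v, A u v → (κ u ↔ ¬ κ v)) (x : V → ℝ) (hx : Function.Injective x) (u v : V)
    (huv : A u v) (hfin : {z | ∃ m, Rch A m u z}.Finite) : ¬ (bit A x u ↔ bit A x v) := by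
  obtain ⟨r, ⟨m, hm⟩, hr⟩ := Set.exists_min_image _ x hfin ⟨u, 0, rfl⟩
  have key : ∀ y, (∃ k, Rch A k y r) → (∀ z, (∃ k, Rch A k y z) ↔ ∃ k, Rch A k u z) →
      (bit A x y ↔ (κ y ↔ κ r)) := by
    rintro y ⟨k, hk⟩ hy
    constructor
    · rintro ⟨n, r', hn, hr', hmin⟩
      have e1 := hmin k r hk
      have e2 := hr r' ((hy r').1 ⟨n, hr'⟩)
      have : r' = r := hx (le_antisymm e1 e2)
      subst this
      exact (Rch_par A κ hκ n y _ hr').2 hn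
    · intro h
      exact ⟨k, r, (Rch_par A κ hκ k y _ hk).1 h, hk, fun m w hw => hr w ((hy w).1 ⟨m, hw⟩)⟩
  have hv : ∀ z, (∃ k, Rch A k v z) ↔ ∃ k, Rch A k u z := fun z =>
    ⟨fun ⟨k, hk⟩ => ⟨k + 1, v, huv, hk⟩, fun ⟨k, hk⟩ => ⟨k + 1, u, hsymm _ _ huv, hk⟩⟩
  rw [key u ⟨m, hm⟩ fun z => Iff.rfl, key v ((hv r).2 ⟨m, hm⟩) hv]
  have := hκ _ _ huv
  tauto

theorem exists_par {V : Type} {G : SimpleGraph V} (hG : G.IsTree) (o : V) :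
    ∃ κ : V → Prop, ∀ u v, G.Adj u v → (κ u ↔ ¬ κ v) := by
  refine ⟨fun v => Even (G.dist o v), fun u v h => ?_⟩
  rcases hG.dist_eq_dist_add_one_of_adj o h with h | h
  · simp only [h, Nat.even_add_one]
  · simp only [h, Nat.even_add_one, not_not]

theorem ae_good {V : Type} [Countable V] {G : SimpleGraph V} (hG : G.IsTree)
    (hreg : ∀ v : V, (G.neighborSet v).ncard = 5) (b : Measure Bool) [IsProbabilityMeasure b]
    (h1 : b {true} ≠ 0) (h0 : b {false} ≠ 0) :
    ∀ᵐ p ∂((Measure.infinitePi (fun _ : V × ℕ => b)).prod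
      (Measure.infinitePi (fun _ : V × ℕ => b))), ∀ v, ∃ F : Finset V, ∀ m z,
        Rch (HAdj G (lim G p.1) (fun v => Iset G p.2 v 0)) m v z → z ∈ F := by
  have hm : MeasurableSet {p : (V × ℕ → Bool) × (V × ℕ → Bool) | ∀ v, ∃ F : Finset V, ∀ m z,
        Rch (HAdj G (lim G p.1) (fun v => Iset G p.2 v 0)) m v z → z ∈ F} := by
    rw [measurableSet_setOfPred]
    refine Measurable.forall fun v => Measurable.exists fun F => Measurable.forall fun m =>
      Measurable.forall fun z => Measurable.imp ?_ measurable_const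
    refine meas_Rch _ (fun u v => meas_HAdj G _ _ (fun v => ?_) (fun v => ?_) u v) m v z
    · exact (meas_lim G v).comp measurable_fst
    · exact (meas_Iset G v 0).comp measurable_snd
  refine (Measure.ae_prod_mem_iff_ae_ae_mem hm).2 ?_
  filter_upwards [ae_lim hG hreg b h1 h0] with w hw
  filter_upwards [ae_finite hG hreg b h1 h0 (lim G w) hw] with s hs v
  exact ⟨(hs v).toFinset, fun m z h => (hs v).mem_toFinset.2 ⟨m, h⟩⟩

theorem exists_g (b : Measure Bool) [IsProbabilityMeasure b] :
    ∃ g : ℝ → (Bool × ℕ → Bool), Measurable g ∧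
      (volume.restrict (Set.Icc (0:ℝ) 1)).map g = Measure.infinitePi (fun _ => b) := by
  obtain ⟨f, hf, hfm⟩ := Measure.exists_measurable_map_eq
    (Measure.infinitePi (fun _ : Bool × ℕ => b))
  have hp : Measurable (Set.projIcc (0:ℝ) 1 zero_le_one) := continuous_projIcc.measurable
  refine ⟨f ∘ Set.projIcc 0 1 zero_le_one, hf.comp hp, ?_⟩
  have hv : (volume.restrict (Set.Icc (0:ℝ) 1)) =
      Measure.map (Subtype.val) (volume : Measure (Set.Icc (0:ℝ) 1)) :=
    (map_comap_subtype_coe measurableSet_Icc _).symm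
  rw [hv, Measure.map_map (hf.comp hp) measurable_subtype_coe, ← hfm]
  congr 1
  funext y
  simp

theorem law_Z {V : Type} [Countable V] (b : Measure Bool) [IsProbabilityMeasure b]
    (lam : Measure ℝ) [IsProbabilityMeasure lam] (g : ℝ → (Bool × ℕ → Bool)) (hg : Measurable g)
    (hgm : lam.map g = Measure.infinitePi (fun _ => b)) :
    (Measure.infinitePi (fun _ : V => lam)).map
      (fun x => ((fun p => g (x p.1) (false, p.2), fun p => g (x p.1) (true, p.2)) :
        (V × ℕ → Bool) × (V × ℕ → Bool))) =
      (Measure.infinitePi (fun _ : V × ℕ => b)).prod (Measure.infinitePi (fun _ : V × ℕ => b)) := by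
  have e1 := Measure.infinitePi_map_pi (fun _ : V => lam) (f := fun _ => g) (fun _ => hg)
  rw [hgm] at e1
  have e2 := Measure.infinitePi_map_curry_symm (fun (_ : V) (_ : Bool × ℕ) => b)
  have hinj : Function.Injective (fun q : Bool × (V × ℕ) => (q.2.1, (q.1, q.2.2))) := by
    rintro ⟨i, a, k⟩ ⟨j, c, l⟩ h
    simp only [Prod.mk.injEq] at h ⊢
    tauto
  have e3 := Measure.map_infinitePi_infinitePi_of_inj (P := fun _ : V × (Bool × ℕ) => b) hinj
  have e4 := Measure.infinitePi_map_curry (fun (_ : Bool) (_ : V × ℕ) => b)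
  have e5 := Measure.infinitePi_map_eval_prod
    (P := fun _ : Bool => Measure.infinitePi (fun _ : V × ℕ => b)) (i := false) (j := true)
    (by simp)
  rw [← e5, ← e4, ← e3, ← e2, ← e1]
  rw [Measure.map_map, Measure.map_map, Measure.map_map, Measure.map_map]
  · rfl
  all_goals fun_prop

theorem ae_inj {V : Type} [Countable V] (lam : Measure ℝ) [IsProbabilityMeasure lam]
    [NullSingletonClass lam] : ∀ᵐ x ∂(Measure.infinitePi (fun _ : V => lam)), Function.Injective x := by
  have : ∀ᵐ x ∂(Measure.infinitePi (fun _ : V => lam)), ∀ u v, u ≠ v → x u ≠ x v := by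
    rw [ae_all_iff]; intro u
    rw [ae_all_iff]; intro v
    rw [ae_all_iff]; intro huv
    have e := Measure.infinitePi_map_eval_prod (P := fun _ : V => lam) huv
    have hm : MeasurableSet {p : ℝ × ℝ | p.1 ≠ p.2} :=
      (measurableSet_eq_fun measurable_fst measurable_snd).compl
    have h2 : ∀ᵐ p ∂(lam.prod lam), p ∈ {p : ℝ × ℝ | p.1 ≠ p.2} := by
      rw [Measure.ae_prod_mem_iff_ae_ae_mem hm]
      refine Filter.Eventually.of_forall fun a => ?_
      rw [ae_iff]
      convert measure_singleton (μ := lam) a using 2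
      ext y
      simp [eq_comm]
    rw [← e] at h2
    have h3 := ae_of_ae_map (by fun_prop) h2
    exact h3
  filter_upwards [this] with x hx u v h
  by_contra hne
  exact hx u v hne h

open Classical in
noncomputable def lab (s l t : Prop) : Fin 5 :=
  if s then 4 else if l then (if t then 3 else 2) else (if t then 1 else 0)

theorem lab_congr {s l t s' l' t' : Prop} (h1 : s ↔ s') (h2 : l ↔ l') (h3 : t ↔ t') :
    lab s l t = lab s' l' t' := by
  rw [propext h1, propext h2, propext h3]

theorem lab_ne {s l t s' l' t' : Prop} (h1 : ¬ (s ∧ s'))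
    (h2 : ¬ s → ¬ s' → (l ↔ l') → ¬ (t ↔ t')) : lab s l t ≠ lab s' l' t' := by
  unfold lab
  by_cases a : s <;> by_cases a' : s' <;> by_cases c : l <;> by_cases c' : l' <;>
    by_cases d : t <;> by_cases d' : t' <;> simp_all

theorem lab_four {s l t : Prop} (h : lab s l t = 4) : s := by
  unfold lab at h
  by_contra hs
  by_cases c : l <;> by_cases d : t <;> simp [hs, c, d] at h

theorem meas_lab {Ω : Type} [MeasurableSpace Ω] {s l t : Ω → Prop} (hs : Measurable s)
    (hl : Measurable l) (ht : Measurable t) : Measurable (fun w => lab (s w) (l w) (t w)) := by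
  unfold lab
  refine Measurable.ite (measurableSet_setOfPred.2 hs) measurable_const ?_
  refine Measurable.ite (measurableSet_setOfPred.2 hl) ?_ ?_ <;>
  exact Measurable.ite (measurableSet_setOfPred.2 ht) measurable_const measurable_const

/-- bits from the labels -/
def Zb {V : Type} (g : ℝ → (Bool × ℕ → Bool)) (i : Bool) (x : V → ℝ) : V × ℕ → Bool :=
  fun p => g (x p.1) (i, p.2)

noncomputable def fin5 {V : Type} (G : SimpleGraph V) (g : ℝ → (Bool × ℕ → Bool)) (x : V → ℝ)
    (v : V) : Fin 5 :=
  lab (Iset G (Zb g true x) v 0) (lim G (Zb g false x) v)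
    (bit (HAdj G (lim G (Zb g false x)) (fun v => Iset G (Zb g true x) v 0)) x v)

theorem meas_Zb {V : Type} {g : ℝ → (Bool × ℕ → Bool)} (hg : Measurable g) (i : Bool) :
    Measurable (Zb (V := V) g i) := by
  unfold Zb
  fun_prop

theorem fin5_meas {V : Type} [Countable V] (G : SimpleGraph V) {g : ℝ → (Bool × ℕ → Bool)}
    (hg : Measurable g) : Measurable (fin5 G g) := by
  refine measurable_pi_lambda _ fun v => ?_
  have hS : ∀ v, Measurable fun x : V → ℝ => Iset G (Zb g true x) v 0 := fun v =>
    (meas_Iset G v 0).comp (meas_Zb hg true)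
  have hl : ∀ v, Measurable fun x : V → ℝ => lim G (Zb g false x) v := fun v =>
    (meas_lim G v).comp (meas_Zb hg false)
  exact meas_lab (hS v) (hl v) (meas_bit _ (fun u v => meas_HAdj G _ _ hl hS u v) (fun x => x)
    (fun v => measurable_pi_apply v) v)

theorem fin5_equiv {V : Type} (G : SimpleGraph V) (g : ℝ → (Bool × ℕ → Bool)) (φ : G ≃g G)
    (x : V → ℝ) (v : V) : fin5 G g (fun u => x (φ u)) v = fin5 G g x (φ v) := by
  have hI : ∀ v, Iset G (Zb g true (fun u => x (φ u))) v 0 ↔ Iset G (Zb g true x) (φ v) 0 :=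
    fun v => Iset_equiv φ (Zb g true x) v 0
  have hl : ∀ v, lim G (Zb g false (fun u => x (φ u))) v ↔ lim G (Zb g false x) (φ v) :=
    fun v => lim_equiv φ (Zb g false x) v
  refine lab_congr (hI v) (hl v) ?_
  refine Iff.trans ?_ (bit_equiv φ.toEquiv _ x v)
  have : (HAdj G (lim G (Zb g false (fun u => x (φ u))))
      (fun v => Iset G (Zb g true (fun u => x (φ u))) v 0)) =
      fun a c => HAdj G (lim G (Zb g false x)) (fun v => Iset G (Zb g true x) v 0)
        (φ.toEquiv a) (φ.toEquiv c) := by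
    funext a c
    simp only [HAdj, hI, hl]
    exact propext (and_congr_left' φ.map_adj_iff.symm)
  rw [this]
  rfl

theorem exists_b (ε : ℝ) (hε : 0 < ε) : ∃ b : Measure Bool, IsProbabilityMeasure b ∧
    b {true} ≠ 0 ∧ b {false} ≠ 0 ∧ b {true} < ENNReal.ofReal ε := by
  set δ := min (ε / 2) (1 / 2) with hδ
  have d0 : 0 < δ := by positivity
  have d1 : δ ≤ 1 / 2 := min_le_right _ _
  have d2 : δ < ε := (min_le_left _ _).trans_lt (by linarith)
  let b : Measure Bool :=
    ENNReal.ofReal δ • Measure.dirac true + ENNReal.ofReal (1 - δ) • Measure.dirac false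
  have t1 : b {true} = ENNReal.ofReal δ := by simp [b]
  have t2 : b {false} = ENNReal.ofReal (1 - δ) := by simp [b]
  refine ⟨b, ⟨?_⟩, ?_, ?_, ?_⟩
  · simp only [b, Measure.add_apply, Measure.smul_apply, measure_univ, smul_eq_mul, mul_one]
    rw [← ENNReal.ofReal_add d0.le (by linarith)]
    simp
  · rw [t1]; simpa using d0
  · rw [t2]; simp; linarith
  · rw [t1]; exact (ENNReal.ofReal_lt_ofReal_iff hε).2 d2

end T5

theorem fiid_five_coloring_of_T5_approximate_four_coloring
    (V : Type) [Countable V] [Infinite V]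
    (G : SimpleGraph V) (hconn : G.Connected) (hacyc : G.IsAcyclic)
    (hreg : ∀ v : V, (G.neighborSet v).ncard = 5)
    (μ : Measure (V → ℝ)) [IsProbabilityMeasure μ]
    (hμ : ∀ s : Finset V,
      Measure.map (fun (x : V → ℝ) (v : s) => x v) μ
        = Measure.pi (fun _ : s => volume.restrict (Set.Icc (0:ℝ) 1)))
    (ε : ℝ) (hε : 0 < ε) :
    ∃ f : (V → ℝ) → (V → Fin 5),
      Measurable f ∧
      (∀ (φ : G ≃g G) (x : V → ℝ) (v : V),
        f (fun u => x (φ.symm u)) v = f x (φ.symm v)) ∧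
      (∀ᵐ x ∂μ, ∀ u v : V, G.Adj u v → f x u ≠ f x v) ∧
      (∀ v : V, μ {x | f x v = 4} < ENNReal.ofReal ε) := by
  have hG : G.IsTree := ⟨hconn, hacyc⟩
  obtain ⟨b, hb, hb1, hb0, hbε⟩ := T5.exists_b ε hε
  obtain ⟨g, hg, hgm⟩ := T5.exists_g b
  set lam : Measure ℝ := volume.restrict (Set.Icc (0:ℝ) 1) with hlam
  have : IsProbabilityMeasure lam := ⟨by simp [hlam]⟩
  have hμ' : μ = Measure.infinitePi (fun _ : V => lam) :=
    IsProjectiveLimit.unique (α := fun _ : V => ℝ)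
      (P := fun s : Finset V => Measure.pi (fun _ : s => lam))
      hμ (Measure.isProjectiveLimit_infinitePi (fun _ : V => lam))
  have hlaw := T5.law_Z (V := V) b lam g hg hgm
  rw [← hμ'] at hlaw
  have hZm : Measurable (fun x : V → ℝ => (T5.Zb g false x, T5.Zb g true x)) :=
    (T5.meas_Zb hg false).prodMk (T5.meas_Zb hg true)
  change μ.map (fun x : V → ℝ => (T5.Zb g false x, T5.Zb g true x)) = _ at hlaw
  refine ⟨T5.fin5 G g, T5.fin5_meas G hg, fun φ x v => T5.fin5_equiv G g φ.symm x v, ?_, ?_⟩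
  · have hgood := T5.ae_good hG hreg b hb1 hb0
    rw [← hlaw] at hgood
    have hgood' := ae_of_ae_map hZm.aemeasurable hgood
    have hinj : ∀ᵐ x ∂μ, Function.Injective x := by
      rw [hμ']; exact T5.ae_inj lam
    filter_upwards [hgood', hinj] with x hx hxi u v huv
    obtain ⟨κ, hκ⟩ := T5.exists_par hG u
    refine T5.lab_ne ?_ ?_
    · rintro ⟨h1, h2⟩
      have := h1.2 v huv
      rw [h2.1] at this
      simp at this
    · intro hu hv hl
      refine T5.bit_adj _ ?_ κ (fun u v h => hκ u v h.1) x hxi u v ⟨huv, hl, hu, hv⟩ ?_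
      · rintro u v ⟨h1, h2, h3, h4⟩
        exact ⟨h1.symm, h2.symm, h4, h3⟩
      · obtain ⟨F, hF⟩ := hx u
        exact F.finite_toSet.subset fun z ⟨m, hm⟩ => hF m z hm
  · intro v
    refine lt_of_le_of_lt ?_ hbε
    have e : μ.map (T5.Zb g true) = Measure.infinitePi (fun _ : V × ℕ => b) := by
      have := congrArg (Measure.map Prod.snd) hlaw
      rw [Measure.map_map measurable_snd hZm, Measure.map_snd_prod] at this
      simpa [Function.comp_def] using this
    have e2 := Measure.infinitePi_map_eval (fun _ : V × ℕ => b) (v, 0)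
    rw [← e2, ← e, Measure.map_map (measurable_pi_apply _) (T5.meas_Zb hg true),
      Measure.map_apply ((measurable_pi_apply _).comp (T5.meas_Zb hg true))
        (measurableSet_singleton _)]
    exact measure_mono fun x hx => (T5.lab_four hx).1
end
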